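/- For every integer d ≥ 6 and every positive integer n, there exists a compact, simply connected topological d-dimensional manifold M without boundary (a compact Hausdorff space locally homeomorphic to ℝ^d) such that the second homotopy group π_2(M) is isomorphic, as a group, to ℤ/nℤ. -/

import Mathlib

open Topology


set_option linter.all false


noncomputable section
namespace PiTwo
open unitInterval

/-! ### Subdivision operators -/
section Subdiv
variable {Q X D K : Type*} [AddCommGroup D] [Fintype K]

/-- sum of a cochain over the pieces of a subdivision -/
def sub (e : K → Q → Q) (c : (Q → X) → D) : (Q → X) → D := fun s => ∑ k, c (s ∘ e k)

/-- all pieces satisfy `p` -/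
def allp (e : K → Q → Q) (p : (Q → X) → Prop) : (Q → X) → Prop := fun s => ∀ k, p (s ∘ e k)

theorem sub_iter_congr (e : K → Q → Q) {p : (Q → X) → Prop} {c c' : (Q → X) → D}
    (h : ∀ s, p s → c s = c' s) (N : ℕ) :
    ∀ s, (allp e)^[N] p s → (sub e)^[N] c s = (sub e)^[N] c' s := by
  induction N with
  | zero => simpa using h
  | succ N ih =>
    intro s hs
    rw [Function.iterate_succ_apply'] at hs ⊢
    rw [Function.iterate_succ_apply']
    exact Finset.sum_congr rfl fun k _ => ih _ (hs k)

theorem sub_iter_zero (e : K → Q → Q) (N : ℕ) (s : Q → X) :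
    (sub e)^[N] (fun _ => (0 : D)) s = 0 := by
  induction N generalizing s with
  | zero => rfl
  | succ N ih =>
    rw [Function.iterate_succ_apply']
    exact Finset.sum_eq_zero fun k _ => ih _

theorem sub_iter_stable (e : K → Q → Q) {p : (Q → X) → Prop} {c : (Q → X) → D}
    (hp : ∀ s, p s → allp e p s) (h : ∀ s, p s → c s = sub e c s) {N M : ℕ} (hNM : N ≤ M)
    (s : Q → X) (hs : (allp e)^[N] p s) : (sub e)^[M] c s = (sub e)^[N] c s := by
  have key : ∀ N s, (allp e)^[N] p s → (allp e)^[N + 1] p s := by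
    intro N
    induction N with
    | zero => simpa using hp
    | succ N ih =>
      intro s hs
      rw [Function.iterate_succ_apply'] at hs ⊢
      exact fun k => ih _ (hs k)
  induction M, hNM using Nat.le_induction with
  | base => rfl
  | succ M hM ih =>
    rw [← ih, Function.iterate_succ_apply]
    refine (sub_iter_congr e h M s ?_).symm
    clear ih
    induction M, hM using Nat.le_induction with
    | base => exact hs
    | succ M hM ih => exact key _ _ ih

/-- Abstract gluing: a cochain additive on small things extends. -/
theorem glue_abs (e : K → Q → Q) {p good : (Q → X) → Prop} (c : (Q → X) → D)
    (hp : ∀ s, p s → allp e p s) (h : ∀ s, p s → c s = sub e c s)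
    (hgood : ∀ s, good s → ∃ N, ∀ M ≥ N, (allp e)^[M] p s) :
    ∃ c' : (Q → X) → D, (∀ s, p s → c' s = c s) ∧
      ∀ {K' : Type} [Fintype K'] (e' : K' → Q → Q),
        (∀ s, good s → allp e' good s) →
        (∀ s, p s → c s = sub e' c s) →
        Function.Commute (sub e : ((Q → X) → D) → _) (sub e') →
        ∀ s, good s → c' s = sub e' c' s := by
  classical
  let c' : (Q → X) → D := fun s =>
    if h : ∃ N, ∀ M ≥ N, (allp e)^[M] p s then (sub e)^[h.choose] c s else 0
  have hc' : ∀ s, (∃ N, ∀ M ≥ N, (allp e)^[M] p s) → ∀ M, (allp e)^[M] p s →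
      c' s = (sub e)^[M] c s := by
    intro s hs M hM
    simp only [c', dif_pos hs]
    have h1 := sub_iter_stable e hp h (le_max_left hs.choose M) s (hs.choose_spec _ le_rfl)
    have h2 := sub_iter_stable e hp h (le_max_right hs.choose M) s hM
    rw [← h1, ← h2]
  refine ⟨c', ?_, ?_⟩
  · intro s hs
    refine hc' s ⟨0, fun M hM => ?_⟩ 0 hs
    clear hM
    induction M generalizing s with
    | zero => exact hs
    | succ M ih =>
      rw [Function.iterate_succ_apply']
      exact fun k => ih _ (hp s hs k)
  · intro K' _ e' he' hadd hcomm s hs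
    have h1 := hgood s hs
    have h2 := fun k => hgood _ (he' s hs k)
    choose N2 hN2 using h2
    obtain ⟨N1, hN1⟩ := h1
    let M := max N1 (Finset.univ.sup N2)
    have hM1 := hN1 M (le_max_left _ _)
    have hM2 : ∀ k, (allp e)^[M] p (s ∘ e' k) := fun k =>
      hN2 k M (le_trans (Finset.le_sup (Finset.mem_univ k)) (le_max_right _ _))
    rw [hc' s ⟨N1, hN1⟩ M hM1, sub_iter_congr e hadd M s hM1]
    have := (hcomm.iterate_left M) c
    rw [this]
    exact Finset.sum_congr rfl fun k _ => (hc' _ ⟨_, hN2 k⟩ M (hM2 k)).symm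

theorem zero_abs (e : K → Q → Q) {p good : (Q → X) → Prop} (c : (Q → X) → D)
    (hg : ∀ s, good s → allp e good s) (h : ∀ s, good s → c s = sub e c s)
    (hgood : ∀ s, good s → ∃ N, ∀ M ≥ N, (allp e)^[M] p s)
    (hz : ∀ s, p s → c s = 0) (s : Q → X) (hs : good s) : c s = 0 := by
  obtain ⟨N, hN⟩ := hgood s hs
  have h1 := sub_iter_stable e hg h (Nat.zero_le N) s hs
  rw [Function.iterate_zero_apply] at h1
  rw [← h1, sub_iter_congr e hz N s (hN N le_rfl), sub_iter_zero]

theorem allp_of_lip [PseudoMetricSpace Q] (e : K → Q → Q)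
    (he : ∀ k x y, dist (e k x) (e k y) ≤ dist x y / 2) {p : (Q → X) → Prop} (s : Q → X) (N : ℕ) :
    ∀ (C : ℝ) (g : Q → Q), 0 ≤ C → (∀ x y, dist (g x) (g y) ≤ C * dist x y) →
    (∀ g' : Q → Q, (∀ x y, dist (g' x) (g' y) ≤ C / 2 ^ N * dist x y) → p (s ∘ g')) →
    (allp e)^[N] p (s ∘ g) := by
  induction N with
  | zero =>
    intro C g _ hg hp
    exact hp g (by simpa using hg)
  | succ N ih =>
    intro C g hC hg hp
    rw [Function.iterate_succ_apply']
    intro k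
    refine ih (C / 2) (g ∘ e k) (by positivity) (fun x y => ?_) ?_
    · refine (hg _ _).trans ?_
      have := mul_le_mul_of_nonneg_left (he k x y) hC
      calc _ ≤ _ := this
        _ = _ := by ring
    · intro g' hg'
      refine hp g' fun x y => (hg' x y).trans (le_of_eq ?_)
      rw [pow_succ]; field_simp

theorem continuous_of_lip [PseudoMetricSpace Q] {g : Q → Q} {C : ℝ} (hC : 0 ≤ C)
    (h : ∀ x y, dist (g x) (g y) ≤ C * dist x y) : Continuous g :=
  (LipschitzWith.of_dist_le_mul (K := ⟨C, hC⟩) h).continuous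

/-- Lebesgue number argument. -/
theorem lebesgue_abs [PseudoMetricSpace Q] [CompactSpace Q] [TopologicalSpace X] (e : K → Q → Q)
    (he : ∀ k x y, dist (e k x) (e k y) ≤ dist x y / 2) (hd : ∀ x y : Q, dist x y ≤ 1)
    [Nonempty Q]
    {U V : Set X} (hU : IsOpen U) (hV : IsOpen V)
    (s : Q → X) (hs : Continuous s) (hUV : ∀ x, s x ∈ U ∨ s x ∈ V) :
    ∃ N, ∀ M ≥ N, (allp e)^[M] (fun s => Continuous s ∧ ((∀ q, s q ∈ U) ∨ (∀ q, s q ∈ V))) s := by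
  obtain ⟨δ, hδ, hδ'⟩ := lebesgue_number_lemma_of_metric (s := Set.univ)
    (c := fun b : Bool => s ⁻¹' (bif b then U else V)) isCompact_univ
    (by rintro (_ | _); exacts [hV.preimage hs, hU.preimage hs])
    (by
      intro x _
      rw [Set.mem_iUnion]
      rcases hUV x with h | h
      exacts [⟨true, h⟩, ⟨false, h⟩])
  obtain ⟨N, hN⟩ := exists_pow_lt_of_lt_one hδ (show (1 / 2 : ℝ) < 1 by norm_num)
  refine ⟨N, fun M hM => ?_⟩
  refine allp_of_lip e he s M 1 id zero_le_one (by simp) fun g hg => ?_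
  refine ⟨hs.comp (continuous_of_lip (by positivity) hg), ?_⟩
  obtain ⟨x0⟩ := ‹Nonempty Q›
  have hb : ∀ x, g x ∈ Metric.ball (g x0) δ := by
    intro x
    rw [Metric.mem_ball]
    calc _ ≤ _ := hg _ _
      _ ≤ 1 / 2 ^ M * 1 := by gcongr; exact hd _ _
      _ = (1 / 2) ^ M := by simp
      _ ≤ (1 / 2) ^ N := pow_le_pow_of_le_one (by norm_num) (by norm_num) hM
      _ < δ := hN
  obtain ⟨i, hi⟩ := hδ' (g x0) (Set.mem_univ _)
  cases i
  · exact Or.inr fun q => hi (hb q)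
  · exact Or.inl fun q => hi (hb q)

end Subdiv

/-! ### Cubes -/

/-- halving maps of the interval -/
def half (b : Bool) (t : I) : I :=
  ⟨((t : ℝ) + (bif b then 1 else 0)) / 2, by
    have := t.2.1; have := t.2.2
    cases b <;> simp <;> constructor <;> linarith⟩

theorem half_dist (b : Bool) (x y : I) : dist (half b x) (half b y) ≤ dist x y / 2 := by
  rw [Subtype.dist_eq, Subtype.dist_eq, Real.dist_eq, Real.dist_eq]
  simp only [half]
  rw [show ((x : ℝ) + (bif b then 1 else 0)) / 2 - ((y : ℝ) + (bif b then 1 else 0)) / 2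
    = ((x : ℝ) - y) / 2 by ring, abs_div]
  simp

@[fun_prop] theorem half_cont (b : Bool) : Continuous (half b) := by
  unfold half; fun_prop

/-- halving in first direction -/
def hl (b : Bool) (t : I × I) : I × I := (half b t.1, t.2)
/-- halving in second direction -/
def hr (b : Bool) (t : I × I) : I × I := (t.1, half b t.2)
/-- total halving of squares -/
def hh (b : Bool × Bool) (t : I × I) : I × I := (half b.1 t.1, half b.2 t.2)
/-- total halving of cubes -/
def hhh (b : Bool × Bool × Bool) (t : I × I × I) : I × I × I :=
  (half b.1 t.1, half b.2.1 t.2.1, half b.2.2 t.2.2)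

@[fun_prop] theorem hl_cont (b : Bool) : Continuous (hl b) := by unfold hl; fun_prop
@[fun_prop] theorem hr_cont (b : Bool) : Continuous (hr b) := by unfold hr; fun_prop
@[fun_prop] theorem hh_cont (b : Bool × Bool) : Continuous (hh b) := by unfold hh; fun_prop
@[fun_prop] theorem hhh_cont (b : Bool × Bool × Bool) : Continuous (hhh b) := by
  unfold hhh; fun_prop

theorem hh_dist (b : Bool × Bool) (x y : I × I) : dist (hh b x) (hh b y) ≤ dist x y / 2 := by
  rw [Prod.dist_eq, Prod.dist_eq]
  refine max_le ((half_dist _ _ _).trans ?_) ((half_dist _ _ _).trans ?_)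
  · gcongr; exact le_max_left _ _
  · gcongr; exact le_max_right _ _

theorem hhh_dist (b : Bool × Bool × Bool) (x y : I × I × I) :
    dist (hhh b x) (hhh b y) ≤ dist x y / 2 := by
  rw [Prod.dist_eq, Prod.dist_eq]
  refine max_le ((half_dist _ _ _).trans ?_) ((hh_dist _ _ _).trans ?_)
  · gcongr; exact le_max_left _ _
  · gcongr; exact le_max_right _ _

theorem I_dist (x y : I) : dist x y ≤ 1 := by
  rw [Subtype.dist_eq, Real.dist_eq, abs_le]
  constructor <;> linarith [x.2.1, x.2.2, y.2.1, y.2.2]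

theorem I2_dist (x y : I × I) : dist x y ≤ 1 := max_le (I_dist _ _) (I_dist _ _)
theorem I3_dist (x y : I × I × I) : dist x y ≤ 1 := max_le (I_dist _ _) (I2_dist _ _)

section Cochains
variable {X Y D : Type*} [TopologicalSpace X] [TopologicalSpace Y] [AddCommGroup D]

/-- additive on the paths in `U` -/
def Add1 (U : Set X) (b : (I → X) → D) : Prop :=
  ∀ γ : I → X, Continuous γ → (∀ t, γ t ∈ U) → b γ = b (γ ∘ half false) + b (γ ∘ half true)

/-- additive on the squares in `U` -/
def Add2 (U : Set X) (c : (I × I → X) → D) : Prop :=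
  ∀ s : I × I → X, Continuous s → (∀ t, s t ∈ U) →
    c s = c (s ∘ hl false) + c (s ∘ hl true) ∧ c s = c (s ∘ hr false) + c (s ∘ hr true)

/-- coboundary -/
def d1 (b : (I → X) → D) (s : I × I → X) : D :=
  (b (fun t => s (1, t)) - b (fun t => s (0, t))) - (b (fun t => s (t, 1)) - b (fun t => s (t, 0)))

/-- coboundary -/
def d2 (c : (I × I → X) → D) (k : I × I × I → X) : D :=
  (c (fun t => k (1, t.1, t.2)) - c (fun t => k (0, t.1, t.2)))
  - (c (fun t => k (t.1, 1, t.2)) - c (fun t => k (t.1, 0, t.2)))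
  + (c (fun t => k (t.1, t.2, 1)) - c (fun t => k (t.1, t.2, 0)))

/-- closed on `U` -/
def Closed2 (U : Set X) (c : (I × I → X) → D) : Prop :=
  ∀ k : I × I × I → X, Continuous k → (∀ t, k t ∈ U) → d2 c k = 0

theorem d2_d1 (b : (I → X) → D) (k : I × I × I → X) : d2 (d1 b) k = 0 := by
  simp only [d2, d1]; abel

theorem half_false_zero : half false 0 = 0 := by ext; simp [half]
theorem half_true_one : half true 1 = 1 := by ext; simp [half]
theorem half_true_zero : half true 0 = half false 1 := by ext; simp [half]

theorem Add1.d1_add2 {U : Set X} {b : (I → X) → D} (h : Add1 U b) : Add2 U (d1 b) := by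
  intro s hs hU
  have e1 := h (fun t => s (1, t)) (by fun_prop) (fun t => hU _)
  have e2 := h (fun t => s (0, t)) (by fun_prop) (fun t => hU _)
  have e3 := h (fun t => s (t, 1)) (by fun_prop) (fun t => hU _)
  have e4 := h (fun t => s (t, 0)) (by fun_prop) (fun t => hU _)
  simp only [Function.comp_def] at e1 e2 e3 e4
  constructor
  · simp only [d1, hl, Function.comp_def, half_false_zero, half_true_one, half_true_zero]
    rw [e3, e4]; abel
  · simp only [d1, hr, Function.comp_def, half_false_zero, half_true_one, half_true_zero]
    rw [e1, e2]; abel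

theorem Add1.mono {U V : Set X} {b : (I → X) → D} (h : Add1 U b) (hVU : V ⊆ U) : Add1 V b :=
  fun γ hγ hV => h γ hγ fun t => hVU (hV t)

theorem Add2.mono {U V : Set X} {b : (I × I → X) → D} (h : Add2 U b) (hVU : V ⊆ U) : Add2 V b :=
  fun γ hγ hV => h γ hγ fun t => hVU (hV t)

theorem Add1.pull {U : Set Y} {V : Set X} {b : (I → Y) → D} (h : Add1 U b) {f : X → Y}
    (hf : ContinuousOn f V) (hfV : ∀ x ∈ V, f x ∈ U) : Add1 V (fun γ => b (f ∘ γ)) :=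
  fun γ hγ hV => h (f ∘ γ) (hf.comp_continuous hγ hV) fun t => hfV _ (hV t)

theorem Add2.pull {U : Set Y} {V : Set X} {b : (I × I → Y) → D} (h : Add2 U b) {f : X → Y}
    (hf : ContinuousOn f V) (hfV : ∀ x ∈ V, f x ∈ U) : Add2 V (fun γ => b (f ∘ γ)) :=
  fun γ hγ hV => h (f ∘ γ) (hf.comp_continuous hγ hV) fun t => hfV _ (hV t)

theorem Closed2.pull {U : Set Y} {V : Set X} {b : (I × I → Y) → D} (h : Closed2 U b) {f : X → Y}
    (hf : ContinuousOn f V) (hfV : ∀ x ∈ V, f x ∈ U) : Closed2 V (fun γ => b (f ∘ γ)) :=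
  fun γ hγ hV => h (f ∘ γ) (hf.comp_continuous hγ hV) fun t => hfV _ (hV t)

theorem Add1.const {U : Set X} {b : (I → X) → D} (h : Add1 U b) {x : X} (hx : x ∈ U) :
    b (fun _ => x) = 0 := by
  have := h (fun _ => x) continuous_const (fun _ => hx)
  simp only [Function.comp_def] at this
  simpa using this

theorem Add2.const1 {U : Set X} {b : (I × I → X) → D} (h : Add2 U b) {γ : I → X}
    (hγ : Continuous γ) (hx : ∀ t, γ t ∈ U) :
    b (fun t => γ t.2) = 0 := by
  have := (h (fun t => γ t.2) (by fun_prop) (fun _ => hx _)).1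
  simp only [Function.comp_def, hl] at this
  simpa using this

theorem Add2.const2 {U : Set X} {b : (I × I → X) → D} (h : Add2 U b) {γ : I → X}
    (hγ : Continuous γ) (hx : ∀ t, γ t ∈ U) :
    b (fun t => γ t.1) = 0 := by
  have := (h (fun t => γ t.1) (by fun_prop) (fun _ => hx _)).2
  simp only [Function.comp_def, hr] at this
  simpa using this

theorem sub_half (c : (I → X) → D) (s : I → X) :
    sub half c s = c (s ∘ half false) + c (s ∘ half true) := by
  simp [sub, add_comm]

theorem sub_hl (c : (I × I → X) → D) (s : I × I → X) :
    sub hl c s = c (s ∘ hl false) + c (s ∘ hl true) := by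
  simp [sub, add_comm]

theorem sub_hr (c : (I × I → X) → D) (s : I × I → X) :
    sub hr c s = c (s ∘ hr false) + c (s ∘ hr true) := by
  simp [sub, add_comm]

theorem sub_hh (c : (I × I → X) → D) : sub hh c = sub hl (sub hr c) := by
  ext s
  simp only [sub, Fintype.sum_prod_type]
  rfl

theorem sub_hh' (c : (I × I → X) → D) : sub hh c = sub hr (sub hl c) := by
  ext s
  simp only [sub, Fintype.sum_prod_type]
  rw [Finset.sum_comm]
  rfl

theorem comm_hl : Function.Commute (sub hh : ((I × I → X) → D) → _) (sub hl) := by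
  intro c
  rw [sub_hh, sub_hh']

theorem comm_hr : Function.Commute (sub hh : ((I × I → X) → D) → _) (sub hr) := by
  intro c
  rw [sub_hh', sub_hh]

theorem Add2.sub {U : Set X} {c : (I × I → X) → D} (h : Add2 U c) (s : I × I → X)
    (hs : Continuous s) (hU : ∀ t, s t ∈ U) : c s = PiTwo.sub hh c s := by
  rw [sub_hh, sub_hl, sub_hr, sub_hr, ← (h (s ∘ hl false) (by fun_prop) fun t => hU _).2,
    ← (h (s ∘ hl true) (by fun_prop) fun t => hU _).2]
  exact (h s hs hU).1

/-- gluing of additive 1-cochains -/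
theorem glue1 {U V W : Set X} (hU : IsOpen U) (hV : IsOpen V) (hUV : ∀ x ∈ W, x ∈ U ∨ x ∈ V)
    {b b' : (I → X) → D} (hb : Add1 U b) (hb' : Add1 V b')
    (hbb : ∀ γ, Continuous γ → (∀ t, γ t ∈ U) → (∀ t, γ t ∈ V) → b γ = b' γ) :
    ∃ β : (I → X) → D, Add1 W β ∧ (∀ γ, Continuous γ → (∀ t, γ t ∈ U) → β γ = b γ) ∧
      (∀ γ, Continuous γ → (∀ t, γ t ∈ V) → β γ = b' γ) := by
  classical
  let c : (I → X) → D := fun γ => if ∀ t, γ t ∈ U then b γ else b' γ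
  have hcU : ∀ γ, (∀ t, γ t ∈ U) → c γ = b γ := fun γ h => if_pos h
  have hcV : ∀ γ, Continuous γ → (∀ t, γ t ∈ V) → c γ = b' γ := by
    intro γ hγ h
    simp only [c]
    split_ifs with h'
    · exact hbb _ hγ h' h
    · rfl
  have hc : ∀ s, (Continuous s ∧ ((∀ q, s q ∈ U) ∨ (∀ q, s q ∈ V))) → c s = sub half c s := by
    rintro s ⟨hs, h | h⟩
    · rw [sub_half, hcU s h, hcU (s ∘ half false) fun t => h _, hcU (s ∘ half true) fun t => h _]; exact hb s hs h
    · rw [sub_half, hcV s hs h, hcV (s ∘ half false) (by fun_prop) fun t => h _,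
        hcV (s ∘ half true) (by fun_prop) fun t => h _]; exact hb' s hs h
  obtain ⟨β, h1, h2⟩ := glue_abs half
    (p := fun s => Continuous s ∧ ((∀ q, s q ∈ U) ∨ (∀ q, s q ∈ V))) (good := fun s => Continuous s ∧ ∀ q, s q ∈ W) c
    (by rintro s ⟨hs, h⟩ k
        exact ⟨by fun_prop, h.imp (fun h t => h _) (fun h t => h _)⟩) hc
    (fun s hs => lebesgue_abs half half_dist I_dist hU hV s hs.1 fun q => hUV _ (hs.2 q))
  refine ⟨β, ?_, fun γ hγ h => ?_, fun γ hγ h => ?_⟩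
  · intro s hs hW
    rw [← sub_half]
    exact h2 half (fun s hs k => ⟨hs.1.comp (half_cont k), fun q => hs.2 _⟩) hc (fun c => rfl) s ⟨hs, hW⟩
  · rw [h1 γ ⟨hγ, Or.inl h⟩, hcU _ h]
  · rw [h1 γ ⟨hγ, Or.inr h⟩, hcV _ hγ h]

/-- gluing of additive 2-cochains -/
theorem glue2 {U V W : Set X} (hU : IsOpen U) (hV : IsOpen V) (hUV : ∀ x ∈ W, x ∈ U ∨ x ∈ V)
    {b b' : (I × I → X) → D} (hb : Add2 U b) (hb' : Add2 V b')
    (hbb : ∀ γ, Continuous γ → (∀ t, γ t ∈ U) → (∀ t, γ t ∈ V) → b γ = b' γ) :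
    ∃ β : (I × I → X) → D, Add2 W β ∧ (∀ γ, Continuous γ → (∀ t, γ t ∈ U) → β γ = b γ) ∧
      (∀ γ, Continuous γ → (∀ t, γ t ∈ V) → β γ = b' γ) := by
  classical
  let c : (I × I → X) → D := fun γ => if ∀ t, γ t ∈ U then b γ else b' γ
  have hcU : ∀ γ, (∀ t, γ t ∈ U) → c γ = b γ := fun γ h => if_pos h
  have hcV : ∀ γ, Continuous γ → (∀ t, γ t ∈ V) → c γ = b' γ := by
    intro γ hγ h
    simp only [c]
    split_ifs with h'
    · exact hbb _ hγ h' h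
    · rfl
  have hcl : ∀ s, (Continuous s ∧ ((∀ q, s q ∈ U) ∨ (∀ q, s q ∈ V))) → c s = sub hl c s := by
    rintro s ⟨hs, h | h⟩
    · rw [sub_hl, hcU s h, hcU (s ∘ hl false) fun t => h _, hcU (s ∘ hl true) fun t => h _]; exact (hb s hs h).1
    · rw [sub_hl, hcV s hs h, hcV (s ∘ hl false) (by fun_prop) fun t => h _,
        hcV (s ∘ hl true) (by fun_prop) fun t => h _]; exact (hb' s hs h).1
  have hcr : ∀ s, (Continuous s ∧ ((∀ q, s q ∈ U) ∨ (∀ q, s q ∈ V))) → c s = sub hr c s := by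
    rintro s ⟨hs, h | h⟩
    · rw [sub_hr, hcU s h, hcU (s ∘ hr false) fun t => h _, hcU (s ∘ hr true) fun t => h _]; exact (hb s hs h).2
    · rw [sub_hr, hcV s hs h, hcV (s ∘ hr false) (by fun_prop) fun t => h _,
        hcV (s ∘ hr true) (by fun_prop) fun t => h _]; exact (hb' s hs h).2
  have hst : ∀ (k : Bool) s, (Continuous s ∧ ((∀ q, s q ∈ U) ∨ (∀ q, s q ∈ V))) →
      (Continuous (s ∘ hl k) ∧ ((∀ q, (s ∘ hl k) q ∈ U) ∨ (∀ q, (s ∘ hl k) q ∈ V))) :=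
    fun k s h => ⟨h.1.comp (hl_cont k), h.2.imp (fun h t => h _) (fun h t => h _)⟩
  obtain ⟨β, h1, h2⟩ := glue_abs hh
    (p := fun s => Continuous s ∧ ((∀ q, s q ∈ U) ∨ (∀ q, s q ∈ V))) (good := fun s => Continuous s ∧ ∀ q, s q ∈ W) c
    (by rintro s ⟨hs, h⟩ k
        exact ⟨by fun_prop, h.imp (fun h t => h _) (fun h t => h _)⟩)
    (by intro s hs
        rw [sub_hh, sub_hl, ← hcr _ (hst _ s hs), ← hcr _ (hst _ s hs), ← sub_hl]
        exact hcl s hs)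
    (fun s hs => lebesgue_abs hh hh_dist I2_dist hU hV s hs.1 fun q => hUV _ (hs.2 q))
  refine ⟨β, ?_, fun γ hγ h => ?_, fun γ hγ h => ?_⟩
  · intro s hs hW
    rw [← sub_hl, ← sub_hr]
    exact ⟨h2 hl (fun s hs k => ⟨hs.1.comp (hl_cont k), fun q => hs.2 _⟩) hcl comm_hl s ⟨hs, hW⟩,
      h2 hr (fun s hs k => ⟨hs.1.comp (hr_cont k), fun q => hs.2 _⟩) hcr comm_hr s ⟨hs, hW⟩⟩
  · rw [h1 γ ⟨hγ, Or.inl h⟩, hcU _ h]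
  · rw [h1 γ ⟨hγ, Or.inr h⟩, hcV _ hγ h]

/-- an additive 2-cochain vanishing on small squares vanishes -/
theorem zero2 {U V W : Set X} (hU : IsOpen U) (hV : IsOpen V) (hUV : ∀ x ∈ W, x ∈ U ∨ x ∈ V)
    {c : (I × I → X) → D} (hc : Add2 W c)
    (h1 : ∀ s, Continuous s → (∀ t, s t ∈ U) → c s = 0)
    (h2 : ∀ s, Continuous s → (∀ t, s t ∈ V) → c s = 0) (s) (hs : Continuous s) (hsW : ∀ t, s t ∈ W) : c s = 0 :=
  zero_abs hh (good := fun s => Continuous s ∧ ∀ q, s q ∈ W) c (fun s hs k => ⟨hs.1.comp (hh_cont k), fun q => hs.2 _⟩)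
    (fun s hs => hc.sub s hs.1 hs.2) (fun s hs => lebesgue_abs hh hh_dist I2_dist hU hV s hs.1 fun q => hUV _ (hs.2 q))
    (fun s h => h.2.elim (h1 s h.1) (h2 s h.1)) s ⟨hs, hsW⟩

theorem d2_sub {W : Set X} {c : (I × I → X) → D} (hc : Add2 W c) (k : I × I × I → X)
    (hk : Continuous k) (hW : ∀ t, k t ∈ W) : d2 c k = sub hhh (d2 c) k := by
  have hA := fun (s : I × I → X) (hs : Continuous s) (hsW : ∀ t, s t ∈ W) => hc.sub s hs hsW
  simp only [sub, Fintype.sum_prod_type, Fintype.sum_bool] at hA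
  simp only [sub, Fintype.sum_prod_type, Fintype.sum_bool, d2, hhh, Function.comp_def,
    half_false_zero, half_true_one, half_true_zero]
  simp only [Function.comp_def, hh] at hA
  rw [hA (fun t => k (1, t.1, t.2)) (by fun_prop) (fun _ => hW _), hA (fun t => k (0, t.1, t.2)) (by fun_prop) (fun _ => hW _),
    hA (fun t => k (t.1, 1, t.2)) (by fun_prop) (fun _ => hW _), hA (fun t => k (t.1, 0, t.2)) (by fun_prop) (fun _ => hW _),
    hA (fun t => k (t.1, t.2, 1)) (by fun_prop) (fun _ => hW _), hA (fun t => k (t.1, t.2, 0)) (by fun_prop) (fun _ => hW _)]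
  abel

/-- locally closed implies closed -/
theorem closed_glue {U V W : Set X} (hU : IsOpen U) (hV : IsOpen V) (hUV : ∀ x ∈ W, x ∈ U ∨ x ∈ V)
    {c : (I × I → X) → D} (hc : Add2 W c) (h1 : Closed2 U c) (h2 : Closed2 V c) :
    Closed2 W c :=
  fun k hk hW => zero_abs hhh (good := fun s => Continuous s ∧ ∀ q, s q ∈ W) (d2 c) (fun s hs k => ⟨hs.1.comp (hhh_cont k), fun q => hs.2 _⟩)
    (fun s hs => d2_sub hc s hs.1 hs.2) (fun s hs => lebesgue_abs hhh hhh_dist I3_dist hU hV s hs.1 fun q => hUV _ (hs.2 q))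
    (fun s h => h.2.elim (h1 s h.1) (h2 s h.1)) k ⟨hk, hW⟩

end Cochains
end PiTwo
end

noncomputable section
namespace PiTwo
open unitInterval

/-! ### Extension of additive 1-cochains -/

theorem exists_ext_of_ker {M N D : Type*} [AddCommGroup M] [AddCommGroup N] [AddCommGroup D]
    [DivisibleBy D ℤ] (f : M →ₗ[ℤ] N) (φ : M →ₗ[ℤ] D) (h : ∀ m, f m = 0 → φ m = 0) :
    ∃ g : N →ₗ[ℤ] D, ∀ m, g (f m) = φ m := by
  have hk : LinearMap.ker f ≤ LinearMap.ker φ := fun m hm => h m hm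
  obtain ⟨g, hg⟩ := (Module.Baer.of_divisible D).extension_property
    ((LinearMap.ker f).liftQ f le_rfl)
    (by rw [← LinearMap.ker_eq_bot]; exact Submodule.ker_liftQ_eq_bot _ _ _ le_rfl)
    ((LinearMap.ker f).liftQ φ hk)
  refine ⟨g, fun m => ?_⟩
  have := LinearMap.congr_fun hg (Submodule.Quotient.mk m)
  simpa using this

theorem const_of_self_sim {X : Type*} [TopologicalSpace X] [T2Space X] {δ : I → X}
    (hδ : Continuous δ) {w : I → I} (hw : ∀ x y, dist (w x) (w y) ≤ dist x y / 2)
    (h : δ ∘ w = δ) (x y : I) : δ x = δ y := by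
  have hc : ContractingWith (1 / 2) w := by
    refine ⟨by norm_num, LipschitzWith.of_dist_le_mul fun x y => ?_⟩
    refine (hw x y).trans (le_of_eq ?_)
    push_cast; ring
  have hit : ∀ j x, δ (w^[j] x) = δ x := by
    intro j
    induction j with
    | zero => intro x; rfl
    | succ j ih => intro x; rw [Function.iterate_succ_apply, ih]; exact congrFun h x
  have key : ∀ x, δ x = δ (ContractingWith.fixedPoint w hc) := by
    intro x
    have h1 := (hδ.tendsto _).comp (hc.tendsto_iterate_fixedPoint x)
    have h2 : (δ ∘ fun n => w^[n] x) = fun _ => δ x := funext fun j => hit j x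
    rw [h2] at h1
    exact tendsto_nhds_unique tendsto_const_nhds h1
  rw [key x, key y]

theorem ext1 {X D : Type*} [TopologicalSpace X] [T2Space X] [AddCommGroup D] [DivisibleBy D ℤ]
    {U : Set X} {b : (I → X) → D} (hb : Add1 U b) :
    ∃ b' : (I → X) → D, Add1 Set.univ b' ∧
      ∀ γ, Continuous γ → (∀ t, γ t ∈ U) → b' γ = b γ := by
  classical
  let P := {γ : I → X // Continuous γ}
  let hv : Bool → P → P := fun k γ => ⟨γ.1 ∘ half k, γ.2.comp (half_cont k)⟩
  let V : Set P := {γ | (∀ t, γ.1 t ∈ U) ∨ ∀ s t, γ.1 s = γ.1 t}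
  have hV : ∀ k γ, γ ∈ V → hv k γ ∈ V := fun k γ h =>
    h.imp (fun h t => h _) (fun h s t => h _ _)
  let b0 : P → D := fun γ => if ∀ t, γ.1 t ∈ U then b γ.1 else 0
  have hb0 : ∀ γ ∈ V, b0 γ = b0 (hv false γ) + b0 (hv true γ) := by
    intro γ hγ
    by_cases hu : ∀ t, γ.1 t ∈ U
    · simp only [b0]
      rw [if_pos hu, if_pos (show ∀ t, (hv false γ).1 t ∈ U from fun t => hu _),
        if_pos (show ∀ t, (hv true γ).1 t ∈ U from fun t => hu _)]
      exact hb _ γ.2 hu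
    · have hc := hγ.resolve_left hu
      have e : ∀ k, hv k γ = γ := fun k => Subtype.ext (funext fun t => hc _ _)
      rw [e, e]
      simp only [b0, if_neg hu, add_zero]
  let B : (P →₀ ℤ) →ₗ[ℤ] D := Finsupp.lift D ℤ P b0
  let sd : (P →₀ ℤ) →ₗ[ℤ] (P →₀ ℤ) := Finsupp.lmapDomain ℤ ℤ (hv false) + Finsupp.lmapDomain ℤ ℤ (hv true)
  let W := Finsupp.supported ℤ ℤ V
  have hBW : ∀ y ∈ W, B (sd y) = B y := by
    intro y hy
    have : Set.EqOn (B ∘ₗ sd) B (Finsupp.supported ℤ ℤ V : Set (P →₀ ℤ)) := by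
      rw [Finsupp.supported_eq_span_single]
      refine LinearMap.eqOn_span ?_
      rintro _ ⟨γ, hγ, rfl⟩
      have hB1 : ∀ γ, B (Finsupp.single γ 1) = b0 γ := fun γ => by simp [B, Finsupp.lift_apply]
      simp only [sd, LinearMap.comp_apply, LinearMap.add_apply, Finsupp.lmapDomain_apply,
        Finsupp.mapDomain_single, map_add, hB1, hb0 γ hγ]
    exact this hy
  let f : (W × (P →₀ ℤ)) →ₗ[ℤ] (P →₀ ℤ) :=
    W.subtype.coprod (LinearMap.id - sd)
  let φ : (W × (P →₀ ℤ)) →ₗ[ℤ] D := (B ∘ₗ W.subtype).coprod 0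
  obtain ⟨g, hg⟩ := exists_ext_of_ker f φ (by
    rintro ⟨⟨w, hw⟩, y⟩ h0
    have h0' : w + (y - sd y) = 0 := by simpa [f] using h0
    suffices hy : y ∈ W by
      have : B w = 0 := by
        rw [eq_neg_of_add_eq_zero_left h0', map_neg, map_sub, hBW y hy]; simp
      simpa [φ] using this
    by_contra hy
    -- the part outside of V
    let S : Type _ := {γ : P // y γ ≠ 0 ∧ γ ∉ V}
    have : Finite S := by
      have : Finite (y.support : Set P) := y.support.finite_toSet
      exact Finite.of_injective (β := (y.support : Set P))
        (fun γ => ⟨γ.1, by simpa using γ.2.1⟩) (fun a b h => Subtype.ext (congrArg (fun z => z.1) h))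
    have hpar : ∀ γ : S, ∃ γ' : S, ∃ k, hv k γ'.1 = γ.1 := by
      rintro ⟨γ, h1, h2⟩
      have hwγ : w γ = 0 := by
        by_contra h
        exact h2 ((Finsupp.mem_supported _ _).1 hw (by simpa using h))
      have h3 : y γ = sd y γ := by
        have := DFunLike.congr_fun h0' γ
        simp only [Finsupp.add_apply, Finsupp.sub_apply, hwγ, Finsupp.zero_apply] at this
        linarith
      have h4 : sd y γ ≠ 0 := h3 ▸ h1
      have h5 : ∃ k, Finsupp.mapDomain (hv k) y γ ≠ 0 := by
        by_contra! hcon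
        apply h4
        simp only [sd, LinearMap.add_apply, Finsupp.add_apply, Finsupp.lmapDomain_apply]
        rw [hcon, hcon, add_zero]
      obtain ⟨k, hk⟩ := h5
      have h6 : γ ∈ (Finsupp.mapDomain (hv k) y).support := by simpa using hk
      have h7 := Finsupp.mapDomain_support h6
      obtain ⟨γ', hγ', rfl⟩ := Finset.mem_image.1 h7
      exact ⟨⟨γ', by simpa using hγ', fun h => h2 (hV k γ' h)⟩, k, rfl⟩
    choose par kk hkk using hpar
    have hne : ∃ γ : P, y γ ≠ 0 ∧ γ ∉ V := by
      by_contra! hcon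
      exact hy ((Finsupp.mem_supported _ _).2 fun γ hγ => hcon γ (by simpa using hγ))
    obtain ⟨γ0, hγ0⟩ := hne
    obtain ⟨i, j, hij, he⟩ : ∃ i j : ℕ, i < j ∧ par^[i] ⟨γ0, hγ0⟩ = par^[j] ⟨γ0, hγ0⟩ := by
      obtain ⟨i, j, hij, he⟩ := Finite.exists_ne_map_eq_of_infinite
        (fun i : ℕ => par^[i] (⟨γ0, hγ0⟩ : S))
      rcases lt_or_gt_of_ne hij with h | h
      exacts [⟨i, j, h, he⟩, ⟨j, i, h, he.symm⟩]
    obtain ⟨k, rfl⟩ := Nat.exists_eq_add_of_lt hij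
    set δ := par^[i] (⟨γ0, hγ0⟩ : S) with hδ
    have hδ2 : par^[k + 1] δ = δ := by
      rw [hδ, ← Function.iterate_add_apply, show k + 1 + i = i + k + 1 by ring]; exact he.symm
    have hw' : ∀ k (δ : S), ∃ w : I → I, (∀ x y, dist (w x) (w y) ≤ dist x y / 2) ∧
        (par^[k + 1] δ).1.1 ∘ w = δ.1.1 := by
      intro k
      induction k with
      | zero =>
        intro δ
        exact ⟨half (kk δ), half_dist _, congrArg Subtype.val (hkk δ)⟩
      | succ k ih =>
        intro δ
        obtain ⟨w, hw1, hw2⟩ := ih (par δ)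
        refine ⟨w ∘ half (kk δ), fun x y => (hw1 _ _).trans ?_, ?_⟩
        · have := half_dist (kk δ) x y
          have := dist_nonneg (x := x) (y := y)
          linarith
        · rw [← Function.comp_assoc, Function.iterate_succ_apply, hw2]
          exact congrArg Subtype.val (hkk δ)
    obtain ⟨w', hw1, hw2⟩ := hw' k δ
    rw [hδ2] at hw2
    exact δ.2.2 (Or.inr fun s t => const_of_self_sim δ.1.2 hw1 hw2 s t))
  have hgW : ∀ w ∈ W, g w = B w := by
    intro w hw
    have := hg (⟨w, hw⟩, 0)
    simpa [f, φ] using this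
  have hgsd : ∀ y, g y = g (sd y) := by
    intro y
    have := hg (0, y)
    simp only [f, φ, LinearMap.coprod_apply] at this
    simp only [map_zero, LinearMap.sub_apply, LinearMap.id_apply, map_sub, zero_add,
      LinearMap.zero_apply] at this
    exact sub_eq_zero.1 this
  refine ⟨fun γ => if h : Continuous γ then g (Finsupp.single ⟨γ, h⟩ 1) else 0, ?_, ?_⟩
  · intro γ hγ _
    have hh : ∀ k, Continuous (γ ∘ half k) := fun k => by fun_prop
    simp only [dif_pos hγ, dif_pos (hh _)]
    rw [hgsd]
    simp [sd, Finsupp.mapDomain_single, hv]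
  · intro γ hγ hU
    simp only [dif_pos hγ]
    rw [hgW _ (Finsupp.single_mem_supported ℤ 1 (Or.inl hU))]
    simp only [B, Finsupp.lift_apply, b0]
    rw [Finsupp.sum_single_index (by simp), one_smul, if_pos hU]
end PiTwo
end

noncomputable section
namespace PiTwo
open unitInterval

/-! ### Homotopies with side conditions -/
section HW
variable {Q X : Type*} [TopologicalSpace Q] [TopologicalSpace X]

/-- homotopy through maps satisfying `P` -/
def HW (P : (Q → X) → Prop) (f g : Q → X) : Prop :=
  ∃ H : I × Q → X, Continuous H ∧ (∀ t, H (0, t) = f t) ∧ (∀ t, H (1, t) = g t) ∧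
    ∀ s, P (fun t => H (s, t))

variable {P P' : (Q → X) → Prop} {f g h : Q → X}

theorem HW.left (H : HW P f g) : P f ∧ Continuous f := by
  obtain ⟨H, hc, h0, h1, hP⟩ := H
  have : f = fun t => H (0, t) := funext fun t => (h0 t).symm
  exact ⟨this ▸ hP 0, this ▸ by fun_prop⟩

theorem HW.symm (H : HW P f g) : HW P g f := by
  obtain ⟨H, hc, h0, h1, hP⟩ := H
  exact ⟨fun p => H (σ p.1, p.2), by fun_prop, by simp [h1], by simp [h0], fun s => hP (σ s)⟩

theorem HW.right (H : HW P f g) : P g ∧ Continuous g := H.symm.left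

theorem HW.refl (hf : Continuous f) (h : P f) : HW P f f :=
  ⟨fun p => f p.2, by fun_prop, fun _ => rfl, fun _ => rfl, fun _ => h⟩

theorem HW.mono (H : HW P f g) (h : ∀ f, P f → P' f) : HW P' f g := by
  obtain ⟨H, hc, h0, h1, hP⟩ := H
  exact ⟨H, hc, h0, h1, fun s => h _ (hP s)⟩

theorem hw_iff (hf : Continuous f) (hg : Continuous g) :
    HW P f g ↔ ContinuousMap.HomotopicWith ⟨f, hf⟩ ⟨g, hg⟩ (fun k => P k) := by
  constructor
  · rintro ⟨H, hc, h0, h1, hP⟩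
    exact ⟨⟨⟨⟨H, hc⟩, h0, h1⟩, hP⟩⟩
  · rintro ⟨H⟩
    exact ⟨H, H.continuous, H.apply_zero, H.apply_one, H.prop⟩

theorem HW.trans (H : HW P f g) (K : HW P g h) : HW P f h := by
  have hf := H.left.2
  have hg := H.right.2
  have hh := K.right.2
  rw [hw_iff hf hg] at H
  rw [hw_iff hg hh] at K
  rw [hw_iff hf hh]
  obtain ⟨H⟩ := H
  obtain ⟨K⟩ := K
  exact ⟨H.trans K⟩

theorem HW.map {Y : Type*} [TopologicalSpace Y] {U : Set X} {F : X → Y} (hF : ContinuousOn F U)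
    {P' : (Q → Y) → Prop} (H : HW P f g) (hU : ∀ f, P f → ∀ t, f t ∈ U)
    (h : ∀ f, P f → P' (F ∘ f)) : HW P' (F ∘ f) (F ∘ g) := by
  obtain ⟨H, hc, h0, h1, hP⟩ := H
  refine ⟨F ∘ H, hF.comp_continuous hc fun p => hU _ (hP p.1) p.2, ?_, ?_, fun s => h _ (hP s)⟩
  · intro t; simp [h0]
  · intro t; simp [h1]

end HW

section Cube
variable {N : Type*} [Fintype N] {X : Type*} [TopologicalSpace X]

/-- constant `x` on the boundary -/
def Based (x : X) (f : (N → I) → X) : Prop := ∀ t ∈ Cube.boundary N, f t = x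
/-- constant on the boundary -/
def Free (f : (N → I) → X) : Prop := ∀ t ∈ Cube.boundary N, ∀ t' ∈ Cube.boundary N, f t = f t'

theorem Based.free {x : X} {f : (N → I) → X} (h : Based x f) : Free f :=
  fun t ht t' ht' => (h t ht).trans (h t' ht').symm

/-- clamp to the unit interval -/
def cl (r : ℝ) : I := Set.projIcc 0 1 zero_le_one r

@[fun_prop] theorem cl_cont : Continuous cl := continuous_projIcc (h := zero_le_one)

theorem cl_coe (t : I) : cl t = t := Set.projIcc_val _ t
theorem cl_zero {r : ℝ} (h : r ≤ 0) : cl r = 0 := Set.projIcc_of_le_left _ h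
theorem cl_one {r : ℝ} (h : 1 ≤ r) : cl r = 1 := Set.projIcc_of_right_le _ h

/-- inner cube coordinates -/
def vv (t : N → I) : N → I := fun i => cl (3 * (t i : ℝ) - 1)

/-- size of a point of the cube -/
def rho (t : N → I) : ℝ := ‖fun i => 6 * (t i : ℝ) - 3‖

/-- collar coordinate -/
def rr (t : N → I) : I := cl ((rho t - 1) / 2)

@[fun_prop] theorem vv_cont : Continuous (vv : (N → I) → N → I) := by unfold vv; fun_prop
@[fun_prop] theorem rho_cont : Continuous (rho : (N → I) → ℝ) := by unfold rho; fun_prop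
@[fun_prop] theorem rr_cont : Continuous (rr : (N → I) → I) := by unfold rr; fun_prop

theorem vv_bd {t : N → I} (h : 1 ≤ rho t) : vv t ∈ Cube.boundary N := by
  have : ∃ i, 1 ≤ ‖6 * (t i : ℝ) - 3‖ := by
    by_contra! hc
    exact absurd ((pi_norm_lt_iff one_pos).2 hc) (not_lt.2 h)
  obtain ⟨i, hi⟩ := this
  refine ⟨i, ?_⟩
  rw [Real.norm_eq_abs, le_abs] at hi
  rcases hi with hi | hi
  · right; exact cl_one (by linarith)
  · left; exact cl_zero (by linarith)

theorem rr_bd {t : N → I} (h : t ∈ Cube.boundary N) : rr t = 1 := by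
  obtain ⟨i, hi⟩ := h
  apply cl_one
  have := norm_le_pi_norm (fun i => 6 * (t i : ℝ) - 3) i
  change _ ≤ rho t at this
  simp only [Real.norm_eq_abs] at this
  rcases hi with hi | hi <;> rw [hi] at this <;> norm_num [abs_of_nonneg, abs_of_neg] at this <;>
    linarith

theorem rho_bd {t : N → I} (h : t ∈ Cube.boundary N) : 1 ≤ rho t := by
  have := rr_bd h
  by_contra! hc
  have h2 : rr t = 0 := cl_zero (by linarith)
  rw [h2] at this
  exact zero_ne_one this

theorem rr_zero {t : N → I} (h : rho t ≤ 1) : rr t = 0 := cl_zero (by linarith)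

theorem vv_hom {f : (N → I) → X} (hf : Continuous f) {P : ((N → I) → X) → Prop}
    (hP : ∀ w : (N → I) → (N → I), (∀ t i, (t i = 0 → w t i = 0) ∧ (t i = 1 → w t i = 1)) →
      P (f ∘ w)) : HW P f (f ∘ vv) := by
  refine ⟨fun p => f (fun i => cl ((1 - p.1) * p.2 i + p.1 * vv p.2 i)), ?_, ?_, ?_, ?_⟩
  · refine hf.comp (continuous_pi fun i => cl_cont.comp ?_)
    have : Continuous fun p : I × (N → I) => vv p.2 i := by
      exact (continuous_apply i).comp (vv_cont.comp continuous_snd)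
    fun_prop
  · intro t; simp [cl_coe]
  · intro t; simp [cl_coe]
  · intro s
    refine hP (fun t i => cl ((1 - s) * t i + s * vv t i)) fun t i => ⟨fun h => ?_, fun h => ?_⟩
    · have : vv t i = 0 := cl_zero (by simp [h])
      rw [this, h]; exact cl_zero (by simp)
    · have : vv t i = 1 := cl_one (by simp [h]; norm_num)
      rw [this, h]; exact cl_one (by simp)

theorem bd_of {w : (N → I) → (N → I)} (hw : ∀ t i, (t i = 0 → w t i = 0) ∧ (t i = 1 → w t i = 1))
    {t : N → I} (ht : t ∈ Cube.boundary N) : w t ∈ Cube.boundary N := by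
  obtain ⟨i, hi⟩ := ht
  exact ⟨i, hi.imp (hw t i).1 (hw t i).2⟩

/-- free null homotopies give based ones -/
theorem free_null [Nonempty N] {x y : X} {f : (N → I) → X} (hf : Based x f)
    {A : Set X}
    (H : HW (fun f => Free f ∧ ∀ t, f t ∈ A) f (fun _ => y)) :
    HW (fun f => Based x f ∧ ∀ t, f t ∈ A) f (fun _ => x) := by
  obtain ⟨H, hc, h0, h1, hP⟩ := H
  have hfc : f = fun t => H (0, t) := funext fun t => (h0 t).symm
  have hfcont : Continuous f := by rw [hfc]; fun_prop
  have hA : ∀ p, H p ∈ A := fun p => (hP p.1).2 p.2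
  have hbd0 : (fun _ => 0 : N → I) ∈ Cube.boundary N := ⟨Classical.arbitrary N, Or.inl rfl⟩
  let α : I → X := fun s => H (s, fun _ => 0)
  have hα : ∀ s t, t ∈ Cube.boundary N → H (s, t) = α s := fun s t ht => (hP s).1 t ht _ hbd0
  have hα0 : α 0 = x := by rw [← hf _ hbd0]; exact h0 _
  have hα1 : α 1 = y := h1 _
  have s1 : HW (fun f => Based x f ∧ ∀ t, f t ∈ A) f (f ∘ vv) := by
    refine vv_hom hfcont fun w hw => ⟨fun t ht => hf _ (bd_of hw ht), fun t => ?_⟩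
    rw [hfc]; exact hA _
  have s2 : HW (fun f => Based x f ∧ ∀ t, f t ∈ A) (f ∘ vv) (fun t => α (σ (rr t))) := by
    refine ⟨fun p => H (p.1 * σ (rr p.2), vv p.2), by fun_prop, ?_, ?_, ?_⟩
    · intro t; simp [h0]
    · intro t
      simp only [one_mul]
      rcases le_total 1 (rho t) with h | h
      · exact hα _ _ (vv_bd h)
      · simp only [rr_zero h, unitInterval.symm_zero]
        rw [h1, hα1]
    · intro s
      refine ⟨fun t ht => ?_, fun t => hA _⟩
      simp only [rr_bd ht, unitInterval.symm_one, mul_zero]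
      rw [hα _ _ (vv_bd (rho_bd ht)), hα0]
  have s3 : HW (fun f => Based x f ∧ ∀ t, f t ∈ A) (fun t : N → I => α (σ (rr t))) (fun _ => x) := by
    refine ⟨fun p => α (σ (rr p.2) * σ p.1), by fun_prop, by simp, by simp [hα0], ?_⟩
    intro s
    refine ⟨fun t ht => ?_, fun t => hA _⟩
    simp only [rr_bd ht, unitInterval.symm_one, zero_mul, hα0]
  exact HW.trans (HW.trans s1 s2) s3

/-- transport along a path -/
theorem transport [Nonempty N] {x y : X} {f : (N → I) → X} (hf : Based y f) (hfc : Continuous f)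
    (α : Path x y) : ∃ f' : (N → I) → X, Based x f' ∧ Continuous f' ∧ HW Free f' f := by
  let G : I × (N → I) → X := fun p =>
    if rho p.2 ≤ 1 then f (vv p.2) else α (σ (σ p.1 * rr p.2))
  have hG : Continuous G := by
    refine Continuous.if_le (by fun_prop) (by fun_prop) (by fun_prop) continuous_const ?_
    intro p hp
    rw [hf _ (vv_bd hp.ge), rr_zero hp.le]; simp
  have hb : ∀ s t, t ∈ Cube.boundary N → G (s, t) = α s := by
    intro s t ht
    simp only [G]
    split_ifs with h
    · exfalso
      have h1 := rr_bd ht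
      rw [rr_zero h] at h1
      exact zero_ne_one h1
    · simp [rr_bd ht]
  have h1 : HW Free (fun t => G (0, t)) (fun t => G (1, t)) :=
    ⟨G, hG, fun _ => rfl, fun _ => rfl, fun s t ht t' ht' => by
      simp only [hb s t ht, hb s t' ht']⟩
  refine ⟨fun t => G (0, t), fun t ht => by simp [hb 0 t ht], by fun_prop, h1.trans ?_⟩
  have e : (fun t => G (1, t)) = f ∘ vv := by
    ext t
    simp only [G, Function.comp]
    split_ifs with h
    · rfl
    · rw [hf _ (vv_bd (not_le.1 h).le)]; simp
  rw [e]
  refine (vv_hom hfc fun w hw => ?_).symm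
  exact fun t ht t' ht' => (hf _ (bd_of hw ht)).trans (hf _ (bd_of hw ht')).symm

end Cube

/-! ### Evaluation of closed cochains on spheroids -/
section Ev
variable {X D : Type*} [TopologicalSpace X] [AddCommGroup D]

/-- square from a function on `I^2` -/
def sq (f : (Fin 2 → I) → X) : I × I → X := fun t => f ![t.1, t.2]

theorem sq_cont {f : (Fin 2 → I) → X} (hf : Continuous f) : Continuous (sq f) := by
  unfold sq
  refine hf.comp (continuous_pi fun i => ?_)
  fin_cases i
  · exact continuous_fst
  · exact continuous_snd

theorem bd_l {s : I} {b : I} (h : b = 0 ∨ b = 1) : (![b, s] : Fin 2 → I) ∈ Cube.boundary (Fin 2) :=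
  ⟨0, by simpa using h⟩
theorem bd_r {s : I} {b : I} (h : b = 0 ∨ b = 1) : (![s, b] : Fin 2 → I) ∈ Cube.boundary (Fin 2) :=
  ⟨1, by simpa using h⟩

theorem ev_free {U : Set X} {c : (I × I → X) → D} (ha : Add2 U c) (hc : Closed2 U c)
    {f g : (Fin 2 → I) → X} (H : HW (fun f => Free f ∧ ∀ t, f t ∈ U) f g) : c (sq f) = c (sq g) := by
  obtain ⟨H, hcont, h0, h1, hP⟩ := H
  have hU : ∀ p, H p ∈ U := fun p => (hP p.1).2 p.2
  have hv : Continuous fun t : I × I × I => (t.1, (![t.2.1, t.2.2] : Fin 2 → I)) := by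
    refine continuous_fst.prodMk (continuous_pi fun i => ?_)
    fin_cases i
    · exact continuous_snd.fst
    · exact continuous_snd.snd
  have := hc (fun t => H (t.1, ![t.2.1, t.2.2])) (hcont.comp hv) fun t => hU _
  let α : I → X := fun s => H (s, ![0, 0])
  have hα : ∀ s t, t ∈ Cube.boundary (Fin 2) → H (s, t) = α s :=
    fun s t ht => (hP s).1 t ht _ (bd_l (Or.inl rfl))
  have hαc : Continuous α := by fun_prop
  have z := ha.const2 (γ := α) hαc (fun t => hU _)
  simp only [d2, hα _ _ (bd_l (Or.inl rfl)), hα _ _ (bd_l (Or.inr rfl)),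
    hα _ _ (bd_r (Or.inl rfl)), hα _ _ (bd_r (Or.inr rfl)), h0, h1, sub_self, z, sub_zero,
    add_zero] at this
  exact (sub_eq_zero.1 this).symm

theorem transAt_sq_false {x : X} (f g : GenLoop (Fin 2) X x) :
    sq (GenLoop.transAt 0 f g) ∘ hl false = sq f := by
  ext t
  simp only [sq, Function.comp, hl, GenLoop.transAt, GenLoop.coe_copy]
  have h1 : ((half false t.1 : I) : ℝ) = t.1 / 2 := by simp [half]
  rw [if_pos (by simp [h1]; linarith [t.1.2.2])]
  congr 1
  ext i
  fin_cases i
  · have := cl_coe t.1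
    simp only [cl] at this
    simp [h1, mul_div_cancel₀, this]
  · simp

theorem transAt_sq_true {x : X} (f g : GenLoop (Fin 2) X x) :
    sq (GenLoop.transAt 0 f g) ∘ hl true = sq g := by
  ext t
  simp only [sq, Function.comp, hl, GenLoop.transAt, GenLoop.coe_copy]
  have h1 : ((half true t.1 : I) : ℝ) = (t.1 + 1) / 2 := by simp [half]
  split_ifs with h
  · have ht : t.1 = 0 := by
      ext
      simp [h1] at h
      exact le_antisymm (by simpa using by linarith) t.1.2.1
    refine (f.2 _ ⟨0, Or.inr ?_⟩).trans (g.2 _ ⟨0, Or.inl ?_⟩).symm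
    · rw [ht] at h1
      simp [ht, h1]
    · simp [ht]
  · congr 1
    ext i
    fin_cases i
    · have := cl_coe t.1
      simp only [cl] at this
      simp [h1, mul_div_cancel₀, this]
    · simp

theorem homotopic_iff {n : ℕ} {x : X} (f g : GenLoop (Fin n) X x) :
    GenLoop.Homotopic f g ↔ HW (Based x) (f : (Fin n → I) → X) g := by
  refine Iff.trans ?_ (hw_iff f.1.continuous g.1.continuous).symm
  constructor
  · rintro ⟨H⟩
    exact ⟨⟨H.toHomotopy, fun s t ht => (H.prop s t ht).trans (f.2 t ht)⟩⟩
  · rintro ⟨H⟩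
    exact ⟨⟨H.toHomotopy, fun s t ht => (H.prop s t ht).trans (f.2 t ht).symm⟩⟩

/-- the evaluation on `π₂` -/
def evFun {c : (I × I → X) → D} (ha : Add2 Set.univ c) (hc : Closed2 Set.univ c) (x : X) :
    π_ 2 X x → Multiplicative D :=
  Quotient.lift (fun f : GenLoop (Fin 2) X x => Multiplicative.ofAdd (c (sq f)))
    (fun f g h => by
      have h' := (homotopic_iff f g).1 h
      exact congrArg Multiplicative.ofAdd
        (ev_free ha hc (h'.mono fun f hf => ⟨hf.free, fun _ => Set.mem_univ _⟩)))

/-- the homomorphism on `π₂` -/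
def evHom {c : (I × I → X) → D} (ha : Add2 Set.univ c) (hc : Closed2 Set.univ c) (x : X) :
    π_ 2 X x →* Multiplicative D :=
  MonoidHom.mk' (evFun ha hc x) (by
    intro a b
    refine Quotient.inductionOn₂ a b fun f g => ?_
    have := HomotopyGroup.mul_spec (N := Fin 2) (i := 0) (p := f) (q := g)
    refine (congrArg (evFun ha hc x) this).trans ?_
    change Multiplicative.ofAdd _ = Multiplicative.ofAdd _ * Multiplicative.ofAdd _
    rw [← ofAdd_add]
    congr 1
    rw [(ha (sq (GenLoop.transAt 0 g f)) (sq_cont (GenLoop.transAt 0 g f).1.continuous)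
      fun _ => Set.mem_univ _).1, transAt_sq_false, transAt_sq_true, add_comm])

theorem evHom_mk {c : (I × I → X) → D} (ha : Add2 Set.univ c) (hc : Closed2 Set.univ c) (x : X)
    (f : GenLoop (Fin 2) X x) : evHom ha hc x ⟦f⟧ = Multiplicative.ofAdd (c (sq f)) := rfl

end Ev
end PiTwo
end

noncomputable section
namespace PiTwo
open unitInterval

/-! ### Winding numbers -/
section Wind

theorem exists_log_of_retract {Q V : Type*} [TopologicalSpace Q] [NormedAddCommGroup V]
    [NormedSpace ℝ V] (i : Q → V) (r : V → Q) (hi : Continuous i) (hr : Continuous r)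
    (hri : ∀ q, r (i q) = q) (g : Q → ℂ) (hg : Continuous g) (h0 : ∀ q, g q ≠ 0) :
    ∃ ℓ : Q → ℂ, Continuous ℓ ∧ ∀ q, Complex.exp (ℓ q) = g q := by
  have : IsSimplyConnected (Set.univ : Set V) := by
    have := convex_univ.contractibleSpace (Set.univ_nonempty (α := V))
    show SimplyConnectedSpace _
    infer_instance
  obtain ⟨f, hf, he⟩ := Complex.exists_continuousOn_eqOn_exp_comp this isOpen_univ
    (g := g ∘ r) (by fun_prop) (by rintro ⟨x, -, hx⟩; exact h0 _ hx)
  rw [continuousOn_univ] at hf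
  refine ⟨f ∘ i, hf.comp hi, fun q => ?_⟩
  have := he (Set.mem_univ (i q))
  simp only [Function.comp, hri] at this ⊢
  exact this

theorem exists_log (g : I → ℂ) (hg : Continuous g) (h0 : ∀ q, g q ≠ 0) :
    ∃ ℓ : I → ℂ, Continuous ℓ ∧ ∀ q, Complex.exp (ℓ q) = g q :=
  exists_log_of_retract (V := ℝ) (fun t : I => (t : ℝ)) cl (by fun_prop) cl_cont (fun t => cl_coe t) g hg h0

theorem exists_log2 (g : I × I → ℂ) (hg : Continuous g) (h0 : ∀ q, g q ≠ 0) :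
    ∃ ℓ : I × I → ℂ, Continuous ℓ ∧ ∀ q, Complex.exp (ℓ q) = g q :=
  exists_log_of_retract (V := ℝ × ℝ) (fun t => ((t.1 : ℝ), (t.2 : ℝ))) (fun t => (cl t.1, cl t.2))
    (by fun_prop) ((cl_cont.comp continuous_fst).prodMk (cl_cont.comp continuous_snd))
    (fun t => by simp [cl_coe]) g hg h0

theorem log_unique {ℓ ℓ' : I → ℂ} (h : Continuous ℓ) (h' : Continuous ℓ')
    (he : ∀ t, Complex.exp (ℓ t) = Complex.exp (ℓ' t)) (s t : I) : ℓ s - ℓ t = ℓ' s - ℓ' t := by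
  have hk : ∀ t, ∃ n : ℤ, ℓ t - ℓ' t = n * (2 * Real.pi * Complex.I) := fun t => by
    obtain ⟨n, hn⟩ := Complex.exp_eq_exp_iff_exists_int.1 (he t)
    exact ⟨n, by rw [hn]; ring⟩
  choose k hk using hk
  have hkc : Continuous k := by
    have : Continuous (fun t => ((k t : ℝ))) := by
      have e : (fun t => ((k t : ℝ))) = fun t => (ℓ t - ℓ' t).im / (2 * Real.pi) := by
        ext t
        rw [hk]
        have : (2 * Real.pi) ≠ 0 := by positivity
        field_simp
        simp
      rw [e]; fun_prop
    exact Int.isClosedEmbedding_coe_real.isInducing.continuous_iff.2 this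
  have := (PreconnectedSpace.constant (inferInstance : PreconnectedSpace I) hkc : k s = k t)
  have e1 := hk s; have e2 := hk t
  rw [this] at e1
  linear_combination e1 - e2

open Classical in
/-- total change of angle -/
def wind (γ : I → ℂ) : ℝ :=
  if h : Continuous γ ∧ ∀ t, γ t ≠ 0 then
    ((exists_log γ h.1 h.2).choose 1 - (exists_log γ h.1 h.2).choose 0).im / (2 * Real.pi) else 0

theorem wind_eq {γ ℓ : I → ℂ} (h : Continuous ℓ) (he : ∀ t, Complex.exp (ℓ t) = γ t) :
    wind γ = (ℓ 1 - ℓ 0).im / (2 * Real.pi) := by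
  have hγ : Continuous γ ∧ ∀ t, γ t ≠ 0 := by
    have : γ = fun t => Complex.exp (ℓ t) := by ext t; rw [he]
    rw [this]
    exact ⟨by fun_prop, fun t => Complex.exp_ne_zero _⟩
  rw [wind, dif_pos hγ]
  have hs := (exists_log γ hγ.1 hγ.2).choose_spec
  rw [log_unique hs.1 h (fun t => by rw [hs.2, he])]

theorem wind_add1 : Add1 {z : ℂ | z ≠ 0} wind := by
  intro γ hγ h0
  obtain ⟨ℓ, hℓ, he⟩ := exists_log γ hγ h0
  have hc : ∀ b, Continuous (half b) := fun b => by unfold half; fun_prop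
  rw [wind_eq hℓ he, wind_eq (γ := γ ∘ half false) (ℓ := ℓ ∘ half false) (hℓ.comp (hc _)) (fun t => he _),
    wind_eq (γ := γ ∘ half true) (ℓ := ℓ ∘ half true) (hℓ.comp (hc _)) (fun t => he _)]
  simp only [Function.comp, half_true_one, half_false_zero, half_true_zero, Complex.sub_im]
  ring

theorem wind_mul {γ γ' : I → ℂ} (h : Continuous γ) (h0 : ∀ t, γ t ≠ 0) (h' : Continuous γ')
    (h0' : ∀ t, γ' t ≠ 0) : wind (fun t => γ t * γ' t) = wind γ + wind γ' := by
  obtain ⟨ℓ, hℓ, he⟩ := exists_log γ h h0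
  obtain ⟨ℓ', hℓ', he'⟩ := exists_log γ' h' h0'
  rw [wind_eq hℓ he, wind_eq hℓ' he', wind_eq (ℓ := fun t => ℓ t + ℓ' t) (by fun_prop)
    (fun t => by rw [Complex.exp_add, he, he'])]
  simp only [Complex.sub_im, Complex.add_im]
  ring

theorem wind_pos {r : I → ℝ} (hr : Continuous r) (h : ∀ t, 0 < r t) :
    wind (fun t => (r t : ℂ)) = 0 := by
  rw [wind_eq (ℓ := fun t => ((Real.log (r t) : ℝ) : ℂ))
    (Complex.continuous_ofReal.comp (hr.log fun t => (h t).ne'))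
    (fun t => by rw [← Complex.ofReal_exp, Real.exp_log (h t)])]
  simp

theorem wind_const {z : ℂ} (hz : z ≠ 0) : wind (fun _ => z) = 0 := wind_add1.const hz

theorem wind_pow {γ : I → ℂ} (h : Continuous γ) (h0 : ∀ t, γ t ≠ 0) (n : ℕ) :
    wind (fun t => γ t ^ n) = n * wind γ := by
  induction n with
  | zero => simp [wind_const]
  | succ k ih =>
    simp only [pow_succ]
    rw [wind_mul (by fun_prop) (fun t => pow_ne_zero _ (h0 t)) h h0, ih]
    push_cast; ring

theorem wind_exp (a : ℂ) : wind (fun t : I => Complex.exp (a * (t : ℝ))) = a.im / (2 * Real.pi) := by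
  rw [wind_eq (ℓ := fun t : I => a * ((t : ℝ) : ℂ)) (by fun_prop) (fun t => rfl)]
  simp

theorem d1_wind {s : I × I → ℂ} (hs : Continuous s) (h0 : ∀ t, s t ≠ 0) : d1 wind s = 0 := by
  obtain ⟨ℓ, hℓ, he⟩ := exists_log2 s hs h0
  simp only [d1]
  rw [wind_eq (ℓ := fun t => ℓ (1, t)) (by fun_prop) (fun t => he _),
    wind_eq (ℓ := fun t => ℓ (0, t)) (by fun_prop) (fun t => he _),
    wind_eq (ℓ := fun t => ℓ (t, 1)) (by fun_prop) (fun t => he _),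
    wind_eq (ℓ := fun t => ℓ (t, 0)) (by fun_prop) (fun t => he _)]
  simp only [Complex.sub_im]
  ring

/-- the circle of length one -/
abbrev Circ := AddCircle (1 : ℝ)

/-- angle -/
def ang (z : ℂ) : Circ := (((Complex.log z).im / (2 * Real.pi) : ℝ) : Circ)

theorem wind_ang {γ : I → ℂ} (h : Continuous γ) (h0 : ∀ t, γ t ≠ 0) :
    (wind γ : Circ) = ang (γ 1) - ang (γ 0) := by
  obtain ⟨ℓ, hℓ, he⟩ := exists_log γ h h0
  have key : ∀ t, ang (γ t) = (((ℓ t).im / (2 * Real.pi) : ℝ) : Circ) := fun t => by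
    have : Complex.exp (Complex.log (γ t)) = Complex.exp (ℓ t) := by rw [he, Complex.exp_log (h0 t)]
    obtain ⟨n, hn⟩ := Complex.exp_eq_exp_iff_exists_int.1 this
    rw [ang, hn, ← sub_eq_zero, ← AddCircle.coe_sub, AddCircle.coe_eq_zero_iff]
    refine ⟨n, ?_⟩
    have : Real.pi ≠ 0 := by positivity
    simp
    field_simp
    ring
  rw [wind_eq hℓ he, key, key, ← AddCircle.coe_sub]
  congr 1
  simp only [Complex.sub_im]; ring

theorem wind_int {γ : I → ℂ} (h : Continuous γ) (h0 : ∀ t, γ t ≠ 0) (h1 : γ 1 = γ 0) :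
    ∃ m : ℤ, wind γ = m := by
  have := wind_ang h h0
  rw [h1, sub_self, AddCircle.coe_eq_zero_iff] at this
  obtain ⟨m, hm⟩ := this
  exact ⟨m, by rw [← hm]; simp⟩

/-- the power map preserving norms -/
def pw (n : ℕ) (z : ℂ) : ℂ := z ^ n * (((‖z‖ ^ (n - 1))⁻¹ : ℝ) : ℂ)

theorem pw_norm {n : ℕ} (hn : 0 < n) (z : ℂ) : ‖pw n z‖ = ‖z‖ := by
  rcases eq_or_ne z 0 with rfl | hz
  · simp [pw, hn.ne']
  · have : ‖z‖ ≠ 0 := by simpa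
    obtain ⟨k, rfl⟩ : ∃ k, n = k + 1 := ⟨n - 1, by omega⟩
    simp [pw, pow_succ]
    field_simp

theorem pw_ne {n : ℕ} (hn : 0 < n) {z : ℂ} : pw n z ≠ 0 ↔ z ≠ 0 := by
  rw [← norm_ne_zero_iff, pw_norm hn, norm_ne_zero_iff]

theorem pw_mul (n : ℕ) (z w : ℂ) : pw n (z * w) = pw n z * pw n w := by
  simp only [pw, norm_mul, mul_pow, mul_inv]; push_cast; ring

theorem pw_conj (n : ℕ) (z : ℂ) : pw n (starRingEnd ℂ z) = starRingEnd ℂ (pw n z) := by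
  simp only [pw, map_mul, map_pow, RCLike.norm_conj, Complex.conj_ofReal]

theorem pw_real {n : ℕ} (hn : 0 < n) {r : ℝ} (hr : 0 ≤ r) : pw n (r : ℂ) = r := by
  obtain ⟨k, rfl⟩ : ∃ k, n = k + 1 := ⟨n - 1, by omega⟩
  rcases hr.eq_or_lt with rfl | hr
  · simp [pw]
  · simp only [pw, Complex.norm_real, Real.norm_eq_abs, abs_of_pos hr, Nat.add_sub_cancel]
    have : (r : ℂ) ≠ 0 := by exact_mod_cast hr.ne'
    push_cast; field_simp; ring

theorem pw_continuous {n : ℕ} (hn : 0 < n) : Continuous (pw n) := by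
  rw [continuous_iff_continuousAt]
  intro z
  rcases eq_or_ne z 0 with rfl | hz
  · have : pw n 0 = 0 := by simp [pw, hn.ne']
    rw [ContinuousAt, this, tendsto_zero_iff_norm_tendsto_zero]
    simp only [pw_norm hn]
    exact tendsto_norm_zero
  · unfold pw
    have : ContinuousAt (fun z : ℂ => (‖z‖ ^ (n - 1))⁻¹) z :=
      ContinuousAt.inv₀ (by fun_prop) (by simpa using fun h => absurd h hz)
    exact ContinuousAt.mul (by fun_prop) (Complex.continuous_ofReal.continuousAt.comp this)

theorem wind_pw {n : ℕ} (hn : 0 < n) {γ : I → ℂ} (h : Continuous γ) (h0 : ∀ t, γ t ≠ 0) :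
    wind (fun t => pw n (γ t)) = n * wind γ := by
  have hp : ∀ t, 0 < (‖γ t‖ ^ (n - 1))⁻¹ := fun t => by
    have := norm_pos_iff.2 (h0 t); positivity
  have hc : Continuous fun t => (‖γ t‖ ^ (n - 1))⁻¹ :=
    Continuous.inv₀ (by fun_prop) (fun t => (inv_pos.1 (hp t)).ne')
  unfold pw
  rw [wind_mul (γ := fun t => γ t ^ n) (γ' := fun t => (((‖γ t‖ ^ (n - 1))⁻¹ : ℝ) : ℂ)) (by fun_prop) (fun t => pow_ne_zero _ (h0 t)) (Complex.continuous_ofReal.comp hc)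
    (fun t => by exact_mod_cast (hp t).ne'), wind_pow h h0, wind_pos hc hp, add_zero]

end Wind
end PiTwo
end

noncomputable section
namespace PiTwo
open unitInterval

/-! ### The generating 2-cocycle of the sphere -/
section Omega

abbrev E3 := ℂ × ℝ
abbrev C2 := ℂ × ℂ

def S1 : Set E3 := {v | v.1 ≠ 0 ∨ 0 < v.2}
def S2 : Set E3 := {v | v.1 ≠ 0 ∨ v.2 < 0}
def S12 : Set E3 := {v | v.1 ≠ 0}
def W3 : Set E3 := {v | v ≠ 0}

theorem S1_open : IsOpen S1 :=
  (isOpen_ne_fun continuous_fst continuous_const).union (isOpen_lt continuous_const continuous_snd)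
theorem S2_open : IsOpen S2 :=
  (isOpen_ne_fun continuous_fst continuous_const).union (isOpen_lt continuous_snd continuous_const)
theorem S_cover : ∀ x ∈ W3, x ∈ S1 ∨ x ∈ S2 := by
  rintro ⟨z, h⟩ hx
  simp only [S1, S2, Set.mem_setOf_eq]
  by_cases hz : z = 0
  · have : h ≠ 0 := by rintro rfl; exact hx (by simp [hz])
    rcases lt_or_gt_of_ne this with h | h
    · right; right; exact h
    · left; right; exact h
  · left; left; exact hz

theorem S_inter {v : E3} (h1 : v ∈ S1) (h2 : v ∈ S2) : v.1 ≠ 0 := by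
  rcases h1 with h | h
  · exact h
  · rcases h2 with h' | h'
    · exact h'
    · linarith

theorem exists_phi : ∃ φ : (I → E3) → ℝ, Add1 Set.univ φ ∧
    ∀ γ, Continuous γ → (∀ t, γ t ∈ S12) → φ γ = wind (fun t => (γ t).1) :=
  ext1 (U := S12) (wind_add1.pull (f := Prod.fst) (V := S12) (by fun_prop) (fun x hx => hx))

def phi : (I → E3) → ℝ := exists_phi.choose
theorem phi_add : Add1 Set.univ phi := exists_phi.choose_spec.1
theorem phi_eq {γ : I → E3} (h : Continuous γ) (h0 : ∀ t, (γ t).1 ≠ 0) : phi γ = wind (fun t => (γ t).1) :=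
  exists_phi.choose_spec.2 γ h h0

theorem exists_omega : ∃ ω : (I × I → E3) → ℝ, Add2 W3 ω ∧
    (∀ s, Continuous s → (∀ t, s t ∈ S1) → ω s = d1 phi s) ∧
    (∀ s, Continuous s → (∀ t, s t ∈ S2) → ω s = 0) := by
  refine glue2 S1_open S2_open S_cover ((phi_add.mono (Set.subset_univ _)).d1_add2) (by intro s _ _; simp) ?_
  intro s hs h1 h2
  have h : ∀ t, (s t).1 ≠ 0 := fun t => S_inter (h1 t) (h2 t)
  rw [← d1_wind (s := fun t => (s t).1) (by fun_prop) h]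
  simp only [d1]
  rw [phi_eq (by fun_prop) (fun t => h _), phi_eq (by fun_prop) (fun t => h _),
    phi_eq (by fun_prop) (fun t => h _), phi_eq (by fun_prop) (fun t => h _)]

def om : (I × I → E3) → ℝ := exists_omega.choose
theorem om_add : Add2 W3 om := exists_omega.choose_spec.1
theorem om_1 {s : I × I → E3} (hs : Continuous s) (h : ∀ t, s t ∈ S1) : om s = d1 phi s :=
  exists_omega.choose_spec.2.1 s hs h
theorem om_2 {s : I × I → E3} (hs : Continuous s) (h : ∀ t, s t ∈ S2) : om s = 0 :=
  exists_omega.choose_spec.2.2 s hs h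

theorem om_closed : Closed2 W3 om := by
  refine closed_glue S1_open S2_open S_cover om_add ?_ ?_
  · intro k hk h
    rw [← d2_d1 phi k]
    simp only [d2]
    rw [om_1 (by fun_prop) (fun t => h _), om_1 (by fun_prop) (fun t => h _),
      om_1 (by fun_prop) (fun t => h _), om_1 (by fun_prop) (fun t => h _),
      om_1 (by fun_prop) (fun t => h _), om_1 (by fun_prop) (fun t => h _)]
  · intro k hk h
    simp only [d2]
    rw [om_2 (by fun_prop) (fun t => h _), om_2 (by fun_prop) (fun t => h _),
      om_2 (by fun_prop) (fun t => h _), om_2 (by fun_prop) (fun t => h _),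
      om_2 (by fun_prop) (fun t => h _), om_2 (by fun_prop) (fun t => h _)]
    simp

/-- the Hopf map -/
def hq (ξ : C2) : E3 := (2 * ξ.2 * starRingEnd ℂ ξ.1, ‖ξ.1‖ ^ 2 - ‖ξ.2‖ ^ 2)

@[fun_prop]
theorem hq_cont : Continuous hq := by unfold hq; fun_prop

def U1 : Set C2 := {ξ | ξ.1 ≠ 0}
def U2 : Set C2 := {ξ | ξ.2 ≠ 0}
def W4 : Set C2 := {ξ | ξ ≠ 0}

theorem U1_open : IsOpen U1 := isOpen_ne_fun continuous_fst continuous_const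
theorem U2_open : IsOpen U2 := isOpen_ne_fun continuous_snd continuous_const
theorem U_cover : ∀ x ∈ W4, x ∈ U1 ∨ x ∈ U2 := by
  rintro ⟨a, b⟩ hx
  by_contra! h
  simp only [U1, U2, Set.mem_setOf_eq, not_not] at h
  exact hx (Prod.ext h.1 h.2)

theorem hq_U1 {ξ : C2} (h : ξ ∈ U1) : hq ξ ∈ S1 := by
  simp only [U1, S1, hq, Set.mem_setOf_eq] at *
  by_cases h2 : ξ.2 = 0
  · right; have := norm_pos_iff.2 h; simp [h2]; positivity
  · left; simp [h2, h]

theorem hq_U2 {ξ : C2} (h : ξ ∈ U2) : hq ξ ∈ S2 := by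
  simp only [U2, S2, hq, Set.mem_setOf_eq] at *
  by_cases h2 : ξ.1 = 0
  · right; have := norm_pos_iff.2 h; simp [h2]; positivity
  · left; simp [h2, h]

theorem hq_W4 {ξ : C2} (h : ξ ∈ W4) : hq ξ ∈ W3 := by
  have h1 : ∀ {v}, v ∈ S1 ∨ v ∈ S2 → v ∈ W3 := by
    rintro v h rfl
    simp [S1, S2] at h
  exact h1 ((U_cover ξ h).imp hq_U1 hq_U2)

theorem exists_beta : ∃ β : (I → C2) → ℝ, Add1 W4 β ∧
    (∀ γ, Continuous γ → (∀ t, γ t ∈ U1) → β γ = phi (hq ∘ γ) + wind (fun t => (γ t).1)) ∧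
    (∀ γ, Continuous γ → (∀ t, γ t ∈ U2) → β γ = wind (fun t => (γ t).2)) := by
  refine glue1 U1_open U2_open U_cover ?_ ?_ ?_
  · intro γ hγ h
    have h1 := phi_add.pull (f := hq) (V := U1) hq_cont.continuousOn (fun _ _ => trivial) γ hγ h
    have h2 := wind_add1.pull (f := Prod.fst) (V := U1) (by fun_prop) (fun x hx => hx) γ hγ h
    simp only [Function.comp_def] at h1 h2 ⊢
    rw [h1, h2]; ring
  · exact wind_add1.pull (f := Prod.snd) (V := U2) (by fun_prop) (fun x hx => hx)
  · intro γ hγ h1 h2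
    have h1' : ∀ t, (γ t).1 ≠ 0 := h1
    have h2' : ∀ t, (γ t).2 ≠ 0 := h2
    rw [phi_eq (by fun_prop) (fun t => by simp [hq, h1' t, h2' t])]
    rw [← wind_mul (by fun_prop) (fun t => by simp [hq, h1' t, h2' t]) (by fun_prop) h1']
    have : ∀ t, (hq (γ t)).1 * (γ t).1 = (γ t).2 * ((2 * ‖(γ t).1‖ ^ 2 : ℝ) : ℂ) := fun t => by
      simp only [hq]
      have := Complex.conj_mul' (γ t).1
      push_cast
      rw [← this]; ring
    simp only [Function.comp_def, this]
    rw [wind_mul (by fun_prop) h2' (by fun_prop) (fun t => by simpa using h1' t),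
      wind_pos (by fun_prop) (fun t => by have := norm_pos_iff.2 (h1' t); positivity), add_zero]

def be : (I → C2) → ℝ := exists_beta.choose
theorem be_add : Add1 W4 be := exists_beta.choose_spec.1
theorem be_1 {γ : I → C2} (hγ : Continuous γ) (h : ∀ t, γ t ∈ U1) :
    be γ = phi (hq ∘ γ) + wind (fun t => (γ t).1) := exists_beta.choose_spec.2.1 γ hγ h
theorem be_2 {γ : I → C2} (hγ : Continuous γ) (h : ∀ t, γ t ∈ U2) :
    be γ = wind (fun t => (γ t).2) := exists_beta.choose_spec.2.2 γ hγ h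

theorem Add2.diff {X D : Type*} [TopologicalSpace X] [AddCommGroup D] {U : Set X}
    {c c' : (I × I → X) → D} (h : Add2 U c) (h' : Add2 U c') : Add2 U (fun s => c s - c' s) := by
  intro s hs hU
  have a := h s hs hU
  have b := h' s hs hU
  constructor
  · show c s - c' s = _
    rw [a.1, b.1]; exact add_sub_add_comm _ _ _ _
  · show c s - c' s = _
    rw [a.2, b.2]; exact add_sub_add_comm _ _ _ _

theorem om_hq {s : I × I → C2} (hs : Continuous s) (h : ∀ t, s t ∈ W4) :
    om (hq ∘ s) = d1 be s := by
  have := zero2 U1_open U2_open U_cover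
    ((om_add.pull (f := hq) (V := W4) hq_cont.continuousOn (fun x hx => hq_W4 hx)).diff be_add.d1_add2)
    ?_ ?_ s hs h
  · exact sub_eq_zero.1 this
  · intro s hs h
    rw [om_1 (s := hq ∘ s) (by fun_prop) (fun t => hq_U1 (h t))]
    have e := d1_wind (s := fun t => (s t).1) (by fun_prop) h
    simp only [d1] at e ⊢
    rw [be_1 (by fun_prop) (fun t => h _), be_1 (by fun_prop) (fun t => h _),
      be_1 (by fun_prop) (fun t => h _), be_1 (by fun_prop) (fun t => h _)]
    simp only [Function.comp_def]
    linarith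
  · intro s hs h
    rw [om_2 (s := hq ∘ s) (by fun_prop) (fun t => hq_U2 (h t))]
    have e := d1_wind (s := fun t => (s t).2) (by fun_prop) h
    simp only [d1] at e ⊢
    rw [be_2 (by fun_prop) (fun t => h _), be_2 (by fun_prop) (fun t => h _),
      be_2 (by fun_prop) (fun t => h _), be_2 (by fun_prop) (fun t => h _)]
    linarith

variable {n : ℕ}

/-- the degree n self map -/
def pp (n : ℕ) (v : E3) : E3 := (pw n v.1, v.2)
def PP (n : ℕ) (ξ : C2) : C2 := (pw n ξ.1, pw n ξ.2)

theorem pp_cont (hn : 0 < n) : Continuous (pp n) := by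
  have := pw_continuous hn
  unfold pp; fun_prop
theorem PP_cont (hn : 0 < n) : Continuous (PP n) := by
  have := pw_continuous hn
  unfold PP; fun_prop

theorem hq_PP (hn : 0 < n) (ξ : C2) : hq (PP n ξ) = pp n (hq ξ) := by
  simp only [hq, PP, pp, pw_mul, pw_norm hn, pw_conj]
  have := pw_real hn (r := 2) (by norm_num)
  push_cast at this
  rw [this]

theorem pp_S1 (hn : 0 < n) {v : E3} : pp n v ∈ S1 ↔ v ∈ S1 := by
  simp only [S1, pp, Set.mem_setOf_eq, pw_ne hn]
theorem pp_S2 (hn : 0 < n) {v : E3} : pp n v ∈ S2 ↔ v ∈ S2 := by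
  simp only [S2, pp, Set.mem_setOf_eq, pw_ne hn]
theorem pp_W3 (hn : 0 < n) {v : E3} (hv : v ∈ W3) : pp n v ∈ W3 := by
  rcases S_cover v hv with h | h
  · rintro h'
    have := (pp_S1 hn).2 h
    rw [h'] at this
    simp [S1] at this
  · rintro h'
    have := (pp_S2 hn).2 h
    rw [h'] at this
    simp [S2] at this

open Classical in
/-- angle extended by zero -/
def angx (v : E3) : Circ := if v.1 = 0 then 0 else ang v.1

theorem exists_bp (hn : 0 < n) : ∃ b : (I → E3) → Circ, Add1 W3 b ∧
    (∀ γ, Continuous γ → (∀ t, γ t ∈ S1) → b γ = ((phi (pp n ∘ γ) / n : ℝ) : Circ) - (angx (γ 1) - angx (γ 0))) ∧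
    (∀ γ, Continuous γ → (∀ t, γ t ∈ S2) → b γ = 0) := by
  refine glue1 S1_open S2_open S_cover ?_ (by intro γ _ _; simp) ?_
  · intro γ hγ h
    have h1 := phi_add.pull (f := pp n) (V := S1) (pp_cont hn).continuousOn (fun _ _ => trivial) γ hγ h
    simp only [Function.comp_def] at h1 ⊢
    rw [h1, half_false_zero, half_true_one, half_true_zero, add_div, AddCircle.coe_add]; abel
  · intro γ hγ h1 h2
    have h : ∀ t, (γ t).1 ≠ 0 := fun t => S_inter (h1 t) (h2 t)
    rw [phi_eq ((pp_cont hn).comp hγ) (fun t => (pw_ne hn).2 (h t))]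
    simp only [Function.comp_def, pp]
    rw [wind_pw hn (by fun_prop) h, mul_div_cancel_left₀ _ (by exact_mod_cast hn.ne'),
      wind_ang (by fun_prop) h]
    simp [angx, h]

def bp (hn : 0 < n) : (I → E3) → Circ := (exists_bp hn).choose
theorem bp_add (hn : 0 < n) : Add1 W3 (bp hn) := (exists_bp hn).choose_spec.1
theorem bp_1 (hn : 0 < n) {γ : I → E3} (hγ : Continuous γ) (h : ∀ t, γ t ∈ S1) :
    bp hn γ = ((phi (pp n ∘ γ) / n : ℝ) : Circ) - (angx (γ 1) - angx (γ 0)) :=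
  (exists_bp hn).choose_spec.2.1 γ hγ h
theorem bp_2 (hn : 0 < n) {γ : I → E3} (hγ : Continuous γ) (h : ∀ t, γ t ∈ S2) :
    bp hn γ = 0 := (exists_bp hn).choose_spec.2.2 γ hγ h

/-- the cocycle divided by `n`, modulo one -/
def omn (n : ℕ) (s : I × I → E3) : Circ := ((om s / n : ℝ) : Circ)

theorem omn_add : Add2 W3 (omn n) := by
  intro s hs h
  have := om_add s hs h
  simp only [omn]
  constructor
  · rw [this.1, add_div, AddCircle.coe_add]
  · rw [this.2, add_div, AddCircle.coe_add]

theorem omn_closed : Closed2 W3 (omn n) := by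
  intro k hk h
  have := om_closed k hk h
  simp only [d2, omn, ← AddCircle.coe_sub, ← AddCircle.coe_add] at this ⊢
  rw [← AddCircle.coe_zero, ← zero_div (n : ℝ), ← this]
  congr 1
  ring

theorem omn_pp (hn : 0 < n) {s : I × I → E3} (hs : Continuous s) (h : ∀ t, s t ∈ W3) :
    omn n (pp n ∘ s) = d1 (bp hn) s := by
  have hpc := pp_cont hn
  have := zero2 S1_open S2_open S_cover
    (((omn_add (n := n)).pull (f := pp n) (V := W3) (pp_cont hn).continuousOn (fun x hx => pp_W3 hn hx)).diff
      (bp_add hn).d1_add2) ?_ ?_ s hs h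
  · exact sub_eq_zero.1 this
  · intro s hs h
    rw [omn, om_1 (s := pp n ∘ s) (by fun_prop) (fun t => (pp_S1 hn).2 (h t))]
    simp only [d1]
    rw [bp_1 hn (by fun_prop) (fun t => h _), bp_1 hn (by fun_prop) (fun t => h _),
      bp_1 hn (by fun_prop) (fun t => h _), bp_1 hn (by fun_prop) (fun t => h _)]
    simp only [Function.comp_def, sub_div, AddCircle.coe_sub]
    abel
  · intro s hs h
    rw [omn, om_2 (s := pp n ∘ s) (by fun_prop) (fun t => (pp_S2 hn).2 (h t))]
    simp only [d1]
    rw [bp_2 hn (by fun_prop) (fun t => h _), bp_2 hn (by fun_prop) (fun t => h _),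
      bp_2 hn (by fun_prop) (fun t => h _), bp_2 hn (by fun_prop) (fun t => h _)]
    simp

/-- the generator -/
def Fg (t : I × I) : C2 := (((t.1 : ℝ) * (1 - t.1) * (t.2 * (1 - t.2)) : ℝ),
  ((1 - (t.1 : ℝ) : ℝ) : ℂ) + ((t.1 : ℝ) : ℂ) * Complex.exp (2 * Real.pi * Complex.I * ((t.2 : ℝ) : ℂ)))

@[fun_prop]
theorem Fg_cont : Continuous Fg := by unfold Fg; fun_prop

theorem Fg_0 (t : I) : Fg (0, t) = (0, 1) := by simp [Fg]
theorem Fg_1 (t : I) : Fg (1, t) = (0, Complex.exp (2 * Real.pi * Complex.I * ((t : ℝ) : ℂ))) := by simp [Fg]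
theorem Fg_l (t : I) : Fg (t, 0) = (0, 1) := by simp [Fg]
theorem Fg_r (t : I) : Fg (t, 1) = (0, 1) := by simp [Fg]

theorem Fg_ne (t : I × I) : Fg t ∈ W4 := by
  obtain ⟨a, b⟩ := t
  by_cases ha0 : a = 0
  · subst ha0; rw [Fg_0]; simp [W4]
  by_cases ha1 : a = 1
  · subst ha1; rw [Fg_1]; simp [W4]
  by_cases hb0 : b = 0
  · subst hb0; rw [Fg_l]; simp [W4]
  by_cases hb1 : b = 1
  · subst hb1; rw [Fg_r]; simp [W4]
  have h1 : (a : ℝ) ≠ 0 := fun h => ha0 (Subtype.ext h)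
  have h2 : (1 - a : ℝ) ≠ 0 := fun h => ha1 (Subtype.ext (by rw [Set.Icc.coe_one]; linarith))
  have h3 : (b : ℝ) ≠ 0 := fun h => hb0 (Subtype.ext h)
  have h4 : (1 - b : ℝ) ≠ 0 := fun h => hb1 (Subtype.ext (by rw [Set.Icc.coe_one]; linarith))
  intro h
  have := congrArg Prod.fst h
  simp only [Fg, Prod.fst_zero, Complex.ofReal_eq_zero] at this
  exact mul_ne_zero (mul_ne_zero h1 h2) (mul_ne_zero h3 h4) this

theorem PP_W4 (hn : 0 < n) {ξ : C2} (h : ξ ∈ W4) : PP n ξ ∈ W4 := by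
  intro h'
  rcases U_cover ξ h with h1 | h1
  · exact (pw_ne hn).2 h1 (congrArg Prod.fst h')
  · exact (pw_ne hn).2 h1 (congrArg Prod.snd h')

theorem om_Fg (hn : 0 < n) : om (fun t => pp n (hq (Fg t))) = n := by
  have : (fun t => pp n (hq (Fg t))) = hq ∘ fun t => PP n (Fg t) := by
    ext1 t; simp [hq_PP hn]
  rw [this, om_hq (s := fun t => PP n (Fg t)) ((PP_cont hn).comp Fg_cont) (fun t => PP_W4 hn (Fg_ne t))]
  have h1 : pw n 1 = 1 := by simpa using pw_real hn (r := 1) (by norm_num)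
  have h0 : pw n 0 = 0 := by simpa using pw_real hn (r := 0) (by norm_num)
  have hc : ((0 : ℂ), (1 : ℂ)) ∈ W4 := by simp [W4]
  simp only [d1, Fg_0, Fg_1, Fg_l, Fg_r, PP, h1, h0, be_add.const hc, sub_zero]
  have hpc := pw_continuous hn
  rw [be_2 (by fun_prop) (fun t => (pw_ne hn).2 (Complex.exp_ne_zero _)),
    wind_pw hn (by fun_prop) (fun t => (Complex.exp_ne_zero _)), wind_exp]
  have := Real.pi_pos
  simp

end Omega
end PiTwo
end

noncomputable section
namespace PiTwo
open unitInterval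

/-! ### Lifting to the 3-sphere -/
section Lift

def ns (v : E3) : ℝ := ‖v.1‖ ^ 2 + v.2 ^ 2
def ms (ξ : C2) : ℝ := ‖ξ.1‖ ^ 2 + ‖ξ.2‖ ^ 2

@[fun_prop] theorem ns_cont : Continuous ns := by unfold ns; fun_prop
@[fun_prop] theorem ms_cont : Continuous ms := by unfold ms; fun_prop

theorem ms_pos {ξ : C2} : 0 < ms ξ ↔ ξ ≠ 0 := by
  constructor
  · rintro h rfl; simp [ms] at h
  · intro h
    rcases U_cover ξ h with h | h
    · have : 0 < ‖ξ.1‖ := norm_pos_iff.2 h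
      unfold ms; positivity
    · have : 0 < ‖ξ.2‖ := norm_pos_iff.2 h
      unfold ms; positivity

theorem ns_pos {ξ : E3} : 0 < ns ξ ↔ ξ ≠ 0 := by
  constructor
  · rintro h rfl; simp [ns] at h
  · intro h
    by_cases h1 : ξ.1 = 0
    · have : ξ.2 ≠ 0 := fun h2 => h (Prod.ext h1 h2)
      unfold ns; positivity
    · have : 0 < ‖ξ.1‖ := norm_pos_iff.2 h1
      unfold ns; positivity

theorem ns_hq (ξ : C2) : ns (hq ξ) = ms ξ ^ 2 := by
  simp only [ns, hq, ms, norm_mul, RCLike.norm_conj, Complex.norm_ofNat]; ring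

theorem hq_smul (c : ℂ) (ξ : C2) : hq (c • ξ) = (‖c‖ ^ 2) • hq ξ := by
  simp only [hq, Prod.smul_fst, Prod.smul_snd, smul_eq_mul, map_mul, norm_mul, Prod.smul_mk]
  ext1
  · have := Complex.conj_mul' c
    simp only [Complex.real_smul]
    push_cast
    rw [← this]; ring
  · simp only; ring

theorem ms_smul (c : ℂ) (ξ : C2) : ms (c • ξ) = ‖c‖ ^ 2 * ms ξ := by
  simp only [ms, Prod.smul_fst, Prod.smul_snd, smul_eq_mul, norm_mul]; ring

/-- projection to the line over `v` -/
def pr (v : E3) (ξ : C2) : C2 :=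
  (((1 + v.2 : ℝ) * ξ.1 + starRingEnd ℂ v.1 * ξ.2) / 2, (v.1 * ξ.1 + ((1 - v.2 : ℝ) : ℂ) * ξ.2) / 2)

theorem sq_norm_re_im (z : ℂ) : ‖z‖ ^ 2 = z.re ^ 2 + z.im ^ 2 := by
  rw [← Complex.normSq_eq_norm_sq, Complex.normSq_apply]; ring

theorem pr_mk (a b h c d e f : ℝ) : pr (⟨a, b⟩, h) (⟨c, d⟩, ⟨e, f⟩) =
    (⟨((1 + h) * c + a * e + b * f) / 2, ((1 + h) * d + a * f - b * e) / 2⟩,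
      ⟨(a * c - b * d + (1 - h) * e) / 2, (a * d + b * c + (1 - h) * f) / 2⟩) := by
  unfold pr
  ext1 <;> apply Complex.ext <;>
    simp [Complex.div_re, Complex.div_im, Complex.normSq_apply] <;> ring

theorem hq_mk (c d e f : ℝ) : hq (⟨c, d⟩, ⟨e, f⟩) =
    (⟨2 * (e * c + f * d), 2 * (f * c - e * d)⟩, c ^ 2 + d ^ 2 - e ^ 2 - f ^ 2) := by
  unfold hq
  ext1
  · apply Complex.ext <;> simp <;> ring
  · simp [sq_norm_re_im]; ring

theorem ms_mk (c d e f : ℝ) : ms (⟨c, d⟩, ⟨e, f⟩) = c ^ 2 + d ^ 2 + e ^ 2 + f ^ 2 := by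
  simp [ms, sq_norm_re_im]; ring

theorem hq_pr {v : E3} (hv : ns v = 1) (ξ : C2) : hq (pr v ξ) = ms (pr v ξ) • v := by
  obtain ⟨⟨a, b⟩, h⟩ := v
  obtain ⟨⟨c, d⟩, ⟨e, f⟩⟩ := ξ
  simp only [ns, sq_norm_re_im] at hv
  rw [pr_mk, hq_mk, ms_mk]
  ext1
  · apply Complex.ext
    · simp only [Prod.smul_mk, Complex.real_smul, Complex.re_ofReal_mul]
      linear_combination (-1/4) * ((c^2+d^2+e^2+f^2) * a + 2 * (e * c + f * d)) * hv
    · simp only [Prod.smul_mk, Complex.real_smul, Complex.im_ofReal_mul]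
      linear_combination (-1/4) * ((c^2+d^2+e^2+f^2) * b + 2 * (f * c - e * d)) * hv
  · simp only [Prod.smul_mk, smul_eq_mul]
    linear_combination (-1/4) * ((c^2+d^2+e^2+f^2) * h + (c^2+d^2-e^2-f^2)) * hv

/-- inner product -/
def ip (v w : E3) : ℝ := v.1.re * w.1.re + v.1.im * w.1.im + v.2 * w.2

theorem ms_pr {v v' : E3} (hv : ns v = 1) {ξ : C2} (h : hq ξ = ms ξ • v') :
    ms (pr v ξ) = ms ξ * (1 + ip v v') / 2 := by
  have e : ms ξ * ip v v' = ip v (hq ξ) := by rw [h]; simp [ip]; ring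
  have : ms ξ * (1 + ip v v') / 2 = (ms ξ + ip v (hq ξ)) / 2 := by rw [← e]; ring
  rw [this]
  clear this e h
  obtain ⟨⟨a, b⟩, h⟩ := v
  obtain ⟨⟨c, d⟩, ⟨e, f⟩⟩ := ξ
  simp only [ns, sq_norm_re_im] at hv
  have e1 : a ^ 2 = 1 - b ^ 2 - h ^ 2 := by linarith
  rw [pr_mk, hq_mk, ms_mk, ms_mk]
  simp only [ip]
  linear_combination (1/4) * (c^2+d^2+e^2+f^2) * hv

theorem ip_gt {v w : E3} (hv : ns v = 1) (hw : ns w = 1) (h : dist v w < 1) : 0 < 1 + ip v w := by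
  rw [Prod.dist_eq, max_lt_iff, dist_eq_norm, Real.dist_eq] at h
  have h1 : ‖v.1 - w.1‖ ^ 2 < 1 := by
    have := norm_nonneg (v.1 - w.1); nlinarith [h.1]
  have h2 : (v.2 - w.2) ^ 2 < 1 := by
    have := abs_nonneg (v.2 - w.2); rw [← sq_abs]; nlinarith [h.2]
  rw [sq_norm_re_im] at h1
  simp only [ns, sq_norm_re_im] at hv hw
  simp only [Complex.sub_re, Complex.sub_im] at h1
  unfold ip
  nlinarith

theorem pr_self {v : E3} (hv : ns v = 1) {ξ : C2} (h : hq ξ = ms ξ • v) (h0 : ξ ≠ 0) : pr v ξ = ξ := by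
  have hm : ms ξ ≠ 0 := (ms_pos.2 h0).ne'
  have hm' : (ms ξ : ℂ) ≠ 0 := by exact_mod_cast hm
  have h1 := congrArg Prod.fst h
  have h2 := congrArg Prod.snd h
  simp only [hq, Prod.smul_fst, Prod.smul_snd, Complex.real_smul, smul_eq_mul] at h1 h2
  have e1 : (v.1 : ℂ) * (ms ξ : ℂ) = 2 * ξ.2 * starRingEnd ℂ ξ.1 := by rw [h1]; ring
  have e1' : starRingEnd ℂ v.1 * (ms ξ : ℂ) = 2 * starRingEnd ℂ ξ.2 * ξ.1 := by
    have := congrArg (starRingEnd ℂ) e1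
    simp only [map_mul, Complex.conj_ofReal, Complex.conj_conj, Complex.conj_ofNat] at this
    exact this
  have e2 : (v.2 : ℂ) * (ms ξ : ℂ) = ξ.1 * starRingEnd ℂ ξ.1 - ξ.2 * starRingEnd ℂ ξ.2 := by
    rw [Complex.mul_conj', Complex.mul_conj', mul_comm]; exact_mod_cast h2.symm
  have e3 : (ms ξ : ℂ) = ξ.1 * starRingEnd ℂ ξ.1 + ξ.2 * starRingEnd ℂ ξ.2 := by
    rw [Complex.mul_conj', Complex.mul_conj', ms]; push_cast; ring
  unfold pr
  ext1
  · apply mul_right_cancel₀ hm'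
    simp only
    push_cast
    linear_combination (ξ.1 / 2) * e2 + (ξ.2 / 2) * e1' + (-ξ.1 / 2) * e3
  · apply mul_right_cancel₀ hm'
    simp only
    push_cast
    linear_combination (-ξ.2 / 2) * e2 + (ξ.1 / 2) * e1 + (-ξ.2 / 2) * e3

theorem pr_cont {T : Type*} [TopologicalSpace T] {v : T → E3} {ξ : T → C2} (hv : Continuous v)
    (hξ : Continuous ξ) : Continuous fun t => pr (v t) (ξ t) := by
  unfold pr; fun_prop

theorem lift_aux {T : Type*} [PseudoMetricSpace T] [CompactSpace T] {f : T × I → E3} (hf : Continuous f)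
    (h1 : ∀ p, ns (f p) = 1) {v0 : E3} {ξ0 : C2} (h0 : ∀ t, f (t, 0) = v0) (hξ : ξ0 ≠ 0)
    (hv : hq ξ0 = ms ξ0 • v0) :
    ∃ G : T × I → C2, Continuous G ∧ (∀ p, G p ≠ 0) ∧ (∀ p, hq (G p) = ms (G p) • f p) ∧
      ∀ t s, (∀ s' ≤ s, f (t, s') = v0) → G (t, s) = ξ0 := by
  obtain ⟨δ, hδ, hd⟩ := Metric.uniformContinuous_iff.1
    (CompactSpace.uniformContinuous_of_continuous hf) 1 one_pos
  obtain ⟨N, hN⟩ := exists_nat_gt (1 / δ)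
  have hN0 : (0 : ℝ) < N := lt_trans (by positivity) hN
  have hcl : ∀ i : ℕ, Continuous fun p : T × I => (p.1, p.2 ⊓ cl (i / N)) := fun i => by fun_prop
  have hstep : ∀ (i : ℕ) (t : T) (s : I),
      dist (f (t, s ⊓ cl ((i + 1 : ℕ) / N))) (f (t, s ⊓ cl (i / N))) < 1 := by
    intro i t s
    apply hd
    rw [Prod.dist_eq]
    simp only [dist_self]
    refine max_lt hδ ?_
    have hh : ∀ x : ℝ, 0 ≤ x → ((s ⊓ cl x : I) : ℝ) = min (s : ℝ) x := by
      intro x hx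
      have : ((s ⊓ cl x : I) : ℝ) = min (s : ℝ) (cl x : ℝ) := rfl
      rw [this]
      unfold cl
      rw [Set.coe_projIcc, max_eq_right (le_min zero_le_one hx), ← min_assoc,
        min_eq_left (b := 1) s.2.2]
    rw [Subtype.dist_eq, hh _ (by positivity), hh _ (by positivity), Real.dist_eq]
    refine lt_of_le_of_lt (abs_min_sub_min_le_max _ _ _ _) ?_
    simp only [sub_self, abs_zero]
    refine max_lt hδ ?_
    rw [← sub_div, Nat.cast_add, add_sub_cancel_left, Nat.cast_one, abs_of_pos (by positivity)]
    rw [div_lt_comm₀ hN0 hδ]; exact hN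
  have key : ∀ i : ℕ, ∃ G : T × I → C2, Continuous G ∧ (∀ p, G p ≠ 0) ∧
      (∀ p, hq (G p) = ms (G p) • f (p.1, p.2 ⊓ cl (i / N))) ∧
      ∀ t s, (∀ s' ≤ s, f (t, s') = v0) → G (t, s) = ξ0 := by
    intro i
    induction i with
    | zero =>
      refine ⟨fun _ => ξ0, continuous_const, fun _ => hξ, fun p => ?_, fun _ _ _ => rfl⟩
      have : p.2 ⊓ cl ((0 : ℕ) / N) = 0 := by
        rw [cl_zero (by simp)]; exact inf_eq_right.2 p.2.2.1
      rw [this, h0, hv]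
    | succ i ih =>
      obtain ⟨G, hG, hG0, hGq, hGc⟩ := ih
      refine ⟨fun p => pr (f (p.1, p.2 ⊓ cl ((i + 1 : ℕ) / N))) (G p),
        pr_cont (hf.comp (hcl _)) hG, fun p => ?_, fun p => hq_pr (h1 _) _, fun t s h => ?_⟩
      · rw [← ms_pos, ms_pr (h1 _) (hGq p)]
        have := ip_gt (h1 _) (h1 _) (hstep i p.1 p.2)
        have := ms_pos.2 (hG0 p)
        positivity
      · have := hGc t s h
        simp only
        rw [this, h _ inf_le_left]
        refine pr_self ?_ hv hξ
        rw [← h0 t, h1]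
  obtain ⟨G, hG, hG0, hGq, hGc⟩ := key N
  refine ⟨G, hG, hG0, fun p => ?_, hGc⟩
  rw [hGq]
  have : p.2 ⊓ cl (N / N) = p.2 := by
    rw [cl_one (by rw [div_self hN0.ne'])]; exact inf_eq_left.2 p.2.2.2
  rw [this]

/-- normalization -/
def nz (ξ : C2) : C2 := (((√(ms ξ))⁻¹ : ℝ) : ℂ) • ξ

theorem nz_cont {T : Type*} [TopologicalSpace T] {ξ : T → C2} (h : Continuous ξ) (h0 : ∀ t, ξ t ≠ 0) :
    Continuous fun t => nz (ξ t) := by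
  have : Continuous fun t => (√(ms (ξ t)))⁻¹ :=
    Continuous.inv₀ (by fun_prop) fun t => (Real.sqrt_pos.2 (ms_pos.2 (h0 t))).ne'
  unfold nz; fun_prop

theorem nz_ms {ξ : C2} (h : ξ ≠ 0) : ms (nz ξ) = 1 := by
  have h1 := ms_pos.2 h
  rw [nz, ms_smul, Complex.norm_real, norm_inv, inv_pow, Real.norm_eq_abs, sq_abs, Real.sq_sqrt h1.le,
    inv_mul_cancel₀ h1.ne']

theorem nz_hq {ξ : C2} {v : E3} (h : ξ ≠ 0) (hv : hq ξ = ms ξ • v) : hq (nz ξ) = v := by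
  have h1 := ms_pos.2 h
  rw [nz, hq_smul, Complex.norm_real, norm_inv, inv_pow, Real.norm_eq_abs, sq_abs, Real.sq_sqrt h1.le,
    hv, smul_smul, inv_mul_cancel₀ h1.ne', one_smul]

theorem nz_self {ξ : C2} (h : ms ξ = 1) : nz ξ = ξ := by simp [nz, h]

def vS : E3 := (0, -1)
def xS : C2 := (0, 1)
theorem xS_ms : ms xS = 1 := by simp [ms, xS]
theorem xS_ne : xS ≠ 0 := by simp [xS]
theorem xS_hq : hq xS = vS := by simp [hq, xS, vS]

theorem over_vS {ξ : C2} (h : hq ξ = vS) : ξ.1 = 0 := by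
  have h1 := congrArg Prod.fst h
  have h2 := congrArg Prod.snd h
  simp only [hq, vS, mul_eq_zero, OfNat.ofNat_ne_zero, false_or, map_eq_zero] at h1 h2
  rcases h1 with h1 | h1
  · rw [h1] at h2
    simp at h2
    have : 0 ≤ ‖ξ.1‖ ^ 2 := by positivity
    linarith
  · exact h1

theorem lift_basic {T : Type*} [PseudoMetricSpace T] [CompactSpace T] {f : T × I → E3} (hf : Continuous f)
    (h1 : ∀ p, ns (f p) = 1) (h0 : ∀ t, f (t, 0) = vS) :
    ∃ G : T × I → C2, Continuous G ∧ (∀ p, ms (G p) = 1) ∧ (∀ p, hq (G p) = f p) ∧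
      ∀ t s, (∀ s' ≤ s, f (t, s') = vS) → G (t, s) = xS := by
  obtain ⟨G, hG, hG0, hGq, hGc⟩ := lift_aux hf h1 h0 xS_ne (by rw [xS_ms, xS_hq, one_smul])
  exact ⟨fun p => nz (G p), nz_cont hG hG0, fun p => nz_ms (hG0 p), fun p => nz_hq (hG0 p) (hGq p),
    fun t s h => by simp only [hGc t s h]; exact nz_self xS_ms⟩

theorem exp_adjust {ξ : C2} (h : ms ξ = 1) {a : ℂ} (ha : a.re = 0) :
    ms (Complex.exp a • ξ) = 1 ∧ hq (Complex.exp a • ξ) = hq ξ := by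
  have : ‖Complex.exp a‖ = 1 := by rw [Complex.norm_exp, ha, Real.exp_zero]
  rw [ms_smul, hq_smul, this]; simp [h]

theorem re_zero_of {ξ : C2} (h : ms ξ = 1) (h1 : ξ.1 = 0) {a : ℂ} (he : Complex.exp a = ξ.2) :
    a.re = 0 := by
  have : ‖Complex.exp a‖ = 1 := by
    rw [he]
    simp [ms, h1] at h
    have := norm_nonneg ξ.2
    rcases h with h | h
    · exact h
    · linarith
  rw [Complex.norm_exp] at this
  exact Real.exp_eq_one_iff _ |>.1 this

theorem lift1 {f : I → E3} (hf : Continuous f) (h1 : ∀ p, ns (f p) = 1) (h0 : f 0 = vS) (h0' : f 1 = vS) :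
    ∃ G : I → C2, Continuous G ∧ (∀ p, ms (G p) = 1) ∧ (∀ p, hq (G p) = f p) ∧ G 0 = xS ∧ G 1 = xS := by
  obtain ⟨G, hG, hm, hq', hc⟩ := lift_basic (T := Unit) (f := fun p => f p.2) (by fun_prop) (fun p => h1 _)
    (fun _ => h0)
  have hG0 : G ((), 0) = xS := hc () 0 (fun s' hs => by
    have : s' = 0 := le_antisymm hs s'.2.1
    simp only [this, h0])
  have hG1 : (G ((), 1)).1 = 0 := over_vS (by rw [hq', h0'])
  have ha : (G ((), 1)).2 ≠ 0 := by
    have := hm ((), 1)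
    intro h
    simp [ms, h, hG1] at this
  set a := Complex.log (G ((), 1)).2 with hadef
  have hea : Complex.exp a = (G ((), 1)).2 := Complex.exp_log ha
  have hre : a.re = 0 := re_zero_of (hm _) hG1 hea
  have hre' : ∀ t : I, (-(((t : ℝ) : ℂ) * a)).re = 0 := fun t => by simp [hre]
  refine ⟨fun t => Complex.exp (-(((t : ℝ) : ℂ) * a)) • G ((), t), by fun_prop,
    fun p => (exp_adjust (hm _) (hre' p)).1, fun p => by rw [(exp_adjust (hm _) (hre' p)).2, hq'], ?_, ?_⟩
  · simp [hG0]
  · simp only [Set.Icc.coe_one, Complex.ofReal_one, one_mul]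
    ext1
    · simp [hG1, xS]
    · simp only [Prod.smul_snd, ← hea, smul_eq_mul, ← Complex.exp_add, xS]; simp

theorem lift2 {f : I × I → E3} (hf : Continuous f) (h1 : ∀ p, ns (f p) = 1)
    (hl0 : ∀ t, f (0, t) = vS) (hl1 : ∀ t, f (1, t) = vS) (hr0 : ∀ t, f (t, 0) = vS)
    (hr1 : ∀ t, f (t, 1) = vS) :
    (∃ m : ℤ, om f = m) ∧ (om f = 0 → ∃ G : I × I → C2, Continuous G ∧ (∀ p, ms (G p) = 1) ∧
      (∀ p, hq (G p) = f p) ∧ (∀ t, G (0, t) = xS) ∧ (∀ t, G (1, t) = xS) ∧ (∀ t, G (t, 0) = xS) ∧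
      (∀ t, G (t, 1) = xS)) := by
  obtain ⟨G, hG, hm, hq', hc⟩ := lift_basic hf h1 hr0
  have hG0 : ∀ t, G (0, t) = xS := fun t => hc 0 t (fun s' hs => hl0 _)
  have hG1 : ∀ t, G (1, t) = xS := fun t => hc 1 t (fun s' hs => hl1 _)
  have hGr : ∀ t, G (t, 0) = xS := fun t => hc t 0 (fun s' hs => by
    have : s' = 0 := le_antisymm hs s'.2.1
    simp only [this, hr0])
  have hGe : ∀ t, (G (t, 1)).1 = 0 := fun t => over_vS (by rw [hq', hr1])
  have ha : ∀ t, (G (t, 1)).2 ≠ 0 := by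
    intro t h
    have := hm (t, 1)
    simp [ms, h, hGe] at this
  have hne : ∀ p, G p ≠ 0 := fun p => ms_pos.1 (by rw [hm]; exact one_pos)
  have hom : om f = - wind (fun t => (G (t, 1)).2) := by
    have : f = hq ∘ G := by ext1 p; exact (hq' p).symm
    rw [this, om_hq hG hne]
    simp only [d1, hG0, hG1, hGr, be_add.const xS_ne]
    rw [be_2 (by fun_prop) ha]; ring
  refine ⟨?_, fun h0 => ?_⟩
  · obtain ⟨m, hm⟩ := wind_int (γ := fun t => (G (t, 1)).2) (by fun_prop) ha (by simp only [hG0, hG1])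
    exact ⟨-m, by rw [hom, hm]; simp⟩
  · obtain ⟨ℓ, hℓ, he⟩ := exists_log (fun t => (G (t, 1)).2) (by fun_prop) ha
    rw [hom, wind_eq hℓ he, neg_eq_zero, div_eq_zero_iff] at h0
    have hre : ∀ t, (ℓ t).re = 0 := fun t => re_zero_of (hm _) (hGe t) (he t)
    have h10 : ℓ 1 = ℓ 0 := by
      apply Complex.ext
      · rw [hre, hre]
      · rcases h0 with h0 | h0
        · rw [Complex.sub_im] at h0; linarith
        · have := Real.pi_pos; linarith
    have he0 : Complex.exp (ℓ 0) = 1 := by rw [he, hG0]; rfl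
    have hre' : ∀ p : I × I, (-(((p.2 : ℝ) : ℂ) * (ℓ p.1 - ℓ 0))).re = 0 := fun t => by simp [hre]
    refine ⟨fun p => Complex.exp (-(((p.2 : ℝ) : ℂ) * (ℓ p.1 - ℓ 0))) • G p, by fun_prop,
      fun p => (exp_adjust (hm _) (hre' p)).1, fun p => by rw [(exp_adjust (hm _) (hre' p)).2, hq'], ?_, ?_, ?_, ?_⟩
    · intro t; simp [hG0]
    · intro t; simp [hG1, h10]
    · intro t; simp [hGr]
    · intro t
      simp only [Set.Icc.coe_one, Complex.ofReal_one, one_mul]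
      ext1
      · simp [hGe, xS]
      · have : (G (t, 1)).2 = Complex.exp (ℓ t) := (he t).symm
        rw [Prod.smul_snd, this, smul_eq_mul, ← Complex.exp_add, neg_sub, sub_add_cancel, he0, xS]

theorem hq_surj {v : E3} (h : ns v = 1) : ∃ ξ, ms ξ = 1 ∧ hq ξ = v := by
  have key : ∀ ξ, pr v ξ ≠ 0 → ∃ ξ, ms ξ = 1 ∧ hq ξ = v := fun ξ hξ =>
    ⟨nz (pr v ξ), nz_ms hξ, nz_hq hξ (hq_pr h ξ)⟩
  by_cases h1 : pr v (1, 0) = 0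
  · refine key (0, 1) fun h2 => ?_
    have e1 := congrArg Prod.fst h1
    have e2 := congrArg Prod.snd h2
    simp [pr] at e1 e2
    norm_cast at e1 e2
    linarith
  · exact key _ h1

end Lift
end PiTwo
end

noncomputable section
namespace PiTwo
open unitInterval

/-! ### General position -/
section Cone
variable {V : Type*} [NormedAddCommGroup V] [NormedSpace ℝ V] [FiniteDimensional ℝ V]
  {N : Type*} [Fintype N]

/-- apexes whose cone over `g` meets `Z` -/
def badApex (Z : Set V) (g : (N → ℝ) → V) : Set V :=
  {a | ∃ z ∈ Z, ∃ t, ∃ τ : ℝ, a = τ • z - (τ - 1) • g t}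

def Thin (N : Type*) [Fintype N] (Z : Set V) : Prop :=
  ∀ g : (N → ℝ) → V, ContDiff ℝ 1 g → dimH (badApex Z g) < Module.finrank ℝ V

theorem Thin.union {Z Z' : Set V} (h : Thin N Z) (h' : Thin N Z') : Thin N (Z ∪ Z') := by
  intro g hg
  have : badApex (Z ∪ Z') g ⊆ badApex Z g ∪ badApex Z' g := by
    rintro a ⟨z, hz | hz, t, τ, rfl⟩
    · exact Or.inl ⟨z, hz, t, τ, rfl⟩
    · exact Or.inr ⟨z, hz, t, τ, rfl⟩
  refine lt_of_le_of_lt (dimH_mono this) ?_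
  rw [dimH_union]
  exact max_lt (h g hg) (h' g hg)

theorem Thin.mono {Z Z' : Set V} (h : Thin N Z') (hZ : Z ⊆ Z') : Thin N Z := by
  intro g hg
  refine lt_of_le_of_lt (dimH_mono ?_) (h g hg)
  rintro a ⟨z, hz, t, τ, rfl⟩
  exact ⟨z, hZ hz, t, τ, rfl⟩

theorem Thin.range {P : Type*} [NormedAddCommGroup P] [NormedSpace ℝ P] [FiniteDimensional ℝ P]
    (φ : P → V) (hφ : ContDiff ℝ 1 φ)
    (hd : Module.finrank ℝ P + Fintype.card N + 1 < Module.finrank ℝ V) : Thin N (Set.range φ) := by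
  intro g hg
  have : badApex (Set.range φ) g ⊆
      Set.range (fun p : P × (N → ℝ) × ℝ => p.2.2 • φ p.1 - (p.2.2 - 1) • g p.2.1) := by
    rintro a ⟨z, ⟨p, rfl⟩, t, τ, rfl⟩
    exact ⟨(p, t, τ), rfl⟩
  refine lt_of_le_of_lt (dimH_mono this) ?_
  refine lt_of_le_of_lt (ContDiff.dimH_range_le (by fun_prop)) ?_
  rw [Module.finrank_prod, Module.finrank_prod, Module.finrank_fintype_fun_eq_card,
    Module.finrank_self, ← add_assoc]
  exact_mod_cast hd

theorem avoid_cone {Z : Set V} {g : (N → ℝ) → V} {a : V} (ha : a ∉ badApex Z g) {t : N → ℝ}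
    (ht : g t ∉ Z) (s : ℝ) : (1 - s) • g t + s • a ∉ Z := by
  intro h
  rcases eq_or_ne s 0 with rfl | hs
  · simp at h; exact ht h
  · refine ha ⟨_, h, t, s⁻¹, ?_⟩
    rw [smul_add, smul_smul, smul_smul, inv_mul_cancel₀ hs, one_smul, mul_sub, inv_mul_cancel₀ hs, mul_one]
    module

theorem cone {Z : Set V} (hZ : IsClosed Z) (hT : Thin N Z) {x : V} {f : (N → I) → V}
    (hf : Continuous f) (hb : Based x f) (hfZ : ∀ t, f t ∉ Z) :
    ∃ y, HW (fun f => Free f ∧ ∀ t, f t ∈ Zᶜ) f (fun _ => y) := by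
  -- distance to `Z`
  obtain ⟨ε, hε, hεZ⟩ : ∃ ε > 0, ∀ t, ∀ z, dist z (f t) < ε → z ∉ Z := by
    have hK : IsCompact (Set.range f) := isCompact_range hf
    obtain ⟨ε, hε, h⟩ := hK.exists_thickening_subset_open hZ.isOpen_compl
      (by rintro _ ⟨t, rfl⟩; exact hfZ t)
    exact ⟨ε, hε, fun t z hz => h (Metric.mem_thickening_iff.2 ⟨f t, ⟨t, rfl⟩, hz⟩)⟩
  obtain ⟨g, hg, hgd, hgs⟩ := Continuous.exists_contDiff_approx (E := N → ℝ) (F := V) 1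
    (f := fun t => f (fun i => cl (t i)) - x) (ε := fun _ => ε)
    (by have : Continuous fun t : N → ℝ => fun i => cl (t i) :=
          continuous_pi fun i => cl_cont.comp (continuous_apply i)
        fun_prop) continuous_const (fun _ => hε)
  let g' : (N → ℝ) → V := fun t => x + g t
  have hg' : ContDiff ℝ 1 g' := contDiff_const.add hg
  have hgc : Continuous g' := hg'.continuous
  let c : (N → I) → (N → ℝ) := fun t i => (t i : ℝ)
  have hc : Continuous c := by fun_prop
  have hcc : ∀ t : N → I, (fun i => cl (c t i)) = t := fun t => by ext1 i; exact cl_coe _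
  have hgf : ∀ t : N → I, dist (g' (c t)) (f t) < ε := fun t => by
    have := hgd (c t)
    rw [hcc] at this
    rw [dist_eq_norm] at this ⊢
    convert this using 2
    simp only [g']; abel
  have hgb : ∀ t ∈ Cube.boundary N, g' (c t) = x := fun t ht => by
    have : g (c t) = 0 := by
      by_contra h
      have := hgs h
      simp only [Function.mem_support, hcc, hb t ht, sub_self, ne_eq, not_true] at this
    simp [g', this]
  have hdense := Dense.nonempty (dense_compl_of_dimH_lt_finrank (hT g' hg'))
  obtain ⟨a, ha⟩ := hdense
  refine ⟨a, HW.trans (g := fun t => g' (c t)) ?_ ?_⟩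
  · refine ⟨fun p => (1 - (p.1 : ℝ)) • f p.2 + (p.1 : ℝ) • g' (c p.2), by fun_prop, by simp, by simp,
      fun s => ⟨?_, ?_⟩⟩
    · intro t ht t' ht'
      simp only [hb t ht, hb t' ht', hgb t ht, hgb t' ht']
    · intro t
      refine hεZ t _ ?_
      have : (1 - (s : ℝ)) • f t + (s : ℝ) • g' (c t) - f t = (s : ℝ) • (g' (c t) - f t) := by module
      simp only [dist_eq_norm, this, norm_smul, Real.norm_eq_abs, abs_of_nonneg s.2.1]
      have h2 := hgf t
      rw [dist_eq_norm] at h2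
      exact lt_of_le_of_lt (mul_le_of_le_one_left (norm_nonneg _) s.2.2) h2
  · refine ⟨fun p => (1 - (p.1 : ℝ)) • g' (c p.2) + (p.1 : ℝ) • a, by fun_prop, by simp, by simp,
      fun s => ⟨?_, ?_⟩⟩
    · intro t ht t' ht'
      simp only [hgb t ht, hgb t' ht']
    · intro t
      exact avoid_cone ha (hεZ t _ (hgf t)) _

theorem cone_joined {Z : Set V} (hT : Thin (Fin 0) Z) {x x' : V} (hx : x ∉ Z) (hx' : x' ∉ Z) :
    JoinedIn Zᶜ x x' := by
  have h1 : ContDiff ℝ 1 (fun _ : Fin 0 → ℝ => x) := contDiff_const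
  have h2 : ContDiff ℝ 1 (fun _ : Fin 0 → ℝ => x') := contDiff_const
  have hd : dimH (badApex Z (fun _ : Fin 0 → ℝ => x) ∪ badApex Z (fun _ : Fin 0 → ℝ => x')) <
      Module.finrank ℝ V := by
    rw [dimH_union]; exact max_lt (hT _ h1) (hT _ h2)
  obtain ⟨a, ha⟩ := Dense.nonempty (dense_compl_of_dimH_lt_finrank hd)
  have key : ∀ {x}, x ∉ Z → a ∉ badApex Z (fun _ : Fin 0 → ℝ => x) → JoinedIn Zᶜ x a := by
    intro x hx ha
    refine ⟨⟨⟨fun s => (1 - (s : ℝ)) • x + (s : ℝ) • a, by fun_prop⟩, by simp, by simp⟩, fun s => ?_⟩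
    exact avoid_cone ha (t := 0) hx s
  exact (key hx fun h => ha (Or.inl h)).trans (key hx' fun h => ha (Or.inr h)).symm

end Cone

section Total
variable (m n : ℕ)

abbrev RR (m : ℕ) := EuclideanSpace ℝ (Fin (m + 1))
abbrev EW (m : ℕ) := E3 × ℝ × RR m
abbrev VV (m : ℕ) := C2 × EW m

def nn (v : E3) : ℝ := √(ns v)
@[fun_prop] theorem nn_cont : Continuous nn := by unfold nn; fun_prop
theorem nn_pos {v : E3} : 0 < nn v ↔ v ≠ 0 := by rw [nn, Real.sqrt_pos, ns_pos]
theorem ns_nonneg (v : E3) : 0 ≤ ns v := by unfold ns; positivity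
theorem nn_nonneg (v : E3) : 0 ≤ nn v := Real.sqrt_nonneg _
theorem nn_sq (v : E3) : nn v ^ 2 = ns v := Real.sq_sqrt (ns_nonneg v)
theorem ns_smul (r : ℝ) (v : E3) : ns (r • v) = r ^ 2 * ns v := by
  simp [ns, norm_smul, mul_pow]; ring
theorem nn_smul {r : ℝ} (hr : 0 ≤ r) (v : E3) : nn (r • v) = r * nn v := by
  rw [nn, ns_smul, Real.sqrt_mul (by positivity), Real.sqrt_sq hr]; rfl
theorem ns_pp {n : ℕ} (hn : 0 < n) (v : E3) : ns (pp n v) = ns v := by simp [ns, pp, pw_norm hn]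
theorem pp_smul {n : ℕ} (hn : 0 < n) {r : ℝ} (hr : 0 ≤ r) (v : E3) : pp n (r • v) = r • pp n v := by
  simp only [pp, Prod.smul_fst, Prod.smul_snd, Complex.real_smul, pw_mul, pw_real hn hr, Prod.smul_mk]

/-- bad set -/
def ZZ : Set (VV m) :=
  {p | p.1 = 0} ∪ {p | p.2 = 0} ∪
    {p | p.2.2 = 0 ∧ nn p.2.1 • hq p.1 = ms p.1 • pp n p.2.1}

variable {m n}

theorem ZZ_closed (hn : 0 < n) : IsClosed (ZZ m n) := by
  have := pp_cont hn
  refine ((isClosed_eq (by fun_prop) (by fun_prop)).union (isClosed_eq (by fun_prop) (by fun_prop))).union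
    ((isClosed_eq (by fun_prop) (by fun_prop)).inter (isClosed_eq (by fun_prop) (by fun_prop)))

theorem spherical (v : E3) : ∃ α θ : ℝ, 0 ≤ Real.sin (2 * α) ∧ v = nn v • ((Real.sin (2 * α) : ℂ) * Complex.exp (θ * Complex.I), Real.cos (2 * α)) := by
  by_cases hv : v = 0
  · exact ⟨0, 0, by simp, by simp [hv, nn, ns]⟩
  have hp := nn_pos.2 hv
  have hsq := nn_sq v
  unfold ns at hsq
  have hb : |v.2| ≤ nn v := abs_le_of_sq_le_sq (by nlinarith [norm_nonneg v.1]) hp.le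
  rw [abs_le] at hb
  refine ⟨Real.arccos (v.2 / nn v) / 2, Complex.arg v.1, by
    rw [mul_div_cancel₀ _ (two_ne_zero), Real.sin_arccos]; exact Real.sqrt_nonneg _, ?_⟩
  rw [mul_div_cancel₀ _ (two_ne_zero), Real.cos_arccos (by rw [le_div_iff₀ hp]; linarith)
    (by rw [div_le_iff₀ hp]; linarith), Real.sin_arccos]
  have : √(1 - (v.2 / nn v) ^ 2) = ‖v.1‖ / nn v := by
    rw [Real.sqrt_eq_iff_mul_self_eq _ (by positivity)]
    · field_simp; nlinarith
    · rw [div_pow, sub_nonneg, div_le_one (by positivity)]; nlinarith [norm_nonneg v.1]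
  rw [this]
  ext1
  · simp only [Prod.smul_mk, Complex.real_smul]
    have h : (nn v : ℂ) ≠ 0 := by exact_mod_cast hp.ne'
    have e := Complex.norm_mul_exp_arg_mul_I v.1
    push_cast
    rw [← mul_assoc, mul_div_cancel₀ _ h, e]
  · simp only [Prod.smul_mk, smul_eq_mul]
    rw [mul_div_cancel₀ _ hp.ne']

theorem pr_hq {η : C2} (h : ms η = 1) (ξ : C2) :
    pr (hq η) ξ = (starRingEnd ℂ η.1 * ξ.1 + starRingEnd ℂ η.2 * ξ.2) • η := by
  obtain ⟨⟨a, b⟩, ⟨a', b'⟩⟩ := η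
  obtain ⟨⟨c, d⟩, ⟨e, f⟩⟩ := ξ
  rw [hq_mk, pr_mk]
  rw [ms_mk] at h
  ext1 <;> apply Complex.ext
  · simp; linear_combination (-c/2) * h
  · simp; linear_combination (-d/2) * h
  · simp; linear_combination (-e/2) * h
  · simp; linear_combination (-f/2) * h

/-- parametrization of the bad set -/
def zpar (m n : ℕ) (p : ℂ × ℝ × ℝ × ℝ) : VV m :=
  ((p.1 * (Real.cos p.2.1 : ℂ), p.1 * ((Real.sin p.2.1 : ℂ) * Complex.exp ((n * p.2.2.1 : ℝ) * Complex.I))),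
    (((p.2.2.2 : ℂ) * ((Real.sin (2 * p.2.1) : ℂ) * Complex.exp (p.2.2.1 * Complex.I)), p.2.2.2 * Real.cos (2 * p.2.1)), 0, 0))

theorem zpar_smooth : ContDiff ℝ 1 (zpar m n) := by
  have h : ContDiff ℝ 1 Complex.ofReal := Complex.ofRealCLM.contDiff
  have h2 : ContDiff ℝ 1 Complex.exp := Complex.contDiff_exp
  unfold zpar
  fun_prop

theorem ZZ_sub (hn : 0 < n) : ZZ m n ⊆ Set.range (fun w : EW m => ((0, w) : VV m)) ∪
    Set.range (fun w : C2 => ((w, 0) : VV m)) ∪ Set.range (zpar m n) := by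
  rintro ⟨ξ, W, sr⟩ h
  by_cases h1 : ξ = 0
  · left; left; exact ⟨(W, sr), by simp [h1]⟩
  by_cases h2 : ((W, sr) : EW m) = 0
  · left; right; exact ⟨ξ, by rw [h2]⟩
  right
  rcases h with (h | h) | ⟨h, h'⟩
  · exact absurd h h1
  · exact absurd h h2
  simp only at h h'
  subst h
  have hW : W ≠ 0 := fun h => h2 (by rw [h]; rfl)
  obtain ⟨α, θ, hs, hu⟩ := spherical W
  set u : E3 := ((Real.sin (2 * α) : ℂ) * Complex.exp (θ * Complex.I), Real.cos (2 * α)) with hudef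
  have hWp := nn_pos.2 hW
  set η : C2 := ((Real.cos α : ℂ), (Real.sin α : ℂ) * Complex.exp ((n * θ : ℝ) * Complex.I)) with hη
  have hηm : ms η = 1 := by
    simp only [ms, hη, norm_mul, Complex.norm_real, Complex.norm_exp_ofReal_mul_I, mul_one, Real.norm_eq_abs, sq_abs]
    rw [add_comm]; exact Real.sin_sq_add_cos_sq α
  have hηq : hq η = pp n u := by
    have e1 : pw n (Complex.exp (θ * Complex.I)) = Complex.exp ((n * θ : ℝ) * Complex.I) := by
      rw [pw, Complex.norm_exp_ofReal_mul_I, ← Complex.exp_nat_mul]; simp; ring_nf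
    simp only [pp, hudef, pw_mul, pw_real hn hs, e1, hq, hη]
    ext1
    · simp only [Complex.conj_ofReal, Real.sin_two_mul]
      push_cast; ring
    · simp only [norm_mul, Complex.norm_real, Complex.norm_exp_ofReal_mul_I, mul_one, Real.norm_eq_abs, sq_abs]
      rw [Real.cos_two_mul, Real.sin_sq]; ring
  have hξ : hq ξ = ms ξ • hq η := by
    rw [hηq]
    have : nn W • hq ξ = nn W • (ms ξ • pp n u) := by
      rw [h']
      conv_lhs => rw [hu, pp_smul hn hWp.le]
      rw [smul_comm]
    exact smul_right_injective _ hWp.ne' this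
  have e := pr_self (by rw [ns_hq, hηm, one_pow]) hξ h1
  rw [pr_hq hηm] at e
  refine ⟨(starRingEnd ℂ η.1 * ξ.1 + starRingEnd ℂ η.2 * ξ.2, α, θ, nn W), ?_⟩
  unfold zpar
  refine Prod.ext ?_ (Prod.ext ?_ rfl)
  · exact e
  · conv_rhs => rw [hu]
    simp only [hudef, Prod.smul_mk, Complex.real_smul, smul_eq_mul]

theorem ZZ_thin {N : Type*} [Fintype N] (hN : Fintype.card N ≤ 2) (hn : 0 < n) : Thin N (ZZ m n) := by
  have hV : Module.finrank ℝ (VV m) = m + 9 := by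
    simp [Module.finrank_prod, Complex.finrank_real_complex]; ring
  refine Thin.mono (((Thin.range _ (by fun_prop) ?_).union (Thin.range _ (by fun_prop) ?_)).union
    (Thin.range _ zpar_smooth ?_)) (ZZ_sub hn)
  · rw [hV]; simp [Module.finrank_prod, Complex.finrank_real_complex]; omega
  · rw [hV]; simp [Module.finrank_prod, Complex.finrank_real_complex]; omega
  · rw [hV]; simp [Module.finrank_prod, Complex.finrank_real_complex]; omega

end Total
end PiTwo
end

noncomputable section
namespace PiTwo
open unitInterval

/-! ### Gluing two spaces along an open partial homeomorphism -/
section Glue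
variable {A B : Type} [TopologicalSpace A] [TopologicalSpace B] (e : OpenPartialHomeomorph B A)

def Glue := A ⊕ {b : B // b ∉ e.source}

def iA (a : A) : Glue e := Sum.inl a

open Classical in
def iB (b : B) : Glue e := if h : b ∈ e.source then Sum.inl (e b) else Sum.inr ⟨b, h⟩

/-- the glued topology -/
instance glueTop : TopologicalSpace (Glue e) where
  IsOpen U := IsOpen (iA e ⁻¹' U) ∧ IsOpen (iB e ⁻¹' U)
  isOpen_univ := by simp
  isOpen_inter U V hU hV := ⟨hU.1.inter hV.1, hU.2.inter hV.2⟩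
  isOpen_sUnion S hS := by
    simp only [Set.preimage_sUnion]
    exact ⟨isOpen_biUnion fun U hU => (hS U hU).1, isOpen_biUnion fun U hU => (hS U hU).2⟩

variable {e}

theorem glue_open {U : Set (Glue e)} : IsOpen U ↔ IsOpen (iA e ⁻¹' U) ∧ IsOpen (iB e ⁻¹' U) := Iff.rfl

theorem iB_eq {b : B} (h : b ∈ e.source) : iB e b = iA e (e b) := dif_pos h
theorem iB_neq {b : B} (h : b ∉ e.source) : iB e b = Sum.inr ⟨b, h⟩ := dif_neg h
theorem iB_notin {b : B} (h : b ∉ e.source) : iB e b ∉ Set.range (iA e) := by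
  rw [iB_neq h]; rintro ⟨a, ha⟩; cases ha

theorem iA_inj : Function.Injective (iA e) := Sum.inl_injective
theorem iB_inj : Function.Injective (iB e) := by
  intro b b' h
  by_cases hb : b ∈ e.source <;> by_cases hb' : b' ∈ e.source
  · rw [iB_eq hb, iB_eq hb'] at h
    exact e.injOn hb hb' (iA_inj h)
  · exact absurd ⟨_, (iB_eq hb).symm.trans h⟩ (iB_notin hb')
  · exact absurd ⟨_, (iB_eq hb').symm.trans h.symm⟩ (iB_notin hb)
  · rw [iB_neq hb, iB_neq hb'] at h
    cases h; rfl

theorem glue_cover (p : Glue e) : p ∈ Set.range (iA e) ∨ p ∈ Set.range (iB e) := by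
  rcases p with a | ⟨b, hb⟩
  · exact Or.inl ⟨a, rfl⟩
  · exact Or.inr ⟨b, iB_neq hb⟩

theorem iA_cont : Continuous (iA e) := ⟨fun U hU => hU.1⟩
theorem iB_cont : Continuous (iB e) := ⟨fun U hU => hU.2⟩

theorem iA_emb : IsOpenEmbedding (iA e) := by
  refine .of_continuous_injective_isOpenMap iA_cont iA_inj fun V hV => ⟨?_, ?_⟩
  · rwa [Set.preimage_image_eq _ iA_inj]
  · have : iB e ⁻¹' (iA e '' V) = e.source ∩ e ⁻¹' V := by
      ext b
      constructor
      · rintro ⟨a, ha, hab⟩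
        by_cases hb : b ∈ e.source
        · rw [iB_eq hb] at hab
          exact ⟨hb, by show e b ∈ V; rw [← iA_inj hab]; exact ha⟩
        · exact absurd ⟨a, hab⟩ (iB_notin hb)
      · rintro ⟨hb, h⟩
        exact ⟨_, h, (iB_eq hb).symm⟩
    rw [this]
    exact e.isOpen_inter_preimage hV

theorem iB_emb : IsOpenEmbedding (iB e) := by
  refine .of_continuous_injective_isOpenMap iB_cont iB_inj fun V hV => ⟨?_, ?_⟩
  · have : iA e ⁻¹' (iB e '' V) = e '' (e.source ∩ V) := by
      ext a
      constructor
      · rintro ⟨b, hb, hab⟩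
        by_cases hbs : b ∈ e.source
        · rw [iB_eq hbs] at hab
          exact ⟨b, ⟨hbs, hb⟩, iA_inj hab⟩
        · exact absurd ⟨a, hab.symm⟩ (iB_notin hbs)
      · rintro ⟨b, ⟨hb, h⟩, rfl⟩
        exact ⟨b, h, iB_eq hb⟩
    rw [this]
    exact e.isOpen_image_source_inter hV
  · rwa [Set.preimage_image_eq _ iB_inj]

theorem glue_t2 [T2Space A] [T2Space B] {B0 B1 : Set B} (h0 : IsOpen B0) (h01 : B0 ⊆ B1)
    (hs : ∀ b ∉ e.source, b ∈ B0) (h1 : IsClosed (e '' (e.source ∩ B1))) : T2Space (Glue e) := by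
  refine ⟨fun p q hpq => ?_⟩
  have hA : ∀ a a' : A, iA e a ≠ iA e a' → ∃ u v, IsOpen u ∧ IsOpen v ∧ iA e a ∈ u ∧ iA e a' ∈ v ∧ Disjoint u v := by
    intro a a' h
    obtain ⟨u, v, hu, hv, ha, ha', hd⟩ := t2_separation (ne_of_apply_ne _ h)
    exact ⟨_, _, iA_emb.isOpenMap u hu, iA_emb.isOpenMap v hv, ⟨_, ha, rfl⟩, ⟨_, ha', rfl⟩,
      (Set.disjoint_image_iff iA_inj).2 hd⟩
  have hB : ∀ a a' : B, iB e a ≠ iB e a' → ∃ u v, IsOpen u ∧ IsOpen v ∧ iB e a ∈ u ∧ iB e a' ∈ v ∧ Disjoint u v := by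
    intro a a' h
    obtain ⟨u, v, hu, hv, ha, ha', hd⟩ := t2_separation (ne_of_apply_ne _ h)
    exact ⟨_, _, iB_emb.isOpenMap u hu, iB_emb.isOpenMap v hv, ⟨_, ha, rfl⟩, ⟨_, ha', rfl⟩,
      (Set.disjoint_image_iff iB_inj).2 hd⟩
  have hAB : ∀ a b, b ∉ e.source → iA e a ≠ iB e b → ∃ u v, IsOpen u ∧ IsOpen v ∧ iA e a ∈ u ∧ iB e b ∈ v ∧ Disjoint u v := by
    intro a b hb h
    by_cases ha : a ∈ e.target
    · have : iA e a = iB e (e.symm a) := by rw [iB_eq (e.map_target ha), e.right_inv ha]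
      rw [this] at h ⊢
      exact hB _ _ h
    · refine ⟨_, _, iA_emb.isOpenMap _ h1.isOpen_compl, iB_emb.isOpenMap _ h0, ⟨a, ?_, rfl⟩,
        ⟨b, hs b hb, rfl⟩, ?_⟩
      · rintro ⟨b', hb', rfl⟩
        exact ha (e.map_source hb'.1)
      · rw [Set.disjoint_left]
        rintro _ ⟨a', ha', rfl⟩ ⟨b', hb', hab⟩
        by_cases hbs : b' ∈ e.source
        · rw [iB_eq hbs] at hab
          exact ha' ⟨b', ⟨hbs, h01 hb'⟩, iA_inj hab⟩
        · exact iB_notin hbs ⟨_, hab.symm⟩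
  rcases p with a | ⟨b, hb⟩ <;> rcases q with a' | ⟨b', hb'⟩
  · exact hA a a' hpq
  · have := hAB a b' hb'; rw [iB_neq hb'] at this; exact this hpq
  · have := hAB a' b hb; rw [iB_neq hb] at this
    obtain ⟨u, v, h1, h2, h3, h4, h5⟩ := this hpq.symm
    exact ⟨v, u, h2, h1, h4, h3, h5.symm⟩
  · have := hB b b'; rw [iB_neq hb, iB_neq hb'] at this; exact this hpq

theorem glue_compact {B0 B1 : Set B} (h01 : B0 ⊆ B1)
    (h1 : IsCompact B1) (h0 : IsCompact (e '' (e.source ∩ B0))ᶜ) (hs : ∀ b ∉ e.source, b ∈ B0) : CompactSpace (Glue e) := by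
  refine ⟨?_⟩
  have : (Set.univ : Set (Glue e)) = iA e '' (e '' (e.source ∩ B0))ᶜ ∪ iB e '' B1 := by
    refine (Set.eq_univ_of_forall fun p => ?_).symm
    rcases p with a | ⟨b, hb⟩
    · by_cases h : a ∈ e '' (e.source ∩ B0)
      · obtain ⟨b, hb, rfl⟩ := h
        exact Or.inr ⟨b, h01 hb.2, iB_eq hb.1⟩
      · exact Or.inl ⟨a, h, rfl⟩
    · exact Or.inr ⟨b, h01 (hs b hb), iB_neq hb⟩
  rw [this]
  exact (h0.image iA_cont).union (h1.image iB_cont)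

/-- retractions onto the pieces -/
def rA [Nonempty A] : Glue e → A := Function.invFun (iA e)
def rB [Nonempty B] : Glue e → B := Function.invFun (iB e)
theorem rA_iA [Nonempty A] (a : A) : rA (iA e a) = a := Function.leftInverse_invFun iA_inj a
theorem rB_iB [Nonempty B] (a : B) : rB (iB e a) = a := Function.leftInverse_invFun iB_inj a
theorem rA_cont [Nonempty A] : ContinuousOn (rA (e := e)) (Set.range (iA e)) := by
  rintro _ ⟨a, rfl⟩
  refine ContinuousAt.continuousWithinAt ?_
  rw [← iA_emb.continuousAt_iff]
  have : rA (e := e) ∘ iA e = id := funext rA_iA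
  rw [this]; exact continuousAt_id
theorem rB_cont [Nonempty B] : ContinuousOn (rB (e := e)) (Set.range (iB e)) := by
  rintro _ ⟨a, rfl⟩
  refine ContinuousAt.continuousWithinAt ?_
  rw [← iB_emb.continuousAt_iff]
  have : rB (e := e) ∘ iB e = id := funext rB_iB
  rw [this]; exact continuousAt_id

end Glue

/-! ### Locally Euclidean spaces -/
section LE

def LE (E X : Type*) [TopologicalSpace E] [TopologicalSpace X] : Prop :=
  ∀ x : X, ∃ e : OpenPartialHomeomorph X E, x ∈ e.source

variable {E E' X Y : Type*} [TopologicalSpace E] [TopologicalSpace E'] [TopologicalSpace X] [TopologicalSpace Y]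

theorem LE.of_charted [ChartedSpace E X] : LE E X := fun x => ⟨chartAt E x, mem_chart_source E x⟩

@[reducible] def LE.charted (h : LE E X) : ChartedSpace E X where
  atlas := Set.univ
  chartAt x := (h x).choose
  mem_chart_source x := (h x).choose_spec
  chart_mem_atlas _ := trivial

theorem LE.self : LE E E := fun x => ⟨OpenPartialHomeomorph.refl E, trivial⟩

theorem LE.model (h : LE E X) (f : E ≃ₜ E') : LE E' X := fun x => by
  obtain ⟨e, he⟩ := h x
  exact ⟨e.trans f.toOpenPartialHomeomorph, by simpa using he⟩

theorem LE.prod (h : LE E X) (h' : LE E' Y) : LE (E × E') (X × Y) := fun x => by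
  obtain ⟨e, he⟩ := h x.1
  obtain ⟨e', he'⟩ := h' x.2
  exact ⟨e.prod e', ⟨he, he'⟩⟩

theorem LE.restrict (h : LE E Y) {f : X → Y} (hf : IsOpenEmbedding f) : LE E X := fun x => by
  obtain ⟨e, he⟩ := h (f x)
  haveI : Nonempty X := ⟨x⟩
  exact ⟨(hf.toOpenPartialHomeomorph f).trans e, by simpa using he⟩

theorem LE.push (h : LE E X) {f : X → Y} (hf : IsOpenEmbedding f) (x : X) :
    ∃ e : OpenPartialHomeomorph Y E, f x ∈ e.source := by
  obtain ⟨e, he⟩ := h x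
  haveI : Nonempty X := ⟨x⟩
  refine ⟨(hf.toOpenPartialHomeomorph f).symm.trans e, ?_⟩
  have h2 : (hf.toOpenPartialHomeomorph f).symm (f x) = x :=
    (hf.toOpenPartialHomeomorph f).left_inv (by simp)
  simp [h2, he]

theorem LE.glue {A B : Type} [TopologicalSpace A] [TopologicalSpace B] {e : OpenPartialHomeomorph B A}
    (hA : LE E A) (hB : LE E B) : LE E (Glue e) := fun p => by
  rcases glue_cover p with ⟨a, rfl⟩ | ⟨b, rfl⟩
  · exact hA.push iA_emb a
  · exact hB.push iB_emb b

theorem LE.sphere {F : Type*} [NormedAddCommGroup F] [InnerProductSpace ℝ F] {k : ℕ}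
    (hk : Module.finrank ℝ F = k + 1) : LE (EuclideanSpace ℝ (Fin k)) (Metric.sphere (0 : F) 1) := by
  haveI : Fact (Module.finrank ℝ F = k + 1) := ⟨hk⟩
  exact LE.of_charted

end LE
end PiTwo
end

noncomputable section
namespace PiTwo
open unitInterval

/-! ### The pieces of the manifold -/
section Pieces

theorem nn_eq (v : E3) : nn v = ‖WithLp.toLp 2 v‖ := by
  rw [nn, WithLp.prod_norm_eq_of_L2]; simp [ns]
theorem nn_add_le (v w : E3) : nn (v + w) ≤ nn v + nn w := by
  simp only [nn_eq, WithLp.toLp_add]; exact norm_add_le _ _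
theorem nn_sub_ge (v w : E3) : |nn v - nn w| ≤ nn (v - w) := by
  simp only [nn_eq, WithLp.toLp_sub]; exact abs_norm_sub_norm_le _ _
theorem ns_zero_iff {v : E3} : ns v = 0 ↔ v = 0 := by
  have := ns_pos (ξ := v); have := ns_nonneg v
  constructor
  · intro h; by_contra h'; have := ns_pos.2 h'; linarith
  · rintro rfl; simp [ns]
theorem nn_one {v : E3} (h : ns v = 1) : nn v = 1 := by rw [nn, h, Real.sqrt_one]

/-- unit vector -/
def un (v : E3) : E3 := (nn v)⁻¹ • v
theorem un_ns {v : E3} (h : v ≠ 0) : ns (un v) = 1 := by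
  rw [un, ns_smul, ← nn_sq]; have := nn_pos.2 h; field_simp
theorem un_smul_self {v : E3} (h : v ≠ 0) : nn v • un v = v := by
  rw [un, smul_smul, mul_inv_cancel₀ (nn_pos.2 h).ne', one_smul]
theorem un_pos {r : ℝ} (hr : 0 < r) {u : E3} (hu : ns u = 1) : un (r • u) = u := by
  rw [un, nn_smul hr.le, nn_one hu, smul_smul, mul_one, inv_mul_cancel₀ hr.ne', one_smul]
theorem un_cont : ContinuousOn un {v | v ≠ 0} := by
  unfold un
  refine ContinuousOn.smul (ContinuousOn.inv₀ (by fun_prop) fun v hv => (nn_pos.2 hv).ne') (by fun_prop)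
theorem ns_ne {v : E3} (h : ns v = 1) : v ≠ 0 := by rintro rfl; simp [ns] at h
theorem nn_pp {n : ℕ} (hn : 0 < n) (v : E3) : nn (pp n v) = nn v := by rw [nn, ns_pp hn]; rfl

abbrev EN (m : ℕ) := E3 × RR m
variable {m n : ℕ}
def nw (w : EW m) : ℝ := ns w.1 + w.2.1 ^ 2 + ‖w.2.2‖ ^ 2
def nv (v : EN m) : ℝ := ns v.1 + ‖v.2‖ ^ 2
@[fun_prop] theorem nw_cont : Continuous (nw (m := m)) := by unfold nw; fun_prop
@[fun_prop] theorem nv_cont : Continuous (nv (m := m)) := by unfold nv; fun_prop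
theorem nv_smul (r : ℝ) (v : EN m) : nv (r • v) = r ^ 2 * nv v := by
  simp only [nv, Prod.smul_fst, Prod.smul_snd, ns_smul, norm_smul, mul_pow, Real.norm_eq_abs, sq_abs]; ring
theorem nv_nonneg (v : EN m) : 0 ≤ nv v := by have := ns_nonneg v.1; unfold nv; positivity
theorem nv_zero {v : EN m} (h : nv v = 0) : v = 0 := by
  unfold nv at h
  have h1 := ns_nonneg v.1
  have h2 : 0 ≤ ‖v.2‖ ^ 2 := by positivity
  refine Prod.ext (ns_zero_iff.1 (by linarith)) ?_
  have : ‖v.2‖ ^ 2 = 0 := by linarith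
  simpa using this

def QS (m : ℕ) : Set (E3 × EW m) := {p | ns p.1 = 1 ∧ nw p.2 = 1}
def AS (m n : ℕ) : Set (E3 × EW m) := {p | ns p.1 = 1 ∧ nw p.2 = 1 ∧ ¬ (p.2.2 = 0 ∧ p.1 = pp n p.2.1)}
def BS (m : ℕ) : Set (E3 × EN m) := {p | ns p.1 < 1 / 4 ∧ nv p.2 = 1}

/-- normal coordinate -/
def Nf (n : ℕ) (p : E3 × EW m) : EN m := ((1 + p.2.2.1) • p.1 - pp n (un p.2.1), p.2.2.2)

def ph0 (n : ℕ) (q : E3 × EN m) : E3 × EW m :=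
  let r := nn q.1
  let Y := pp n (un q.1) + r • q.2.1
  (un Y, √(1 - (nn Y - 1) ^ 2 - ‖r • q.2.2‖ ^ 2) • un q.1, nn Y - 1, r • q.2.2)

def ps0 (n : ℕ) (p : E3 × EW m) : E3 × EN m :=
  (√(nv (Nf n p)) • un p.2.1, (√(nv (Nf n p)))⁻¹ • Nf n p)

theorem ph_aux (hn : 0 < n) {u : E3} (hu : ns u = 1) {v : EN m} (hv : nv v < 1 / 4) :
    1 / 2 < nn (pp n u + v.1) ∧ (nn (pp n u + v.1) - 1) ^ 2 + ‖v.2‖ ^ 2 ≤ nv v ∧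
      0 < 1 - (nn (pp n u + v.1) - 1) ^ 2 - ‖v.2‖ ^ 2 := by
  have h1 := nn_sub_ge (pp n u + v.1) (pp n u)
  rw [nn_pp hn, nn_one hu, add_sub_cancel_left] at h1
  have h2 := nn_sq v.1
  have h3 : (nn (pp n u + v.1) - 1) ^ 2 ≤ ns v.1 := by
    rw [← h2, ← sq_abs]; gcongr
  have h4 : 0 ≤ ‖v.2‖ ^ 2 := by positivity
  unfold nv at *
  refine ⟨?_, by linarith, by linarith⟩
  have := abs_lt_of_sq_lt_sq (a := nn (pp n u + v.1) - 1) (b := 1 / 2) (by nlinarith) (by norm_num)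
  rw [abs_lt] at this
  linarith

theorem ph_spec (hn : 0 < n) {r : ℝ} (hr : 0 < r) {u : E3} (hu : ns u = 1) (v : EN m) :
    ph0 n (r • u, v) = (un (pp n u + r • v.1),
      √(1 - (nn (pp n u + r • v.1) - 1) ^ 2 - ‖r • v.2‖ ^ 2) • u, nn (pp n u + r • v.1) - 1, r • v.2) := by
  simp only [ph0, un_pos hr hu, nn_smul hr.le, nn_one hu, mul_one]

theorem polar {x : E3} (hx : x ≠ 0) : ∃ r : ℝ, ∃ u : E3, 0 < r ∧ ns u = 1 ∧ x = r • u ∧ ns x = r ^ 2 :=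
  ⟨nn x, un x, nn_pos.2 hx, un_ns hx, (un_smul_self hx).symm, (nn_sq x).symm⟩

theorem ph_all (hn : 0 < n) {q : E3 × EN m} (hq : q ∈ BS m) (hx : q.1 ≠ 0) :
    ph0 n q ∈ AS m n ∧ (ph0 n q).2.1 ≠ 0 ∧ nv (Nf n (ph0 n q)) = ns q.1 ∧ ps0 n (ph0 n q) = q := by
  obtain ⟨x, v⟩ := q
  obtain ⟨r, u, hr, hu, rfl, hx2⟩ := polar hx
  obtain ⟨h1, h2⟩ := hq
  simp only at h1 h2
  have hrv : nv (r • v) = r ^ 2 := by rw [nv_smul, h2, mul_one]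
  obtain ⟨k1, k2, k3⟩ := ph_aux hn hu (v := r • v) (by rw [hrv, ← hx2]; exact h1)
  simp only [Prod.smul_fst, Prod.smul_snd] at k1 k2 k3
  rw [ph_spec hn hr hu]
  set Y := pp n u + r • v.1 with hY
  have hYp : 0 < nn Y := by linarith
  have hYn := nn_pos.1 hYp
  set z := √(1 - (nn Y - 1) ^ 2 - ‖r • v.2‖ ^ 2) with hz
  have hzp : 0 < z := Real.sqrt_pos.2 k3
  have hz2 : z ^ 2 = 1 - (nn Y - 1) ^ 2 - ‖r • v.2‖ ^ 2 := Real.sq_sqrt k3.le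
  have hN : Nf n ((un Y, z • u, nn Y - 1, r • v.2) : E3 × EW m) = r • v := by
    simp only [Nf, un_pos hzp hu, add_sub_cancel, un_smul_self hYn]
    rw [hY, add_sub_cancel_left]; rfl
  refine ⟨⟨un_ns hYn, ?_, ?_⟩, ?_, ?_, ?_⟩
  · simp only [nw, ns_smul, hu, hz2]; ring
  · rintro ⟨ha, hb⟩
    simp only [Prod.mk_eq_zero] at ha hb
    rw [ha.1, ha.2] at hz2
    have : z = 1 := by
      have h : z ^ 2 = 1 := by simpa using hz2
      nlinarith
    rw [this, one_smul] at hb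
    have h3 : Nf n ((un Y, z • u, nn Y - 1, r • v.2) : E3 × EW m) = 0 := by
      simp only [Nf, un_pos hzp hu, ha.1, ha.2, hb]; simp
    rw [hN] at h3
    rw [h3] at hrv
    simp [nv, ns] at hrv
    exact (pow_pos hr 2).ne hrv
  · simp only; exact smul_ne_zero hzp.ne' (ns_ne hu)
  · rw [hN, hrv, hx2]
  · simp only [ps0, hN, hrv, un_pos hzp hu, Real.sqrt_sq hr.le]
    rw [smul_smul, inv_mul_cancel₀ hr.ne', one_smul]

theorem Nf_ge (hn : 0 < n) {p : E3 × EW m} (hp : p ∈ QS m) (hW : p.2.1 ≠ 0) :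
    1 - ns p.2.1 ≤ nv (Nf n p) ∧ 0 < 1 + p.2.2.1 := by
  obtain ⟨h1, h2⟩ := hp
  unfold nw at h2
  have hs : 0 < 1 + p.2.2.1 := by
    have := ns_pos.2 hW
    nlinarith [sq_nonneg ‖p.2.2.2‖]
  refine ⟨?_, hs⟩
  have h3 := nn_sub_ge ((1 + p.2.2.1) • p.1) (pp n (un p.2.1))
  rw [nn_pp hn, nn_one (un_ns hW), nn_smul hs.le, nn_one h1, mul_one, add_sub_cancel_left] at h3
  have h4 : p.2.2.1 ^ 2 ≤ ns ((1 + p.2.2.1) • p.1 - pp n (un p.2.1)) := by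
    rw [← nn_sq, ← sq_abs]; gcongr
  simp only [nv, Nf]
  linarith

theorem ps_all (hn : 0 < n) {p : E3 × EW m} (hp : p ∈ AS m n) (hW : p.2.1 ≠ 0) (hN : nv (Nf n p) < 1 / 4) :
    ps0 n p ∈ BS m ∧ (ps0 n p).1 ≠ 0 ∧ ns (ps0 n p).1 = nv (Nf n p) ∧ ph0 n (ps0 n p) = p := by
  obtain ⟨h1, h2, h3⟩ := hp
  have hs := (Nf_ge hn ⟨h1, h2⟩ hW).2
  have hu := un_ns hW
  have hpos : 0 < nv (Nf n p) := by
    refine lt_of_le_of_ne (nv_nonneg _) fun h => h3 ?_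
    have h0 := nv_zero h.symm
    simp only [Nf, Prod.mk_eq_zero, sub_eq_zero] at h0
    obtain ⟨h5, h6⟩ := h0
    have h7 := congrArg nn h5
    rw [nn_pp hn, nn_one hu, nn_smul hs.le, nn_one h1, mul_one] at h7
    have h8 : p.2.2.1 = 0 := by linarith
    refine ⟨Prod.ext h8 h6, ?_⟩
    rw [h8, add_zero, one_smul] at h5
    unfold nw at h2
    rw [h6, h8] at h2
    have h9 : ns p.2.1 = 1 := by simpa using h2
    rw [h5, un, nn_one h9, inv_one, one_smul]
  set r := √(nv (Nf n p)) with hr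
  have hrp : 0 < r := Real.sqrt_pos.2 hpos
  have hr2 : r ^ 2 = nv (Nf n p) := Real.sq_sqrt hpos.le
  have hns : ns (ps0 n p).1 = nv (Nf n p) := by
    simp only [ps0, ns_smul, hu, mul_one]; exact hr2
  refine ⟨⟨hns ▸ hN, ?_⟩, smul_ne_zero hrp.ne' (ns_ne hu), hns, ?_⟩
  · simp only [ps0, nv_smul, ← hr]; rw [← hr2]; field_simp
  · rw [ps0, ph_spec hn hrp hu, ← hr]
    have e1 : r • (r⁻¹ • Nf n p).1 = (1 + p.2.2.1) • p.1 - pp n (un p.2.1) := by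
      rw [Prod.smul_fst, smul_smul, mul_inv_cancel₀ hrp.ne', one_smul]; rfl
    have e2 : r • (r⁻¹ • Nf n p).2 = p.2.2.2 := by
      rw [Prod.smul_snd, smul_smul, mul_inv_cancel₀ hrp.ne', one_smul]; rfl
    rw [e1, e2, add_sub_cancel, nn_smul hs.le, nn_one h1, mul_one, add_sub_cancel_left, un_pos hs h1]
    have e3 : √(1 - p.2.2.1 ^ 2 - ‖p.2.2.2‖ ^ 2) = nn p.2.1 := by
      rw [nn]; congr 1; unfold nw at h2; linarith
    rw [e3, un_smul_self hW]

theorem Nf_cont (hn : 0 < n) : ContinuousOn (Nf n : E3 × EW m → EN m) {p | p.2.1 ≠ 0} := by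
  have h1 : ContinuousOn (fun p : E3 × EW m => pp n (un p.2.1)) {p | p.2.1 ≠ 0} :=
    (pp_cont hn).comp_continuousOn (un_cont.comp (by fun_prop) fun p hp => hp)
  unfold Nf
  exact (ContinuousOn.sub (by fun_prop) h1).prodMk (by fun_prop)

theorem ps0_cont (hn : 0 < n) : ContinuousOn (ps0 n : E3 × EW m → E3 × EN m)
    {p | p ∈ AS m n ∧ p.2.1 ≠ 0 ∧ nv (Nf n p) < 1 / 4} := by
  have h1 : ContinuousOn (Nf n : E3 × EW m → EN m) {p | p ∈ AS m n ∧ p.2.1 ≠ 0 ∧ nv (Nf n p) < 1 / 4} :=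
    (Nf_cont (m := m) hn).mono fun p hp => hp.2.1
  have h2 : ContinuousOn (fun p : E3 × EW m => un p.2.1) {p | p ∈ AS m n ∧ p.2.1 ≠ 0 ∧ nv (Nf n p) < 1 / 4} :=
    un_cont.comp (by fun_prop) fun p hp => hp.2.1
  have h3 : ContinuousOn (fun p : E3 × EW m => √(nv (Nf n p))) {p | p ∈ AS m n ∧ p.2.1 ≠ 0 ∧ nv (Nf n p) < 1 / 4} :=
    (Real.continuous_sqrt.comp nv_cont).comp_continuousOn h1
  refine (h3.smul h2).prodMk ((h3.inv₀ ?_).smul h1)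
  intro p hp h
  have := (ps_all hn hp.1 hp.2.1 hp.2.2)
  apply this.2.1
  simp only [ps0, h, zero_smul]

theorem ph0_cont (hn : 0 < n) : ContinuousOn (ph0 n : E3 × EN m → E3 × EW m) {q | q ∈ BS m ∧ q.1 ≠ 0} := by
  have h1 : ContinuousOn (fun q : E3 × EN m => un q.1) {q | q ∈ BS m ∧ q.1 ≠ 0} :=
    un_cont.comp (by fun_prop) fun p hp => hp.2
  have h2 : ContinuousOn (fun q : E3 × EN m => pp n (un q.1) + nn q.1 • q.2.1) {q | q ∈ BS m ∧ q.1 ≠ 0} :=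
    ((pp_cont hn).comp_continuousOn h1).add (by fun_prop)
  unfold ph0
  refine (un_cont.comp h2 ?_).prodMk (ContinuousOn.prodMk ?_ (ContinuousOn.prodMk ?_ ?_))
  · rintro ⟨x, v⟩ ⟨hq, hx⟩
    obtain ⟨r, u, hr, hu, rfl, hx2⟩ := polar hx
    have k := ph_aux hn hu (v := r • v) (by rw [nv_smul, hq.2, mul_one, ← hx2]; exact hq.1)
    simp only [un_pos hr hu, nn_smul hr.le, nn_one hu, mul_one]
    refine nn_pos.1 (lt_trans (by norm_num) k.1)
  · refine ContinuousOn.smul (M := ℝ) (f := fun q : E3 × EN m => √(1 - (nn (pp n (un q.1) + nn q.1 • q.2.1) - 1) ^ 2 - ‖nn q.1 • q.2.2‖ ^ 2)) ?_ h1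
    exact Real.continuous_sqrt.comp_continuousOn ((ContinuousOn.sub continuousOn_const
      (((nn_cont.comp_continuousOn h2).sub continuousOn_const).pow 2)).sub (by fun_prop))
  · exact (nn_cont.comp_continuousOn h2).sub continuousOn_const
  · fun_prop

end Pieces
end PiTwo
end

noncomputable section
namespace PiTwo
open unitInterval

section Mfd
variable {m n : ℕ}

abbrev AA (m n : ℕ) := ↥(AS m n)
abbrev BB (m : ℕ) := ↥(BS m)

theorem a0_mem : ((vS, (0, 1, 0)) : E3 × EW m) ∈ AS m n := by
  refine ⟨by simp [ns, vS], by simp [nw, ns], ?_⟩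
  rintro ⟨h, -⟩
  simp at h
instance : Nonempty (AA m n) := ⟨⟨_, a0_mem⟩⟩

def e0 (m : ℕ) : RR m := EuclideanSpace.single 0 1
theorem e0_norm : ‖e0 m‖ = 1 := by simp [e0]
theorem b0_mem : ((0, (0, e0 m)) : E3 × EN m) ∈ BS m := by
  refine ⟨by simp [ns], by simp [nv, ns, e0_norm]⟩
instance : Nonempty (BB m) := ⟨⟨_, b0_mem⟩⟩

open Classical in
def toSub {X : Type*} (S : Set X) [Nonempty S] (x : X) : S :=
  if h : x ∈ S then ⟨x, h⟩ else Classical.arbitrary S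

theorem toSub_val {X : Type*} {S : Set X} [Nonempty S] {x : X} (h : x ∈ S) : (toSub S x : X) = x := by
  simp [toSub, h]

theorem toSub_cont {X Y : Type*} [TopologicalSpace X] [TopologicalSpace Y] {S : Set X} [Nonempty S]
    {f : Y → X} {T : Set Y} (hf : ContinuousOn f T) (h : ∀ y ∈ T, f y ∈ S) :
    ContinuousOn (fun y => toSub S (f y)) T := by
  rw [IsInducing.subtypeVal.continuousOn_iff]
  exact hf.congr fun y hy => toSub_val (h y hy)

def ee (m : ℕ) {n : ℕ} (hn : 0 < n) : OpenPartialHomeomorph (BB m) (AA m n) where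
  toFun b := toSub (AS m n) (ph0 n b)
  invFun a := toSub (BS m) (ps0 n a)
  source := {b | b.1.1 ≠ 0}
  target := {a | a.1.2.1 ≠ 0 ∧ nv (Nf n a.1) < 1 / 4}
  map_source' b hb := by
    obtain ⟨h1, h2, h3, h4⟩ := ph_all hn b.2 hb
    simp only [Set.mem_setOf_eq, toSub_val h1]
    exact ⟨h2, h3 ▸ b.2.1⟩
  map_target' a ha := by
    obtain ⟨h1, h2, h3, h4⟩ := ps_all hn a.2 ha.1 ha.2
    simp only [Set.mem_setOf_eq, toSub_val h1]
    exact h2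
  left_inv' b hb := by
    obtain ⟨h1, h2, h3, h4⟩ := ph_all hn b.2 hb
    apply Subtype.ext
    simp only [toSub_val h1]
    rw [h4, toSub_val b.2]
  right_inv' a ha := by
    obtain ⟨h1, h2, h3, h4⟩ := ps_all hn a.2 ha.1 ha.2
    apply Subtype.ext
    simp only [toSub_val h1]
    rw [h4, toSub_val a.2]
  open_source := isOpen_ne_fun (by fun_prop) (by fun_prop)
  open_target := by
    have h : ContinuousOn (fun a : AA m n => nv (Nf n a.1)) {a | a.1.2.1 ≠ 0} :=
      nv_cont.comp_continuousOn ((Nf_cont hn).comp (by fun_prop) fun a ha => ha)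
    exact h.isOpen_inter_preimage (isOpen_ne_fun (by fun_prop) (by fun_prop)) (isOpen_Iio (a := (1 / 4 : ℝ)))
  continuousOn_toFun := toSub_cont ((ph0_cont hn).comp (by fun_prop) fun b hb => ⟨b.2, hb⟩)
    fun b hb => (ph_all hn b.2 hb).1
  continuousOn_invFun := toSub_cont ((ps0_cont hn).comp (by fun_prop) fun b hb => ⟨b.2, hb⟩)
    fun a ha => (ps_all hn a.2 ha.1 ha.2).1

theorem ee_val (hn : 0 < n) {b : BB m} (hb : b.1.1 ≠ 0) : ((ee m hn b : AA m n) : E3 × EW m) = ph0 n b :=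
  toSub_val (ph_all hn b.2 hb).1

theorem ee_src (hn : 0 < n) (b : BB m) : b ∈ (ee m hn).source ↔ b.1.1 ≠ 0 := Iff.rfl

theorem ee_image (hn : 0 < n) (P : ℝ → Prop) (hP : ∀ r, P r → r < 1 / 4) :
    ee m hn '' ((ee m hn).source ∩ {b | P (ns b.1.1)}) = {a | a.1.2.1 ≠ 0 ∧ P (nv (Nf n a.1))} := by
  ext a
  constructor
  · rintro ⟨b, ⟨hb, h⟩, rfl⟩
    have := ph_all hn b.2 hb
    refine ⟨?_, ?_⟩
    · rw [ee_val hn hb]; exact this.2.1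
    · rw [ee_val hn hb, this.2.2.1]; exact h
  · rintro ⟨h1, h2⟩
    have ht : a ∈ (ee m hn).target := ⟨h1, hP _ h2⟩
    refine ⟨(ee m hn).symm a, ⟨(ee m hn).map_target ht, ?_⟩, (ee m hn).right_inv ht⟩
    have := ps_all hn a.2 h1 (hP _ h2)
    have e : (((ee m hn).symm a : BB m) : E3 × EN m) = ps0 n a := toSub_val this.1
    show P _
    rw [e, this.2.2.1]; exact h2

abbrev MM (m : ℕ) {n : ℕ} (hn : 0 < n) := Glue (ee m hn)

theorem E3_bdd {R : ℝ} : Bornology.IsBounded {v : E3 | ns v ≤ R} := by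
  rw [isBounded_iff_forall_norm_le]
  refine ⟨√R, fun v hv => ?_⟩
  have hv' : ‖v.1‖ ^ 2 + v.2 ^ 2 ≤ R := hv
  rw [Prod.norm_def, max_le_iff]
  refine ⟨Real.le_sqrt_of_sq_le (by nlinarith), Real.le_sqrt_of_sq_le ?_⟩
  rw [Real.norm_eq_abs, sq_abs]; nlinarith [sq_nonneg ‖v.1‖]

theorem nv_compact : IsCompact {v : EN m | nv v = 1} := by
  refine Metric.isCompact_of_isClosed_isBounded (isClosed_eq (by fun_prop) (by fun_prop)) ?_
  refine (E3_bdd (R := 1).prod (Metric.isBounded_closedBall (x := (0 : RR m)) (r := 1))).subset ?_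
  intro v hv
  have hv' : ns v.1 + ‖v.2‖ ^ 2 = 1 := hv
  have := ns_nonneg v.1
  refine ⟨?_, ?_⟩
  · show ns v.1 ≤ 1; nlinarith [sq_nonneg ‖v.2‖]
  · rw [mem_closedBall_zero_iff]; nlinarith [norm_nonneg v.2]

theorem QS_compact : IsCompact (QS m) := by
  refine Metric.isCompact_of_isClosed_isBounded
    ((isClosed_eq (by fun_prop) (by fun_prop)).inter (isClosed_eq (by fun_prop) (by fun_prop))) ?_
  refine (E3_bdd (R := 1).prod (E3_bdd (R := 1).prod ((Metric.isBounded_closedBall (x := (0 : ℝ)) (r := 1)).prod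
    (Metric.isBounded_closedBall (x := (0 : RR m)) (r := 1))))).subset ?_
  rintro ⟨y, W, s, r⟩ ⟨h1, h2⟩
  have h2' : ns W + s ^ 2 + ‖r‖ ^ 2 = 1 := h2
  have := ns_nonneg W
  refine ⟨le_of_eq h1, ?_, ?_, ?_⟩
  · show ns W ≤ 1; nlinarith [sq_nonneg ‖r‖, sq_nonneg s]
  · rw [mem_closedBall_zero_iff, Real.norm_eq_abs]; rw [abs_le]; constructor <;> nlinarith [sq_nonneg ‖r‖]
  · rw [mem_closedBall_zero_iff]; nlinarith [norm_nonneg r, sq_nonneg s]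

theorem MM_t2 (hn : 0 < n) : T2Space (MM m hn) := by
  refine glue_t2 (B0 := {b | ns b.1.1 < 1 / 16}) (B1 := {b | ns b.1.1 ≤ 1 / 16})
    (isOpen_lt (by fun_prop) (by fun_prop)) (fun b hb => by simp only [Set.mem_setOf_eq] at hb ⊢; exact hb.le) ?_ ?_
  · intro b hb
    rw [ee_src, not_not] at hb
    show ns b.1.1 < 1 / 16
    rw [hb]; simp [ns]
  · rw [ee_image hn (fun r => r ≤ 1 / 16) (fun r hr => by linarith)]
    have h : ContinuousOn (fun a : AA m n => nv (Nf n a.1)) {a | 1 / 2 ≤ ns a.1.2.1} :=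
      nv_cont.comp_continuousOn ((Nf_cont hn).comp (by fun_prop) fun a ha => by
        intro h0
        have ha' : 1 / 2 ≤ ns a.1.2.1 := ha
        rw [h0] at ha'; simp [ns] at ha'; linarith)
    have := h.preimage_isClosed_of_isClosed (isClosed_le (by fun_prop) (by fun_prop)) (isClosed_Iic (a := (1 / 16 : ℝ)))
    convert this using 1
    ext a
    constructor
    · rintro ⟨h1, h2⟩
      refine ⟨?_, h2⟩
      have := (Nf_ge hn ⟨a.2.1, a.2.2.1⟩ h1).1
      show 1 / 2 ≤ ns a.1.2.1
      linarith
    · rintro ⟨h1, h2⟩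
      refine ⟨fun h0 => ?_, h2⟩
      have ha' : 1 / 2 ≤ ns a.1.2.1 := h1
      rw [h0] at ha'; simp [ns] at ha'; linarith

theorem MM_compact (hn : 0 < n) : CompactSpace (MM m hn) := by
  refine glue_compact (B0 := {b | ns b.1.1 < 1 / 16}) (B1 := {b | ns b.1.1 ≤ 1 / 16})
    (fun b hb => by simp only [Set.mem_setOf_eq] at hb ⊢; exact hb.le) ?_ ?_ ?_
  · rw [IsEmbedding.subtypeVal.isCompact_iff]
    have : Subtype.val '' {b : BB m | ns b.1.1 ≤ 1 / 16} = {v : E3 | ns v ≤ 1 / 16} ×ˢ {v : EN m | nv v = 1} := by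
      ext q
      constructor
      · rintro ⟨b, hb, rfl⟩
        exact ⟨hb, b.2.2⟩
      · rintro ⟨h1, h2⟩
        have h1' : ns q.1 ≤ 1 / 16 := h1
        exact ⟨⟨q, by linarith, h2⟩, h1, rfl⟩
    rw [this]
    exact (Metric.isCompact_of_isClosed_isBounded (isClosed_le (by fun_prop) (by fun_prop)) E3_bdd).prod nv_compact
  · rw [ee_image hn (fun r => r < 1 / 16) (fun r hr => by linarith), IsEmbedding.subtypeVal.isCompact_iff]
    have : Subtype.val '' {a : AA m n | a.1.2.1 ≠ 0 ∧ nv (Nf n a.1) < 1 / 16}ᶜ =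
        QS m \ {a | a.2.1 ≠ 0 ∧ nv (Nf n a) < 1 / 16} := by
      ext q
      constructor
      · rintro ⟨b, hb, rfl⟩
        exact ⟨⟨b.2.1, b.2.2.1⟩, hb⟩
      · rintro ⟨⟨h1, h2⟩, h3⟩
        refine ⟨⟨q, h1, h2, ?_⟩, h3, rfl⟩
        rintro ⟨h4, h5⟩
        apply h3
        have h6 : ns q.2.1 = 1 := by simpa [nw, h4] using h2
        refine ⟨ns_ne h6, ?_⟩
        have : Nf n q = 0 := by
          simp [Nf, h4, un, nn_one h6]; rw [h5, sub_self]
        rw [this]; simp [nv, ns]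
    rw [this]
    refine QS_compact.diff ?_
    exact (nv_cont.comp_continuousOn (Nf_cont hn)).isOpen_inter_preimage
      (isOpen_ne_fun (by fun_prop) (by fun_prop)) (isOpen_Iio (a := (1 / 16 : ℝ)))
  · intro b hb
    rw [ee_src, not_not] at hb
    show ns b.1.1 < 1 / 16
    rw [hb]; simp [ns]

/-! Charts -/
theorem LE.quad {F G : Type} [TopologicalSpace F] [NormedAddCommGroup G] [InnerProductSpace ℝ G] {k : ℕ}
    (hk : Module.finrank ℝ G = k + 1) (L : F ≃ₜ G) (q : F → ℝ) (hq : ∀ v, q v = ‖L v‖ ^ 2) :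
    LE (EuclideanSpace ℝ (Fin k)) {v : F // q v = 1} := by
  have h := LE.sphere hk
  refine h.restrict (f := L.subtype (p := fun v => q v = 1) (q := fun v => v ∈ Metric.sphere (0 : G) 1) ?_)
    (Homeomorph.isOpenEmbedding _)
  intro v
  rw [hq, mem_sphere_zero_iff_norm]
  constructor
  · intro h; nlinarith [norm_nonneg (L v)]
  · intro h; rw [h]; norm_num

def lpH (α β : Type) [NormedAddCommGroup α] [NormedAddCommGroup β] : α × β ≃ₜ WithLp 2 (α × β) :=
  (WithLp.homeomorphProd 2 α β).symm

theorem lpH_norm {α β : Type} [NormedAddCommGroup α] [NormedAddCommGroup β] (v : α × β) :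
    ‖lpH α β v‖ ^ 2 = ‖v.1‖ ^ 2 + ‖v.2‖ ^ 2 := WithLp.prod_norm_sq_eq_of_L2 _

theorem lp_finrank {α β : Type} [NormedAddCommGroup α] [NormedAddCommGroup β] [NormedSpace ℝ α] [NormedSpace ℝ β]
    [FiniteDimensional ℝ α] [FiniteDimensional ℝ β] :
    Module.finrank ℝ (WithLp 2 (α × β)) = Module.finrank ℝ α + Module.finrank ℝ β := by
  rw [(WithLp.linearEquiv 2 ℝ (α × β)).finrank_eq, Module.finrank_prod]

theorem LE_S2 : LE (EuclideanSpace ℝ (Fin 2)) {v : E3 // ns v = 1} := by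
  refine LE.quad (G := WithLp 2 (ℂ × ℝ)) ?_ (lpH ℂ ℝ) ns ?_
  · rw [lp_finrank]; simp [Complex.finrank_real_complex]
  · intro v; rw [lpH_norm]; simp [ns]

theorem LE_SV : LE (EuclideanSpace ℝ (Fin (m + 3))) {v : EN m // nv v = 1} := by
  refine LE.quad (G := WithLp 2 (WithLp 2 (ℂ × ℝ) × RR m)) ?_
    (((lpH ℂ ℝ).prodCongr (Homeomorph.refl _)).trans (lpH _ _)) nv ?_
  · rw [lp_finrank, lp_finrank]; simp [Complex.finrank_real_complex]; omega
  · intro v; simp [lpH_norm, nv, ns]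

theorem LE_SW : LE (EuclideanSpace ℝ (Fin (m + 4))) {v : EW m // nw v = 1} := by
  refine LE.quad (G := WithLp 2 (WithLp 2 (ℂ × ℝ) × WithLp 2 (ℝ × RR m))) ?_
    (((lpH ℂ ℝ).prodCongr (lpH _ _)).trans (lpH _ _)) nw ?_
  · rw [lp_finrank, lp_finrank, lp_finrank]; simp [Complex.finrank_real_complex]; omega
  · intro v; simp [lpH_norm, nw, ns]; ring

def finH {E F : Type} [NormedAddCommGroup E] [NormedSpace ℝ E] [FiniteDimensional ℝ E]
    [NormedAddCommGroup F] [NormedSpace ℝ F] [FiniteDimensional ℝ F]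
    (h : Module.finrank ℝ E = Module.finrank ℝ F) : E ≃ₜ F :=
  (ContinuousLinearEquiv.ofFinrankEq h).toHomeomorph

theorem LE_AA (hn : 0 < n) : LE (EuclideanSpace ℝ (Fin (m + 6))) (AA m n) := by
  have h := (LE_S2.prod (LE_SW (m := m))).model (E' := EuclideanSpace ℝ (Fin (m + 6)))
    (finH (by simp [Module.finrank_prod]; ring))
  refine h.restrict (f := fun a : AA m n => (⟨a.1.1, a.2.1⟩, ⟨a.1.2, a.2.2.1⟩)) ⟨?_, ?_⟩
  · exact IsEmbedding.of_comp (g := fun p : {v : E3 // ns v = 1} × {v : EW m // nw v = 1} => (p.1.1, p.2.1))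
      (by fun_prop) (by fun_prop) IsEmbedding.subtypeVal
  · have := pp_cont hn
    have hc : IsClosed {p : {v : E3 // ns v = 1} × {v : EW m // nw v = 1} | p.2.1.2 = 0 ∧ p.1.1 = pp n p.2.1.1} :=
      (isClosed_eq (by fun_prop) (by fun_prop)).inter (isClosed_eq (by fun_prop) (by fun_prop))
    convert hc.isOpen_compl using 1
    ext p
    constructor
    · rintro ⟨a, rfl⟩; exact a.2.2.2
    · intro hp; exact ⟨⟨(p.1.1, p.2.1), p.1.2, p.2.2, hp⟩, rfl⟩

theorem LE_BB : LE (EuclideanSpace ℝ (Fin (m + 6))) (BB m) := by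
  have h := ((LE.self (E := E3)).prod (LE_SV (m := m))).model (E' := EuclideanSpace ℝ (Fin (m + 6)))
    (finH (by simp [Module.finrank_prod, Complex.finrank_real_complex]; ring))
  refine h.restrict (f := fun a : BB m => (a.1.1, ⟨a.1.2, a.2.2⟩)) ⟨?_, ?_⟩
  · exact IsEmbedding.of_comp (g := fun p : E3 × {v : EN m // nv v = 1} => (p.1, p.2.1))
      (by fun_prop) (by fun_prop) IsEmbedding.subtypeVal
  · have hc : IsOpen {p : E3 × {v : EN m // nv v = 1} | ns p.1 < 1 / 4} := isOpen_lt (by fun_prop) (by fun_prop)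
    convert hc using 1
    ext p
    constructor
    · rintro ⟨a, rfl⟩; exact a.2.1
    · intro hp; exact ⟨⟨(p.1, p.2.1), hp, p.2.2⟩, rfl⟩

theorem LE_MM (hn : 0 < n) : LE (EuclideanSpace ℝ (Fin (m + 6))) (MM m hn) := LE.glue (LE_AA hn) LE_BB

end Mfd
end PiTwo
end

noncomputable section
namespace PiTwo
open unitInterval

/-! ### The cocycle on the manifold -/
section Coc
variable {m n : ℕ}

theorem Add1.plus {X D : Type*} [TopologicalSpace X] [AddCommGroup D] {U : Set X}
    {c c' : (I → X) → D} (h : Add1 U c) (h' : Add1 U c') : Add1 U (fun s => c s + c' s) := by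
  intro s hs hU
  simp only [h s hs hU, h' s hs hU]
  abel

theorem homotopy_formula {X Y D : Type*} [TopologicalSpace X] [TopologicalSpace Y] [AddCommGroup D]
    {U : Set Y} {C : Set X} {c : (I × I → Y) → D} (ha : Add2 U c) (hc : Closed2 U c) {h : I × X → Y}
    (hh : ContinuousOn h (Set.univ ×ˢ C)) (hU : ∀ t, ∀ x ∈ C, h (t, x) ∈ U) :
    Add1 C (fun γ => c (fun t => h (t.1, γ t.2))) ∧ ∀ s : I × I → X, Continuous s → (∀ t, s t ∈ C) →
      c (fun t => h (1, s t)) = c (fun t => h (0, s t)) + d1 (fun γ : I → X => c (fun t => h (t.1, γ t.2))) s := by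
  constructor
  · intro γ hγ hC
    exact (ha (fun t => h (t.1, γ t.2)) (hh.comp_continuous (by fun_prop) fun t => ⟨trivial, hC _⟩)
      fun t => hU _ _ (hC _)).2
  · intro s hs hC
    have := hc (fun t => h (t.1, s (t.2.1, t.2.2))) (hh.comp_continuous (by fun_prop) fun t => ⟨trivial, hC _⟩)
      fun t => hU _ _ (hC _)
    simp only [d2, d1, Prod.mk.eta] at this ⊢
    rw [← sub_eq_zero, ← this]
    abel

/-- straightening homotopy -/
def hB (n : ℕ) (q : I × BB m) : E3 := un (pp n (un q.2.1.1) + ((q.1 : ℝ) * nn q.2.1.1) • q.2.1.2.1)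

theorem hB_ne (hn : 0 < n) (t : I) (b : BB m) (hb : b.1.1 ≠ 0) :
    pp n (un b.1.1) + ((t : ℝ) * nn b.1.1) • b.1.2.1 ≠ 0 := by
  have hu := un_ns hb
  have k := ph_aux hn hu (v := ((t : ℝ) * nn b.1.1) • b.1.2) (by
    rw [nv_smul, b.2.2, mul_one, mul_pow, nn_sq]
    have h1 := b.2.1
    have h2 := ns_nonneg b.1.1
    have h3 : (t : ℝ) ^ 2 ≤ 1 := pow_le_one₀ t.2.1 t.2.2
    nlinarith)
  exact nn_pos.1 (lt_trans (by norm_num) k.1)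

theorem hB_cont (hn : 0 < n) : ContinuousOn (hB (m := m) n) (Set.univ ×ˢ {b | b.1.1 ≠ 0}) := by
  have h1 : ContinuousOn (fun q : I × BB m => un q.2.1.1) (Set.univ ×ˢ {b | b.1.1 ≠ 0}) :=
    un_cont.comp (by fun_prop) fun q hq => hq.2
  unfold hB
  refine un_cont.comp (((pp_cont hn).comp_continuousOn h1).add (by fun_prop)) ?_
  rintro ⟨t, b⟩ ⟨-, hb⟩
  exact hB_ne hn t b hb

theorem exists_bB (m : ℕ) (hn : 0 < n) : ∃ b : (I → BB m) → Circ, Add1 Set.univ b ∧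
    ∀ s : I × I → BB m, Continuous s → (∀ t, (s t).1.1 ≠ 0) → omn n (fun t => (ph0 n (s t).1).1) = d1 b s := by
  obtain ⟨h1, h2⟩ := homotopy_formula (omn_add (n := n)) omn_closed (hB_cont (m := m) hn)
    (fun t b hb => ns_ne (un_ns (hB_ne hn t b hb)))
  have h3 : Add1 {b : BB m | b.1.1 ≠ 0} (fun γ => bp hn ((fun b : BB m => un b.1.1) ∘ γ)) :=
    (bp_add hn).pull (un_cont.comp (by fun_prop) fun b hb => hb) fun b hb => ns_ne (un_ns hb)
  obtain ⟨b, hb, hbe⟩ := ext1 (h3.plus h1)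
  refine ⟨b, hb, fun s hs h0 => ?_⟩
  have e := h2 s hs h0
  have e1 : (fun t => hB n (1, s t)) = fun t => (ph0 n (s t).1).1 := by
    ext1 t; simp [hB, ph0]
  have e0 : (fun t => hB n (0, s t)) = pp n ∘ fun t => un (s t).1.1 := by
    ext1 t
    simp only [hB, Set.Icc.coe_zero, zero_mul, zero_smul, add_zero, Function.comp]
    rw [un, nn_pp hn, nn_one (un_ns (h0 t)), inv_one, one_smul]
  rw [e1, e0, omn_pp hn (s := fun t => un (s t).1.1) (un_cont.comp_continuous (by fun_prop) fun t => h0 t)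
    (fun t => ns_ne (un_ns (h0 t)))] at e
  rw [e]
  simp only [d1]
  rw [hbe _ (by fun_prop) (fun t => h0 _), hbe _ (by fun_prop) (fun t => h0 _), hbe _ (by fun_prop) (fun t => h0 _),
    hbe _ (by fun_prop) (fun t => h0 _)]
  simp only [Function.comp_def]
  abel

theorem exists_c (m : ℕ) (hn : 0 < n) : ∃ c : (I × I → MM m hn) → Circ, Add2 Set.univ c ∧ Closed2 Set.univ c ∧
    ∀ s, Continuous s → (∀ t, s t ∈ Set.range (iA (ee m hn))) → c s = omn n (fun t => (rA (s t)).1.1) := by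
  obtain ⟨b, hb, hbs⟩ := exists_bB m hn
  have hy : ContinuousOn (fun p : MM m hn => (rA p).1.1) (Set.range (iA (ee m hn))) := by
    have := rA_cont (e := ee m hn)
    fun_prop
  have hyW : ∀ p ∈ Set.range (iA (ee m hn)), (rA p).1.1 ∈ W3 := fun p _ => ns_ne (rA p).2.1
  have cA := omn_add (n := n).pull hy hyW
  have cAc := omn_closed (n := n).pull hy hyW
  have cB := (hb.pull (rB_cont (e := ee m hn)) fun _ _ => trivial).d1_add2
  obtain ⟨c, hc, h1, h2⟩ := glue2 (W := Set.univ) iA_emb.isOpen_range iB_emb.isOpen_range (fun p _ => glue_cover p) cA cB (by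
    intro s hs hA hB
    have hsrc : ∀ t, (rB (s t)).1.1 ≠ 0 := by
      intro t
      obtain ⟨b, hb⟩ := hB t
      rw [← ee_src hn]
      by_contra h
      rw [← hb, rB_iB] at h
      exact iB_notin h (hb ▸ hA t)
    have := hbs (fun t => rB (s t)) (rB_cont.comp_continuous hs hB) hsrc
    simp only [d1] at this ⊢
    simp only [Function.comp_def]
    rw [← this]
    congr 1
    ext1 t
    obtain ⟨b, hb⟩ := hB t
    have hs' := hsrc t
    rw [← hb, rB_iB] at hs' ⊢
    rw [iB_eq ((ee_src hn b).2 hs'), rA_iA, ee_val hn hs'])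
  refine ⟨c, hc, closed_glue iA_emb.isOpen_range iB_emb.isOpen_range (fun p _ => glue_cover p) hc ?_ ?_, h1⟩
  · intro k hk hU
    have := cAc k hk hU
    simp only [d2] at this ⊢
    rw [← this, h1 _ (by fun_prop) fun t => hU _, h1 _ (by fun_prop) fun t => hU _, h1 _ (by fun_prop) fun t => hU _,
      h1 _ (by fun_prop) fun t => hU _, h1 _ (by fun_prop) fun t => hU _, h1 _ (by fun_prop) fun t => hU _]
  · intro k hk hU
    have := d2_d1 (fun γ => b (rB ∘ γ)) k
    simp only [d2] at this ⊢
    rw [← this, h2 _ (by fun_prop) fun t => hU _, h2 _ (by fun_prop) fun t => hU _, h2 _ (by fun_prop) fun t => hU _,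
      h2 _ (by fun_prop) fun t => hU _, h2 _ (by fun_prop) fun t => hU _, h2 _ (by fun_prop) fun t => hU _]

end Coc
end PiTwo
end

noncomputable section
namespace PiTwo
open unitInterval

/-! ### Contracting inside `A` -/
section NullA
variable {m n : ℕ}

theorem nw_pos {w : EW m} (h : w ≠ 0) : 0 < nw w := by
  by_contra h0
  apply h
  have h1 := ns_nonneg w.1
  have h2 := sq_nonneg w.2.1
  have h3 := sq_nonneg ‖w.2.2‖
  unfold nw at h0
  have e1 : ns w.1 = 0 := by linarith
  have e2 : w.2.1 ^ 2 = 0 := by linarith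
  have e3 : ‖w.2.2‖ ^ 2 = 0 := by linarith
  refine Prod.ext (ns_zero_iff.1 e1) (Prod.ext (by simpa using e2) (by simpa using e3))

theorem nw_smul (r : ℝ) (w : EW m) : nw (r • w) = r ^ 2 * nw w := by
  simp only [nw, Prod.smul_fst, Prod.smul_snd, ns_smul, norm_smul, mul_pow, Real.norm_eq_abs, sq_abs,
    smul_eq_mul]; ring

def pa0 (p : VV m) : E3 × EW m := ((ms p.1)⁻¹ • hq p.1, (√(nw p.2))⁻¹ • p.2)

theorem pa0_mem (hn : 0 < n) {p : VV m} (h : p ∈ (ZZ m n)ᶜ) : pa0 p ∈ AS m n := by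
  simp only [ZZ, Set.mem_compl_iff, Set.mem_union, Set.mem_setOf_eq, not_or] at h
  obtain ⟨⟨h1, h2⟩, h3⟩ := h
  have hm := ms_pos.2 h1
  have hw := nw_pos h2
  have hs : 0 < √(nw p.2) := Real.sqrt_pos.2 hw
  refine ⟨?_, ?_, ?_⟩
  · simp only [pa0, ns_smul, ns_hq]; field_simp
  · simp only [pa0, nw_smul]
    rw [inv_pow, Real.sq_sqrt hw.le]; field_simp
  · rintro ⟨h4, h5⟩
    apply h3
    have h4' : p.2.2 = 0 := by
      have : (√(nw p.2))⁻¹ • p.2.2 = 0 := h4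
      exact (smul_eq_zero.1 this).resolve_left (by positivity)
    refine ⟨h4', ?_⟩
    have hnn : √(nw p.2) = nn p.2.1 := by simp [nw, nn, h4']
    have h5' : (ms p.1)⁻¹ • hq p.1 = pp n ((√(nw p.2))⁻¹ • p.2.1) := h5
    rw [pp_smul hn (by positivity), hnn] at h5'
    rw [hnn] at hs
    have := congrArg (fun v => (ms p.1 * nn p.2.1) • v) h5'
    simp only [smul_smul] at this
    rw [mul_right_comm, mul_inv_cancel₀ hm.ne', one_mul, mul_assoc, mul_inv_cancel₀ hs.ne', mul_one] at this
    exact this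

def pA (m n : ℕ) (p : VV m) : AA m n := toSub (AS m n) (pa0 p)

theorem pA_cont (hn : 0 < n) : ContinuousOn (pA m n) (ZZ m n)ᶜ := by
  refine toSub_cont ?_ fun y hy => pa0_mem hn hy
  have h : ∀ p ∈ (ZZ m n)ᶜ, ms p.1 ≠ 0 ∧ √(nw p.2) ≠ 0 := by
    intro p h
    simp only [ZZ, Set.mem_compl_iff, Set.mem_union, Set.mem_setOf_eq, not_or] at h
    exact ⟨(ms_pos.2 h.1.1).ne', (Real.sqrt_pos.2 (nw_pos h.1.2)).ne'⟩
  refine ContinuousOn.prodMk ?_ ?_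
  · exact ContinuousOn.smul (M := ℝ) (ContinuousOn.inv₀ (by fun_prop) fun p hp => (h p hp).1) (by fun_prop)
  · exact ContinuousOn.smul (M := ℝ) (ContinuousOn.inv₀ (by fun_prop) fun p hp => (h p hp).2) (by fun_prop)

theorem lift_notin (hn : 0 < n) {ξ : C2} {a : AA m n} (h : ms ξ = 1) (h' : hq ξ = a.1.1) :
    ((ξ, a.1.2) : VV m) ∈ (ZZ m n)ᶜ ∧ pA m n (ξ, a.1.2) = a := by
  obtain ⟨⟨y, W, sr⟩, h1, h2, h3⟩ := a
  simp only at h' h1 h2 h3 ⊢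
  have e : pa0 ((ξ, W, sr) : VV m) = (y, W, sr) := by
    simp only [pa0, h, h2, h', Real.sqrt_one, inv_one, one_smul]
  refine ⟨?_, ?_⟩
  · rintro ((h4 | h4) | ⟨h4, h5⟩)
    · simp only [Set.mem_setOf_eq] at h4; rw [h4] at h; simp [ms] at h
    · simp only [Set.mem_setOf_eq] at h4; rw [h4] at h2; simp [nw, ns] at h2
    · simp only at h4 h5
      have : nn W = 1 := by
        rw [nn]; rw [h4] at h2; simp [nw] at h2; rw [h2, Real.sqrt_one]
      rw [this, h, one_smul, one_smul, h'] at h5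
      exact h3 ⟨h4, h5⟩
  · apply Subtype.ext
    rw [pA, e, toSub_val]
    exact ⟨h1, h2, h3⟩

theorem A_null {N : Type*} [Fintype N] [DecidableEq N] [Nonempty N] (hN : Fintype.card N ≤ 2) (hn : 0 < n) {a : AA m n}
    {f : (N → I) → AA m n} (hf : Continuous f) (hb : Based a f) {G : (N → I) → C2} (hG : Continuous G)
    (hG1 : ∀ t, ms (G t) = 1) (hGf : ∀ t, hq (G t) = (f t).1.1) (hGb : Based xS G) :
    HW (Based a) f (fun _ => a) := by
  have hF : Continuous fun t => ((G t, (f t).1.2) : VV m) := by fun_prop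
  obtain ⟨y, H⟩ := cone (ZZ_closed hn) (ZZ_thin (m := m) hN hn) (x := (xS, a.1.2)) hF
    (fun t ht => by rw [hGb t ht, hb t ht]) (fun t => (lift_notin hn (hG1 t) (hGf t)).1)
  have H2 := HW.map (pA_cont hn) (P' := fun f => Free f ∧ ∀ t, f t ∈ Set.univ) H (fun f hf => hf.2)
    (fun f hf => ⟨fun t ht t' ht' => congrArg (pA m n) (hf.1 t ht t' ht'), fun _ => trivial⟩)
  have e1 : (pA m n ∘ fun t => ((G t, (f t).1.2) : VV m)) = f :=
    funext fun t => (lift_notin hn (hG1 t) (hGf t)).2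
  rw [e1] at H2
  exact (free_null hb H2).mono fun f hf => hf.1

theorem null_1 (hn : 0 < n) {a : AA m n} (ha : a.1.1 = vS) {f : (Fin 1 → I) → AA m n} (hf : Continuous f)
    (hb : Based a f) : HW (Based a) f (fun _ => a) := by
  obtain ⟨G, hG, h1, h2, h3, h4⟩ := lift1 (f := fun t => (f fun _ => t).1.1) (by fun_prop)
    (fun p => (f _).2.1) (by rw [hb _ ⟨0, Or.inl rfl⟩, ha]) (by rw [hb _ ⟨0, Or.inr rfl⟩, ha])
  refine A_null (by simp) hn hf hb (G := fun t => G (t 0)) (by fun_prop) (fun t => h1 _) (fun t => ?_) ?_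
  · rw [h2]
    congr 3
    ext1 i; rw [Subsingleton.elim i 0]
  · rintro t ⟨i, hi⟩
    rw [Subsingleton.elim i 0] at hi
    rcases hi with hi | hi <;> simp only [hi, h3, h4]

theorem sq_eta (f : (Fin 2 → I) → AA m n) (t) : sq f (t 0, t 1) = f t := by
  unfold sq; congr 1; ext i; fin_cases i <;> rfl

theorem om_int (hn : 0 < n) {a : AA m n} (ha : a.1.1 = vS) {f : (Fin 2 → I) → AA m n} (hf : Continuous f)
    (hb : Based a f) : (∃ k : ℤ, om (fun t => (sq f t).1.1) = k) ∧
      (om (fun t => (sq f t).1.1) = 0 → HW (Based a) f (fun _ => a)) := by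
  have hc := sq_cont hf
  have L := lift2 (f := fun t => (sq f t).1.1) (by fun_prop) (fun p => (sq f p).2.1)
    (fun t => by simp only [sq]; rw [hb _ (bd_l (Or.inl rfl)), ha])
    (fun t => by simp only [sq]; rw [hb _ (bd_l (Or.inr rfl)), ha])
    (fun t => by simp only [sq]; rw [hb _ (bd_r (Or.inl rfl)), ha])
    (fun t => by simp only [sq]; rw [hb _ (bd_r (Or.inr rfl)), ha])
  refine ⟨L.1, fun h0 => ?_⟩
  obtain ⟨G, hG, h1, h2, h3, h4, h5, h6⟩ := L.2 h0
  refine A_null (by simp) hn hf hb (G := fun t => G (t 0, t 1)) (by fun_prop) (fun t => h1 _) (fun t => ?_) ?_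
  · rw [h2, sq_eta]
  · rintro t ⟨i, hi⟩
    fin_cases i
    · simp only [Fin.zero_eta] at hi
      rcases hi with hi | hi <;> simp only [hi, h3, h4]
    · simp only [Fin.mk_one] at hi
      rcases hi with hi | hi <;> simp only [hi, h5, h6]

theorem AA_joined (hn : 0 < n) (a a' : AA m n) : Joined a a' := by
  obtain ⟨ξ, h1, h2⟩ := hq_surj a.2.1
  obtain ⟨ξ', h1', h2'⟩ := hq_surj a'.2.1
  have J := cone_joined (ZZ_thin (m := m) (N := Fin 0) (by simp) hn) (lift_notin hn h1 h2).1 (lift_notin hn h1' h2').1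
  have J2 := J.map_continuousOn (pA_cont hn)
  rw [(lift_notin hn h1 h2).2, (lift_notin hn h1' h2').2] at J2
  exact J2.joined

theorem MM_joined (hn : 0 < n) (x y : MM m hn) : Joined x y := by
  have key : ∀ x : MM m hn, ∃ a, Joined (iA (ee m hn) a) x := by
    intro x
    rcases glue_cover x with ⟨a, rfl⟩ | ⟨b, rfl⟩
    · exact ⟨a, Joined.refl _⟩
    · by_cases hb : b.1.1 = 0
      · have hm : ∀ s : I, (((s : ℝ) / 4) • vS, b.1.2) ∈ BS m := fun s => by
          refine ⟨?_, b.2.2⟩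
          simp only [ns_smul]
          have : ns vS = 1 := by simp [ns, vS]
          rw [this]
          have h0 := s.2.1
          have h1 := s.2.2
          nlinarith
        let b' : BB m := ⟨_, hm 1⟩
        refine ⟨ee m hn b', ?_⟩
        rw [← iB_eq (by rw [ee_src]; simp [b', vS])]
        have hc := iB_cont (e := ee m hn)
        refine Joined.symm ⟨⟨⟨fun s => iB (ee m hn) ⟨_, hm s⟩, by fun_prop⟩, ?_, ?_⟩⟩
        · simp only
          congr 1
          apply Subtype.ext
          exact Prod.ext (by simp [hb]) rfl
        · rfl
      · exact ⟨ee m hn b, by rw [iB_eq ((ee_src hn b).2 hb)]⟩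
  obtain ⟨a, ha⟩ := key x
  obtain ⟨a', ha'⟩ := key y
  refine ha.symm.trans (Joined.trans ?_ ha')
  obtain ⟨γ⟩ := AA_joined hn a a'
  exact ⟨γ.map iA_cont⟩

end NullA
end PiTwo
end

noncomputable section
namespace PiTwo
open unitInterval

/-! ### Pushing cubes off the core of `B` -/
section Push
variable {m n : ℕ}

theorem cont_cover {X Y : Type*} [TopologicalSpace X] [TopologicalSpace Y] {U V : Set X} (hU : IsOpen U)
    (hV : IsOpen V) (h : ∀ x, x ∈ U ∨ x ∈ V) {f : X → Y} (h1 : ContinuousOn f U) (h2 : ContinuousOn f V) :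
    Continuous f := by
  rw [continuous_iff_continuousAt]
  intro x
  rcases h x with hx | hx
  · exact h1.continuousAt (hU.mem_nhds hx)
  · exact h2.continuousAt (hV.mem_nhds hx)

def eta (r : ℝ) : ℝ := max 0 (min 1 (2 - 16 * r))
@[fun_prop] theorem eta_cont : Continuous eta := by unfold eta; fun_prop
theorem eta_nonneg (r : ℝ) : 0 ≤ eta r := le_max_left _ _
theorem eta_le (r : ℝ) : eta r ≤ 1 := max_le zero_le_one (min_le_left _ _)
theorem eta_zero {r : ℝ} (h : 1 / 8 ≤ r) : eta r = 0 :=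
  max_eq_left ((min_le_right _ _).trans (by linarith))
theorem eta_one {r : ℝ} (h : r ≤ 1 / 16) : eta r = 1 := by
  rw [eta, min_eq_left (by linarith), max_eq_right zero_le_one]

theorem ns_le_norm (v : E3) : ns v ≤ 2 * ‖v‖ ^ 2 := by
  have h1 := norm_fst_le v
  have h2 := norm_snd_le v
  have : v.2 ^ 2 = ‖v.2‖ ^ 2 := by simp
  rw [ns, this]
  have a := norm_nonneg v.1
  have b := norm_nonneg v.2
  nlinarith

def K8 (m : ℕ) {n : ℕ} (hn : 0 < n) : Set (MM m hn) := iB (ee m hn) '' {b | ‖b.1.1‖ ≤ 1 / 8}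

theorem K8_closed (hn : 0 < n) : IsClosed (K8 m hn) := by
  have := MM_t2 (m := m) hn
  refine IsCompact.isClosed (IsCompact.image ?_ iB_cont)
  rw [IsInducing.subtypeVal.isCompact_iff]
  have : (Subtype.val '' {b : BB m | ‖b.1.1‖ ≤ 1 / 8}) = Metric.closedBall (0 : E3) (1 / 8) ×ˢ {v : EN m | nv v = 1} := by
    ext p
    constructor
    · rintro ⟨b, hb, rfl⟩
      exact ⟨by simpa using hb, b.2.2⟩
    · rintro ⟨h1, h2⟩
      have h1' : ‖p.1‖ ≤ 1 / 8 := by simpa using h1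
      refine ⟨⟨p, ?_, h2⟩, h1', rfl⟩
      have := ns_le_norm p.1
      have a := norm_nonneg p.1
      nlinarith
  rw [this]
  exact (isCompact_closedBall _ _).prod nv_compact

def xB (hn : 0 < n) (p : MM m hn) : E3 := (rB p).1.1
theorem xB_cont (hn : 0 < n) : ContinuousOn (xB hn) (Set.range (iB (ee m hn))) := by
  have := rB_cont (e := ee m hn)
  unfold xB
  fun_prop

theorem notK8 (hn : 0 < n) {b : BB m} (h : iB (ee m hn) b ∉ K8 m hn) : 1 / 8 < ‖b.1.1‖ := by
  by_contra h'
  exact h ⟨b, not_lt.1 h', rfl⟩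

theorem inK8 (hn : 0 < n) {b : BB m} (h : iB (ee m hn) b ∈ K8 m hn) : ‖b.1.1‖ ≤ 1 / 8 := by
  obtain ⟨b', h', e⟩ := h
  rw [← iB_inj e]; exact h'

open Classical in
def Fx (hn : 0 < n) (p : MM m hn) : E3 := if p ∈ K8 m hn then eta ‖xB hn p‖ • xB hn p else 0

theorem Fx_iB (hn : 0 < n) (b : BB m) : Fx hn (iB (ee m hn) b) = eta ‖b.1.1‖ • b.1.1 := by
  have e : xB hn (iB (ee m hn) b) = b.1.1 := by rw [xB, rB_iB]
  unfold Fx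
  split_ifs with h
  · rw [e]
  · rw [eta_zero (notK8 hn h).le, zero_smul]

theorem Kcover (hn : 0 < n) (p : MM m hn) : p ∈ Set.range (iB (ee m hn)) ∨ p ∈ (K8 m hn)ᶜ := by
  by_cases h : p ∈ K8 m hn
  · exact Or.inl (Set.image_subset_range _ _ h)
  · exact Or.inr h

theorem Fx_cont (hn : 0 < n) : Continuous (Fx (m := m) hn) := by
  refine cont_cover iB_emb.isOpen_range (K8_closed hn).isOpen_compl (Kcover hn) ?_ ?_
  · have h := xB_cont (m := m) hn
    refine ContinuousOn.congr (f := fun p => eta ‖xB hn p‖ • xB hn p) (by fun_prop) ?_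
    rintro _ ⟨b, rfl⟩
    rw [Fx_iB]
    simp only [xB, rB_iB]
  · exact ContinuousOn.congr (f := fun _ => (0 : E3)) continuousOn_const fun p hp => if_neg hp

open Classical in
def psh (hn : 0 < n) (s : ℝ) (h : E3) (p : MM m hn) : MM m hn :=
  if p ∈ K8 m hn then iB (ee m hn) (toSub (BS m)
    (xB hn p + (s * eta ‖xB hn p‖) • (h - xB hn p), (rB p).1.2)) else p

theorem psh_mem {s : ℝ} (hs : s ∈ I) {h : E3} {b : BB m} (hh : ‖h - eta ‖b.1.1‖ • b.1.1‖ < 1 / 64) :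
    (b.1.1 + (s * eta ‖b.1.1‖) • (h - b.1.1), b.1.2) ∈ BS m := by
  refine ⟨?_, b.2.2⟩
  by_cases hb : ‖b.1.1‖ ≤ 1 / 8
  · have hh' : ‖h‖ < 9 / 64 := by
      have h1 : h = (h - eta ‖b.1.1‖ • b.1.1) + eta ‖b.1.1‖ • b.1.1 := by abel
      rw [h1]
      refine (norm_add_le _ _).trans_lt ?_
      rw [norm_smul _ b.1.1, Real.norm_of_nonneg (eta_nonneg _)]
      have := mul_le_of_le_one_left (norm_nonneg b.1.1) (eta_le ‖b.1.1‖)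
      linarith
    set c := s * eta ‖b.1.1‖ with hc
    have hc0 : 0 ≤ c := mul_nonneg hs.1 (eta_nonneg _)
    have hc1 : c ≤ 1 := mul_le_one₀ hs.2 (eta_nonneg _) (eta_le _)
    have e : b.1.1 + c • (h - b.1.1) = (1 - c) • b.1.1 + c • h := by module
    have : ‖b.1.1 + c • (h - b.1.1)‖ ≤ 9 / 64 := by
      rw [e]
      refine (norm_add_le _ _).trans ?_
      rw [norm_smul, norm_smul, Real.norm_of_nonneg hc0, Real.norm_of_nonneg (by linarith)]
      nlinarith
    have h2 := ns_le_norm (b.1.1 + c • (h - b.1.1))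
    have h3 := norm_nonneg (b.1.1 + c • (h - b.1.1))
    simp only
    nlinarith
  · rw [eta_zero (not_le.1 hb).le, mul_zero, zero_smul, add_zero]
    exact b.2.1

theorem psh_iB (hn : 0 < n) (s : ℝ) (h : E3) (b : BB m) : psh hn s h (iB (ee m hn) b) =
    iB (ee m hn) (toSub (BS m) (b.1.1 + (s * eta ‖b.1.1‖) • (h - b.1.1), b.1.2)) := by
  have e : xB hn (iB (ee m hn) b) = b.1.1 := by rw [xB, rB_iB]
  unfold psh
  split_ifs with hk
  · rw [e, rB_iB]
  · rw [eta_zero (notK8 hn hk).le]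
    congr 1
    apply Subtype.ext
    rw [toSub_val] <;> simp

theorem psh_range (hn : 0 < n) {h : E3} (h0 : h ≠ 0) {p : MM m hn} (hh : ‖h - Fx hn p‖ < 1 / 64) :
    psh hn 1 h p ∈ Set.range (iA (ee m hn)) := by
  by_cases hp : p ∈ Set.range (iB (ee m hn))
  · obtain ⟨b, rfl⟩ := hp
    rw [Fx_iB] at hh
    have hm := psh_mem (s := 1) ⟨zero_le_one, le_rfl⟩ hh
    rw [psh_iB]
    rw [iB_eq]
    · exact ⟨_, rfl⟩
    rw [ee_src, toSub_val hm]
    simp only [one_mul]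
    set e := eta ‖b.1.1‖ with he
    intro hz
    have he0 : 0 ≤ e := eta_nonneg _
    have he1 : e ≤ 1 := eta_le _
    rcases le_or_gt ‖b.1.1‖ (1 / 16) with hb | hb
    · rw [eta_one hb] at he
      rw [he, one_smul, add_sub_cancel] at hz
      exact h0 hz
    · have e1 : (1 - e + e ^ 2) • b.1.1 = - (e • (h - e • b.1.1)) := by
        rw [eq_neg_iff_add_eq_zero, ← hz]; module
      have e2 := congrArg norm e1
      rw [norm_neg, norm_smul, norm_smul, Real.norm_of_nonneg (by nlinarith), Real.norm_of_nonneg he0] at e2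
      have := norm_nonneg (h - e • b.1.1)
      nlinarith [sq_nonneg (e - 1 / 2)]
  · rcases glue_cover p with h | h
    · have hk : p ∉ K8 m hn := fun hk => hp (Set.image_subset_range _ _ hk)
      rw [psh, if_neg hk]; exact h
    · exact absurd h hp

theorem push {N : Type*} [Fintype N] (hN : Fintype.card N ≤ 2) (hn : 0 < n) {b : BB m} (hb : 1 / 8 ≤ ‖b.1.1‖)
    {f : (N → I) → MM m hn} (hf : Continuous f) (hbf : Based (iB (ee m hn) b) f) :
    ∃ f', HW (Based (iB (ee m hn) b)) f f' ∧ ∀ t, f' t ∈ Set.range (iA (ee m hn)) := by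
  have hFx := Fx_cont (m := m) hn
  obtain ⟨g, hg, hgd, -⟩ := Continuous.exists_contDiff_approx (E := N → ℝ) (F := E3) 1
    (f := fun t => Fx hn (f (fun i => cl (t i)))) (ε := fun _ => 1 / 128)
    (by have : Continuous fun t : N → ℝ => fun i => cl (t i) :=
          continuous_pi fun i => cl_cont.comp (continuous_apply i)
        fun_prop) continuous_const (fun _ => by norm_num)
  have hfr : Module.finrank ℝ E3 = 3 := by simp [Module.finrank_prod, Complex.finrank_real_complex]
  have hd : dimH (Set.range g) < Module.finrank ℝ E3 := by
    refine lt_of_le_of_lt (ContDiff.dimH_range_le hg) ?_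
    rw [Module.finrank_fintype_fun_eq_card, hfr]
    exact_mod_cast (by omega)
  obtain ⟨w, hw, hw2⟩ := (dense_compl_of_dimH_lt_finrank hd).exists_dist_lt (0 : E3) (ε := 1 / 128) (by norm_num)
  let c : (N → I) → (N → ℝ) := fun t i => (t i : ℝ)
  have hc : Continuous c := by fun_prop
  have hcc : ∀ t : N → I, (fun i => cl (c t i)) = t := fun t => by ext1 i; exact cl_coe _
  let h : (N → I) → E3 := fun t => g (c t) - w
  have hgc := hg.continuous
  have hh : Continuous h := by fun_prop
  have h0 : ∀ t, h t ≠ 0 := fun t ht => hw ⟨c t, sub_eq_zero.1 ht⟩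
  have hd : ∀ t, ‖h t - Fx hn (f t)‖ < 1 / 64 := by
    intro t
    have h1 := hgd (c t)
    rw [hcc, dist_eq_norm] at h1
    rw [dist_eq_norm, zero_sub, norm_neg] at hw2
    have e : h t - Fx hn (f t) = (g (c t) - Fx hn (f t)) - w := by simp only [h]; abel
    rw [e]
    refine (norm_sub_le _ _).trans_lt ?_
    linarith
  have hd' : ∀ t b, f t = iB (ee m hn) b → ‖h t - eta ‖b.1.1‖ • b.1.1‖ < 1 / 64 := fun t b e => by
    have := hd t
    rwa [e, Fx_iB] at this
  refine ⟨fun t => psh hn 1 (h t) (f t), ⟨fun p => psh hn p.1 (h p.2) (f p.2), ?_, ?_, fun t => rfl, ?_⟩,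
    fun t => psh_range hn (h0 t) (hd t)⟩
  · have hf2 : Continuous fun p : I × (N → I) => f p.2 := by fun_prop
    refine cont_cover (iB_emb.isOpen_range.preimage hf2) ((K8_closed hn).isOpen_compl.preimage hf2)
      (fun p => Kcover hn (f p.2)) ?_ ?_
    · have hr : ContinuousOn (fun p : I × (N → I) => rB (f p.2)) ((fun p => f p.2) ⁻¹' Set.range (iB (ee m hn))) :=
        rB_cont.comp hf2.continuousOn fun p hp => hp
      have hr1 : ContinuousOn (fun p : I × (N → I) => xB hn (f p.2)) ((fun p => f p.2) ⁻¹' Set.range (iB (ee m hn))) := by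
        unfold xB; fun_prop
      have hr2 : ContinuousOn (fun p : I × (N → I) => (rB (f p.2)).1.2) ((fun p => f p.2) ⁻¹' Set.range (iB (ee m hn))) := by
        fun_prop
      refine ContinuousOn.congr (f := fun p : I × (N → I) => iB (ee m hn) (toSub (BS m)
        (xB hn (f p.2) + ((p.1 : ℝ) * eta ‖xB hn (f p.2)‖) • (h p.2 - xB hn (f p.2)), (rB (f p.2)).1.2))) ?_ ?_
      · refine iB_cont.comp_continuousOn (toSub_cont ?_ ?_)
        · fun_prop
        · rintro ⟨s, t⟩ ⟨b, hb⟩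
          have hb' : f t = iB (ee m hn) b := hb.symm
          simp only [hb', xB, rB_iB]
          exact psh_mem s.2 (hd' t b hb')
      · rintro ⟨s, t⟩ ⟨b, hb⟩
        have hb' : f t = iB (ee m hn) b := hb.symm
        simp only [hb', psh_iB, xB, rB_iB]
    · exact hf2.continuousOn.congr fun p hp => if_neg hp
  · intro t
    by_cases hk : f t ∈ K8 m hn
    · obtain ⟨b, -, hb⟩ := hk
      simp only
      rw [← hb, psh_iB]
      congr 1
      apply Subtype.ext
      rw [toSub_val] <;> simp
    · exact if_neg hk
  · intro s t ht
    simp only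
    rw [hbf t ht, psh_iB, eta_zero hb]
    congr 1
    apply Subtype.ext
    rw [toSub_val] <;> simp

end Push
end PiTwo
end

noncomputable section
namespace PiTwo
open unitInterval

/-! ### The base point and the generators -/
section Fin
variable {m n : ℕ}

/-- functoriality of the second homotopy group -/
def mapLoop {X Y : Type*} [TopologicalSpace X] [TopologicalSpace Y] {F : X → Y} (hF : Continuous F) {x : X}
    (f : GenLoop (Fin 2) X x) : GenLoop (Fin 2) Y (F x) :=
  ⟨⟨F ∘ f, hF.comp f.1.continuous⟩, fun t ht => congrArg F (f.2 t ht)⟩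

def mapFun {X Y : Type*} [TopologicalSpace X] [TopologicalSpace Y] {F : X → Y} (hF : Continuous F) (x : X) :
    π_ 2 X x → π_ 2 Y (F x) :=
  Quotient.lift (fun f : GenLoop (Fin 2) X x => (⟦mapLoop hF f⟧ : π_ 2 Y (F x))) (fun f g h => by
    refine Quotient.sound ((homotopic_iff _ _).2 ?_)
    exact HW.map hF.continuousOn (U := Set.univ) ((homotopic_iff f g).1 h) (fun _ _ _ => trivial)
      (fun f hf t ht => congrArg F (hf t ht)))

def mapHom {X Y : Type*} [TopologicalSpace X] [TopologicalSpace Y] {F : X → Y} (hF : Continuous F) (x : X) :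
    π_ 2 X x →* π_ 2 Y (F x) :=
  MonoidHom.mk' (mapFun hF x) (by
    intro a b
    refine Quotient.inductionOn₂ a b fun f g => ?_
    have := HomotopyGroup.mul_spec (N := Fin 2) (i := 0) (p := f) (q := g)
    refine (congrArg (mapFun hF x) this).trans ?_
    refine Eq.trans ?_ (HomotopyGroup.mul_spec (N := Fin 2) (i := 0) (p := mapLoop hF f) (q := mapLoop hF g)).symm
    change (⟦mapLoop hF _⟧ : π_ 2 Y (F x)) = _
    congr 1
    ext t
    change F (GenLoop.transAt 0 g f t) = _
    simp only [GenLoop.transAt, GenLoop.coe_copy]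
    split_ifs <;> rfl)

theorem mapHom_mk {X Y : Type*} [TopologicalSpace X] [TopologicalSpace Y] {F : X → Y} (hF : Continuous F) (x : X)
    (f : GenLoop (Fin 2) X x) : mapHom hF x ⟦f⟧ = (⟦mapLoop hF f⟧ : π_ 2 Y (F x)) := rfl

theorem vS_ns : ns vS = 1 := by simp [ns, vS]

def bd (m : ℕ) (v : E3) : E3 × EN m := (v, (0, e0 m))
theorem bd_mem {v : E3} (hv : ns v < 1 / 4) : bd m v ∈ BS m := ⟨hv, by simp [bd, nv, ns, e0_norm]⟩
theorem q_ns {u : E3} (hu : ns u = 1) : ns ((1 / 4 : ℝ) • u) < 1 / 4 := by rw [ns_smul, hu]; norm_num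

def wS (m : ℕ) : EW m := (√(1 - (1 / 4) ^ 2) • vS, 0, (1 / 4 : ℝ) • e0 m)

theorem ph_bd (hn : 0 < n) {u : E3} (hu : ns u = 1) : ph0 n (bd m ((1 / 4 : ℝ) • u)) =
    (pp n u, √(1 - (1 / 4) ^ 2) • u, 0, (1 / 4 : ℝ) • e0 m) := by
  have h1 : ns (pp n u) = 1 := by rw [ns_pp hn, hu]
  rw [bd, ph_spec hn (by norm_num) hu]
  have h2 : un (pp n u) = pp n u := by simpa using un_pos one_pos h1
  simp only [smul_zero, add_zero, h2, nn_one h1, sub_self, norm_smul, e0_norm]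
  norm_num

theorem pp_vS (hn : 0 < n) : pp n vS = vS := by
  have h0 : pw n 0 = 0 := by simpa using pw_real hn (r := 0) (by norm_num)
  simp [pp, vS, h0]

theorem mem_AS {u : E3} (hu : ns u = 1) : (u, wS m) ∈ AS m n := by
  refine ⟨hu, ?_, ?_⟩
  · simp only [wS, nw, ns_smul, vS_ns, norm_smul, e0_norm]
    rw [Real.sq_sqrt (by norm_num)]; norm_num
  · rintro ⟨h, -⟩
    have h2 : (1 / 4 : ℝ) • e0 m = 0 := congrArg Prod.snd h
    have := congrArg norm h2
    simp [norm_smul, e0_norm] at this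

def bB (m : ℕ) : BB m := ⟨bd m ((1 / 4 : ℝ) • vS), bd_mem (q_ns vS_ns)⟩
def aB (m n : ℕ) : AA m n := ⟨(vS, wS m), mem_AS vS_ns⟩

theorem q_ne {u : E3} (hu : ns u = 1) : (1 / 4 : ℝ) • u ≠ 0 := smul_ne_zero (by norm_num) (ns_ne hu)

theorem ee_bB (hn : 0 < n) : ee m hn (bB m) = aB m n := by
  apply Subtype.ext
  rw [ee_val hn (q_ne vS_ns)]
  refine (ph_bd hn vS_ns).trans ?_
  rw [pp_vS hn]; rfl

theorem base_eq (hn : 0 < n) : iB (ee m hn) (bB m) = iA (ee m hn) (aB m n) := by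
  rw [iB_eq ((ee_src hn _).2 (q_ne vS_ns)), ee_bB]

theorem bB_norm : 1 / 8 ≤ ‖(bB m).1.1‖ := by
  change 1 / 8 ≤ ‖(1 / 4 : ℝ) • vS‖
  rw [norm_smul]
  have : ‖vS‖ = 1 := by simp [vS, Prod.norm_def]
  rw [this]; norm_num

/-- unit sphere valued generator -/
def ug (t : Fin 2 → I) : E3 := hq (nz (Fg (t 0, t 1)))
theorem Fg_ne0 (t) : Fg t ≠ 0 := Fg_ne t
@[fun_prop] theorem ug_cont : Continuous ug := by
  have := nz_cont (ξ := fun t : Fin 2 → I => Fg (t 0, t 1)) (by fun_prop) (fun t => Fg_ne0 _)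
  unfold ug; fun_prop
theorem ug_ns (t) : ns (ug t) = 1 := by rw [ug, ns_hq, nz_ms (Fg_ne0 _), one_pow]

theorem hq_Fg_bd (t : Fin 2 → I) (ht : t ∈ Cube.boundary (Fin 2)) :
    hq (Fg (t 0, t 1)) = vS ∧ ms (Fg (t 0, t 1)) = 1 := by
  have k1 : hq (0, 1) = vS := xS_hq
  have k2 : ms (0, 1) = 1 := xS_ms
  obtain ⟨i, hi⟩ := ht
  fin_cases i
  · simp only [Fin.zero_eta] at hi
    rcases hi with hi | hi
    · rw [hi, Fg_0]; exact ⟨k1, k2⟩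
    · rw [hi, Fg_1]
      have : ‖Complex.exp (2 * Real.pi * Complex.I * ((t 1 : ℝ) : ℂ))‖ = 1 := by
        rw [Complex.norm_exp]; simp
      simp [hq, ms, vS, this]
  · simp only [Fin.mk_one] at hi
    rcases hi with hi | hi
    · rw [hi, Fg_l]; exact ⟨k1, k2⟩
    · rw [hi, Fg_r]; exact ⟨k1, k2⟩

theorem hq_nz (ξ : C2) : hq (nz ξ) = (ms ξ)⁻¹ • hq ξ := by
  rw [nz, hq_smul]
  congr 1
  have : 0 ≤ ms ξ := by unfold ms; positivity
  simp only [Complex.norm_real, Real.norm_eq_abs, sq_abs, inv_pow, Real.sq_sqrt this]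

theorem ug_bd : Based vS ug := by
  intro t ht
  obtain ⟨h1, h2⟩ := hq_Fg_bd t ht
  rw [ug, hq_nz, h1, h2, inv_one, one_smul]

theorem om_ug (hn : 0 < n) : om (fun t => pp n (ug ![t.1, t.2])) = n := by
  rw [← om_Fg hn]
  have hp := pp_cont hn
  have H : HW (fun f => Free f ∧ ∀ t, f t ∈ W3) (fun t : Fin 2 → I => pp n (ug t))
      (fun t => pp n (hq (Fg (t 0, t 1)))) := by
    have hm : ∀ t : Fin 2 → I, 0 < ms (Fg (t 0, t 1)) := fun t => ms_pos.2 (Fg_ne0 _)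
    have hc : Continuous fun p : I × (Fin 2 → I) => (ms (Fg (p.2 0, p.2 1)))⁻¹ :=
      Continuous.inv₀ (by fun_prop) fun p => (hm p.2).ne'
    refine ⟨fun p => pp n (((p.1 : ℝ) + (1 - (p.1 : ℝ)) * (ms (Fg (p.2 0, p.2 1)))⁻¹) • hq (Fg (p.2 0, p.2 1))),
      ?_, ?_, ?_, fun s => ⟨?_, ?_⟩⟩
    · fun_prop
    · intro t; simp [ug, hq_nz]
    · intro t; simp
    · intro t ht t' ht'
      obtain ⟨h1, h2⟩ := hq_Fg_bd t ht
      obtain ⟨h1', h2'⟩ := hq_Fg_bd t' ht'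
      simp only [h1, h2, h1', h2']
    · intro t
      refine pp_W3 hn (smul_ne_zero ?_ (hq_W4 (Fg_ne _)))
      have h1 := s.2.1
      have h2 := s.2.2
      have h3 := inv_pos.2 (hm t)
      rcases h1.eq_or_lt with h | h
      · rw [← h]; simp [h3.ne']
      · have : 0 ≤ (1 - (s : ℝ)) * (ms (Fg (t 0, t 1)))⁻¹ := mul_nonneg (by linarith) h3.le
        linarith
  exact ev_free om_add om_closed H

theorem pp_one (v : E3) : pp 1 v = v := by simp [pp, pw]

end Fin
end PiTwo
end

noncomputable section
namespace PiTwo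
open unitInterval

/-! ### Conclusion -/
section Concl
variable {m n : ℕ}

/-- a based cube as a `GenLoop` -/
def mkL {X : Type*} [TopologicalSpace X] {x : X} {f : (Fin 2 → I) → X} (hf : Continuous f) (hb : Based x f) :
    GenLoop (Fin 2) X x := ⟨⟨f, hf⟩, hb⟩

def cls {X : Type*} [TopologicalSpace X] {x : X} (f : GenLoop (Fin 2) X x) : π_ 2 X x := ⟦f⟧

theorem mkL_one {X : Type*} [TopologicalSpace X] {x : X} {f : (Fin 2 → I) → X} (hf : Continuous f) (hb : Based x f) :
    cls (mkL hf hb) = 1 ↔ HW (Based x) f (fun _ => x) := by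
  constructor
  · intro h
    exact (homotopic_iff _ _).1 (Quotient.exact h)
  · intro h
    exact Quotient.sound ((homotopic_iff (mkL hf hb) GenLoop.const).2 h)

/-- base point -/
def xM (m : ℕ) {n : ℕ} (hn : 0 < n) : MM m hn := iA (ee m hn) (aB m n)

theorem factorA {N : Type*} [Fintype N] (hN : Fintype.card N ≤ 2) (hn : 0 < n)
    {f : (N → I) → MM m hn} (hf : Continuous f) (hb : Based (xM m hn) f) :
    ∃ g : (N → I) → AA m n, Continuous g ∧ Based (aB m n) g ∧ HW (Based (xM m hn)) f (iA (ee m hn) ∘ g) := by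
  have hb' : Based (iB (ee m hn) (bB m)) f := by rw [base_eq]; exact hb
  obtain ⟨f', H, hr⟩ := push hN hn bB_norm hf hb'
  rw [base_eq] at H
  obtain ⟨hb2, hc2⟩ := H.right
  refine ⟨fun t => rA (f' t), rA_cont.comp_continuous hc2 hr, fun t ht => ?_, ?_⟩
  · simp only; rw [hb2 t ht, rA_iA]
  · have e : (iA (ee m hn) ∘ fun t => rA (f' t)) = f' := by
      ext1 t
      obtain ⟨a, ha⟩ := hr t
      simp only [Function.comp, ← ha, rA_iA]
    rw [e]
    exact H

theorem loops_null (hn : 0 < n) {f : (Fin 1 → I) → MM m hn} (hf : Continuous f) (hb : Based (xM m hn) f) :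
    HW (Based (xM m hn)) f (fun _ => xM m hn) := by
  obtain ⟨g, hg, hgb, H⟩ := factorA (by simp) hn hf hb
  refine H.trans ?_
  exact HW.map (iA_cont.continuousOn (s := Set.univ)) (null_1 hn rfl hg hgb) (fun _ _ _ => trivial)
    (fun f hf t ht => congrArg (iA (ee m hn)) (hf t ht))

theorem null_any {N : Type*} [Fintype N] [Nonempty N] {X : Type*} [TopologicalSpace X] {x y : X} (hxy : Joined x y)
    {P : ((N → I) → X) → Prop}
    (h : ∀ f : (N → I) → X, Continuous f → Based x f → P f → HW (Based x) f (fun _ => x))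
    (hP : ∀ f g : (N → I) → X, HW Free f g → P g → P f)
    {f : (N → I) → X} (hf : Continuous f) (hb : Based y f) (hPf : P f) : HW (Based y) f (fun _ => y) := by
  obtain ⟨α⟩ := hxy
  obtain ⟨f', hb', hc', H⟩ := transport hb hf α
  have h1 := h f' hc' hb' (hP _ _ H hPf)
  have h2 : HW Free f (fun _ => x) := H.symm.trans (h1.mono fun f hf => hf.free)
  exact (free_null (A := Set.univ) hb (h2.mono fun f hf => ⟨hf, fun _ => trivial⟩)).mono fun f hf => hf.1

theorem MM_sc (m : ℕ) (hn : 0 < n) : SimplyConnectedSpace (MM m hn) := by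
  rw [simply_connected_iff_loops_nullhomotopic]
  refine ⟨⟨⟨xM m hn⟩, MM_joined hn⟩, fun x γ => ?_⟩
  have hb : Based x (fun t : Fin 1 → I => γ (t 0)) := by
    rintro t ⟨i, hi⟩
    rw [Subsingleton.elim i 0] at hi
    rcases hi with hi | hi <;> simp [hi]
  obtain ⟨H, hc, h0, h1, hP⟩ := null_any (MM_joined hn (xM m hn) x) (P := fun _ => True)
    (fun f hf hb _ => loops_null hn hf hb) (fun _ _ _ _ => trivial)
    (f := fun t : Fin 1 → I => γ (t 0)) (by fun_prop) hb trivial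
  refine ⟨⟨⟨⟨fun p => H (p.1, fun _ => p.2), by fun_prop⟩, fun t => h0 _, fun t => h1 _⟩, ?_⟩⟩
  rintro s t ht
  have ht' : t = 0 ∨ t = 1 := by simpa using ht
  have := hP s (fun _ => t) ⟨0, ht'⟩
  refine this.trans ?_
  rcases ht' with rfl | rfl <;> simp

/-- the class of degree one -/
theorem gen_A (m : ℕ) (hn : 0 < n) : ∃ g : (Fin 2 → I) → AA m n, Continuous g ∧ Based (aB m n) g ∧
    om (fun t => (sq g t).1.1) = 1 := by
  refine ⟨fun t => ⟨(ug t, wS m), mem_AS (ug_ns t)⟩, by fun_prop, fun t ht => ?_, ?_⟩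
  · apply Subtype.ext
    exact Prod.ext (ug_bd t ht) rfl
  · have := om_ug one_pos
    simp only [pp_one] at this
    simpa [sq] using this

/-- the attaching class -/
theorem gen_D (m : ℕ) (hn : 0 < n) : ∃ g : (Fin 2 → I) → AA m n, Continuous g ∧ Based (aB m n) g ∧
    om (fun t => (sq g t).1.1) = n ∧ HW (Based (xM m hn)) (iA (ee m hn) ∘ g) (fun _ => xM m hn) := by
  let b : (Fin 2 → I) → BB m := fun t => ⟨bd m ((1 / 4 : ℝ) • ug t), bd_mem (q_ns (ug_ns t))⟩
  have hbc : Continuous b := by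
    refine Continuous.subtype_mk ?_ _
    unfold bd; fun_prop
  have hbs : ∀ t, b t ∈ (ee m hn).source := fun t => (ee_src hn _).2 (q_ne (ug_ns t))
  have hbb : ∀ t ∈ Cube.boundary (Fin 2), b t = bB m := fun t ht => by
    apply Subtype.ext
    simp only [b, bB, ug_bd t ht]
  have hv : ∀ t, ((ee m hn (b t)).1 : E3 × EW m) = (pp n (ug t), √(1 - (1 / 4) ^ 2) • ug t, 0, (1 / 4 : ℝ) • e0 m) := fun t => by
    rw [ee_val hn (q_ne (ug_ns t))]; exact ph_bd hn (ug_ns t)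
  have hbased : Based (aB m n) (fun t => ee m hn (b t)) := fun t ht => by
    simp only; rw [hbb t ht, ee_bB]
  refine ⟨fun t => ee m hn (b t), ?_, hbased, ?_, ?_⟩
  · exact (ee m hn).continuousOn.comp_continuous hbc hbs
  · rw [← om_ug hn]
    congr 1
    ext1 t
    simp only [sq]
    rw [hv]
  · have e : (iA (ee m hn) ∘ fun t => ee m hn (b t)) = fun t => iB (ee m hn) (b t) := by
      ext1 t; rw [iB_eq (hbs t)]; rfl
    have hb3 : Based (xM m hn) (iA (ee m hn) ∘ fun t => ee m hn (b t)) := fun t ht => by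
      simp only [Function.comp]; exact congrArg (iA (ee m hn)) (hbased t ht)
    have hmem : ∀ (s : I) (t : Fin 2 → I), bd m (((1 - (s : ℝ)) / 4) • ug t) ∈ BS m := fun s t => bd_mem (by
      rw [ns_smul, ug_ns]
      have h1 := s.2.1
      have h2 := s.2.2
      nlinarith)
    refine (free_null (A := Set.univ) (y := iB (ee m hn) ⟨bd m 0, bd_mem (by simp [ns])⟩) hb3 ?_).mono fun f hf => hf.1
    rw [e]
    refine ⟨fun p => iB (ee m hn) ⟨bd m (((1 - (p.1 : ℝ)) / 4) • ug p.2), hmem p.1 p.2⟩, ?_, ?_, ?_, fun s => ⟨?_, fun _ => trivial⟩⟩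
    · refine iB_cont.comp (Continuous.subtype_mk ?_ _)
      unfold bd; fun_prop
    · intro t; simp [b]
    · intro t; simp
    · intro t ht t' ht'
      simp only [ug_bd t ht, ug_bd t' ht']

theorem om_A : Add2 Set.univ (fun s : I × I → AA m n => om ((fun a : AA m n => a.1.1) ∘ s)) ∧
    Closed2 Set.univ (fun s : I × I → AA m n => om ((fun a : AA m n => a.1.1) ∘ s)) :=
  ⟨om_add.pull (by fun_prop) fun a _ => ns_ne a.2.1, om_closed.pull (by fun_prop) fun a _ => ns_ne a.2.1⟩

theorem c_inj (hn : 0 < n) {c : (I × I → MM m hn) → Circ} (h1 : Add2 Set.univ c) (h2 : Closed2 Set.univ c)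
    (h3 : ∀ s, Continuous s → (∀ t, s t ∈ Set.range (iA (ee m hn))) → c s = omn n (fun t => (rA (s t)).1.1)) :
    (∀ g : (Fin 2 → I) → AA m n, Continuous g → c (sq (iA (ee m hn) ∘ g)) = ((om (fun t => (sq g t).1.1) / n : ℝ) : Circ)) ∧
    (∀ f : (Fin 2 → I) → MM m hn, Continuous f → Based (xM m hn) f → c (sq f) = 0 →
      HW (Based (xM m hn)) f (fun _ => xM m hn)) ∧
    ∀ f : (Fin 2 → I) → MM m hn, Continuous f → Based (xM m hn) f → ∃ k : ℤ, c (sq f) = ((k / n : ℝ) : Circ) := by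
  have key : ∀ g : (Fin 2 → I) → AA m n, Continuous g →
      c (sq (iA (ee m hn) ∘ g)) = ((om (fun t => (sq g t).1.1) / n : ℝ) : Circ) := by
    intro g hg
    rw [h3 _ (sq_cont (iA_cont.comp hg)) fun t => ⟨_, rfl⟩]
    simp only [sq, Function.comp, rA_iA, omn]
  have hn0 : (n : ℝ) ≠ 0 := by exact_mod_cast hn.ne'
  have hev : ∀ {f f' : (Fin 2 → I) → MM m hn}, HW (Based (xM m hn)) f f' → c (sq f) = c (sq f') := fun H =>
    ev_free h1 h2 (H.mono fun f hf => ⟨hf.free, fun _ => trivial⟩)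
  refine ⟨key, ?_, ?_⟩
  · intro f hf hb h0
    obtain ⟨g, hg, hgb, H⟩ := factorA (by simp) hn hf hb
    obtain ⟨k, hk⟩ := (om_int hn rfl hg hgb).1
    rw [hev H, key g hg, hk] at h0
    obtain ⟨j, hj⟩ := (AddCircle.coe_eq_zero_iff (1 : ℝ)).1 h0
    have hkj : (k : ℝ) = j * n := by
      rw [zsmul_eq_mul, mul_one] at hj
      field_simp at hj
      linarith
    obtain ⟨δ, hδ, hδb, hδo, hδn⟩ := gen_D m hn
    let E := evHom (om_A (m := m) (n := n)).1 om_A.2 (aB m n)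
    have hEi : Function.Injective E := by
      rw [injective_iff_map_eq_one]
      intro a
      refine Quotient.inductionOn a fun p hp => ?_
      have hp0 : om (fun t => (sq p t).1.1) = 0 := hp
      exact (mkL_one p.1.continuous p.2).2 ((om_int hn rfl p.1.continuous p.2).2 hp0)
    have hEg : E (cls (mkL hg hgb)) = Multiplicative.ofAdd (k : ℝ) := by
      rw [← hk]; rfl
    have hEd : E (cls (mkL hδ hδb)) = Multiplicative.ofAdd (n : ℝ) := by
      rw [← hδo]; rfl
    have he : cls (mkL hg hgb) = cls (mkL hδ hδb) ^ j := by
      apply hEi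
      rw [map_zpow, hEg, hEd, ← ofAdd_zsmul, hkj, zsmul_eq_mul]
    have hm := congrArg (mapHom (iA_cont (e := ee m hn)) (aB m n)) he
    rw [map_zpow] at hm
    have hd1 : mapHom (iA_cont (e := ee m hn)) (aB m n) (cls (mkL hδ hδb)) = 1 :=
      (mkL_one (mapLoop iA_cont (mkL hδ hδb)).1.continuous (mapLoop iA_cont (mkL hδ hδb)).2).2 hδn
    rw [hd1, one_zpow] at hm
    exact H.trans ((mkL_one (mapLoop iA_cont (mkL hg hgb)).1.continuous (mapLoop iA_cont (mkL hg hgb)).2).1 hm)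
  · intro f hf hb
    obtain ⟨g, hg, hgb, H⟩ := factorA (by simp) hn hf hb
    obtain ⟨k, hk⟩ := (om_int hn rfl hg hgb).1
    exact ⟨k, by rw [hev H, key g hg, hk]⟩

theorem MM_pi (m : ℕ) (hn : 0 < n) (x : MM m hn) : Nonempty (π_ 2 (MM m hn) x ≃* Multiplicative (ZMod n)) := by
  obtain ⟨c, h1, h2, h3⟩ := exists_c m hn
  obtain ⟨key, inj, rng⟩ := c_inj hn h1 h2 h3
  have hev : ∀ {f f' : (Fin 2 → I) → MM m hn}, HW Free f f' → c (sq f) = c (sq f') := fun H =>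
    ev_free h1 h2 (H.mono fun f hf => ⟨hf, fun _ => trivial⟩)
  let E := evHom h1 h2 x
  have hEi : Function.Injective E := by
    rw [injective_iff_map_eq_one]
    intro a
    refine Quotient.inductionOn a fun p hp => ?_
    have hp0 : c (sq p) = 0 := hp
    exact (mkL_one p.1.continuous p.2).2 (null_any (MM_joined hn (xM m hn) x) (P := fun f => c (sq f) = 0)
      inj (fun f g H h => (hev H).trans h) p.1.continuous p.2 hp0)
  obtain ⟨g, hg, hgb, hgo⟩ := gen_A m hn
  obtain ⟨α⟩ := MM_joined hn x (xM m hn)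
  obtain ⟨g', hgb', hgc', Hg⟩ := transport (f := iA (ee m hn) ∘ g) (y := xM m hn)
    (fun t ht => congrArg (iA (ee m hn)) (hgb t ht)) (iA_cont.comp hg) α
  let γ : π_ 2 (MM m hn) x := cls (mkL hgc' hgb')
  have hEγ : E γ = Multiplicative.ofAdd (((1 : ℝ) / n : ℝ) : Circ) := by
    have : c (sq g') = (((1 : ℝ) / n : ℝ) : Circ) := by rw [hev Hg, key g hg, hgo]
    rw [← this]; rfl
  have hgen : ∀ a, a ∈ Subgroup.zpowers γ := by
    intro a
    refine Quotient.inductionOn a fun p => ?_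
    obtain ⟨β⟩ := MM_joined hn (xM m hn) x
    obtain ⟨f', hb', hc', H⟩ := transport (f := p) p.2 p.1.continuous β
    obtain ⟨k, hk⟩ := rng f' hc' hb'
    rw [hev H] at hk
    refine Subgroup.mem_zpowers_iff.2 ⟨k, hEi ?_⟩
    rw [map_zpow, hEγ, ← ofAdd_zsmul]
    refine Eq.trans ?_ (evHom_mk h1 h2 x p).symm
    rw [hk]
    congr 1
    rw [← AddCircle.coe_zsmul, zsmul_eq_mul, mul_one_div]
  have hcard : Nat.card (π_ 2 (MM m hn) x) = n := by
    rw [← orderOf_eq_card_of_forall_mem_zpowers hgen, ← orderOf_injective E hEi, hEγ, orderOf_ofAdd_eq_addOrderOf]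
    exact AddCircle.addOrderOf_period_div hn
  exact ⟨(zmodMulEquivOfGenerator hgen hcard).symm⟩

end Concl
end PiTwo
end


/-- For every `d ≥ 6` and every positive integer `n` there is a closed (compact,
boundaryless) simply connected topological `d`-manifold `M` with `π₂(M) ≅ ℤ/nℤ`
(the `d ≥ 6` case of Proposition 3.1(2) of the paper). -/
theorem exists_closed_manifold_pi_two_zmod (d : ℕ) (hd : 6 ≤ d) (n : ℕ) (hn : 0 < n) :
    ∃ (M : Type) (ts : TopologicalSpace M),
      letI := ts
      ∃ _ : ChartedSpace (EuclideanSpace ℝ (Fin d)) M,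
        CompactSpace M ∧ T2Space M ∧ SimplyConnectedSpace M ∧
        ∀ x : M, Nonempty (π_ 2 M x ≃* Multiplicative (ZMod n)) := by
  obtain ⟨m, rfl⟩ := Nat.exists_eq_add_of_le' hd
  exact ⟨PiTwo.MM m hn, inferInstance, (PiTwo.LE_MM hn).charted, PiTwo.MM_compact hn, PiTwo.MM_t2 hn,
    PiTwo.MM_sc m hn, PiTwo.MM_pi m hn⟩
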